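/- For every N, M ∈ ℕ, the algebra of unordered forests with substitution variables ∘₁, …, ∘_N in which each element contains at most M total occurrences of variables, equipped with forest sum, root, and variable substitution, is simulated by (ℚ[x], +, ×); consequently, functionality of bottom-up register automata over this algebra, and equivalence of functional such automata, are decidable. -/

import Mathlib

/-!
**The simulation.** A forest is sent to a polynomial by multiplying its trees, reading `root` as
`u ↦ x * u + 2` and `∘ᵢ` as a variable `yᵢ` (`fval`). In `ℤ[y₀, y₁, …][x]` the image of a forest
has a monomial in the `yᵢ` as leading coefficient and only even other coefficients, so that each
factor `x * u + 2` is irreducible by Eisenstein's criterion at `2`. Unique factorization therefore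
recovers the multiset of trees, and the map is injective up to `PFV.Veq` (`up_injective`).
A forest with at most `M` occurrences of `N` variables has a polynomial of degree at most `M` in
the `yᵢ`, hence is determined by a tuple of coefficients in `ℚ[x]`. This tuple is the simulation
`alpha`; products, `u ↦ x * u + 2` and substitution act on it by polynomial maps, the same for
all sorts.

**Reduction to polynomial grammars.** In place of the coefficients, the decision procedure uses the
values at finitely many integer points, from which the value at any other point is obtained by
interpolation (`exists_grid`). Update expressions are compiled into ring terms in these values
(`tmF`, `ev_tmF`). A polynomial grammar (`Gr`) generates tuples in `ℚ[x]` by rules with polynomial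
updates, and is `Good` if given test polynomials vanish on all generated tuples. Pairs of runs of
two automata over a common input tree are generated by the grammar `cross`, whose tests say that
the outputs agree (`good_cross`); with both automata equal this is functionality. For functional
automata, equivalence means in addition that the domains coincide. Inclusion of domains is
goodness of `dom`, whose tuples are the indicator vectors of a subset construction (`good_dom`).

**Deciding goodness.** `Good` and its negation are both semi-decidable (`decide_good`). A grammar
that is not good has a derivation refuting it, nonvanishing of an element of `ℚ[x]` being
semi-decidable (`SD_not_good`). A good grammar has an inductive invariant, namely the vanishing
ideals of the sets generated by its nonterminals. They are finitely generated by Hilbert's basis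
theorem, and that they are preserved by a rule can be certified: a polynomial that vanishes on the
product of the sets generated by the children lies, up to a nonzero factor `δ ∈ ℚ[x]`, in the
ideal generated by the invariants of the children (`vanish_prod`). To verify such certificates
without computing with polynomials, membership is expressed by an equational calculus on ring terms
(`EqN`), which is semi-decidable as the closure under finitely many rule schemes. Besides the ring
axioms it has a rule cancelling factors `(x - ξ) * s + 1`, `ξ ∈ ℕ`. Such factors are nonzero, which
makes the rule sound, and every nonzero `δ` divides one of them, which makes it complete
(`cancel_base`).
-/

/-- Raw unordered forests over the unary signature extended by variable
leaves `∘₀, ∘₁, …` : `PFV.consRoot c r` denotes the forest `{root(c)} + r`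
and `PFV.consVar i r` denotes the forest `{∘ᵢ} + r`. -/
inductive PFV : Type
  | empty : PFV
  | consRoot : PFV → PFV → PFV
  | consVar : ℕ → PFV → PFV

namespace PFV

/-- Multiset union of forests. -/
def union : PFV → PFV → PFV
  | .empty, g => g
  | .consRoot c r, g => .consRoot c (union r g)
  | .consVar i r, g => .consVar i (union r g)

/-- The singleton forest `root(h)`. -/
def root (h : PFV) : PFV := .consRoot h .empty

/-- Simultaneous substitution of the forests `σ i` for the variables `∘ᵢ`. -/
def subst (σ : ℕ → PFV) : PFV → PFV
  | .empty => .empty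
  | .consRoot c r => .consRoot (subst σ c) (subst σ r)
  | .consVar i r => union (σ i) (subst σ r)

/-- Number of occurrences of the variable `∘ᵢ`. -/
def occ : PFV → ℕ → ℕ
  | .empty, _ => 0
  | .consRoot c r, i => occ c i + occ r i
  | .consVar j r, i => (if j = i then 1 else 0) + occ r i

/-- Total number of occurrences of variables. -/
def totalOcc : PFV → ℕ
  | .empty => 0
  | .consRoot c r => totalOcc c + totalOcc r
  | .consVar _ r => 1 + totalOcc r

/-- All variables occurring are among `∘₀, …, ∘_{N-1}`. -/
def varsLt (N : ℕ) : PFV → Prop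
  | .empty => True
  | .consRoot c r => varsLt N c ∧ varsLt N r
  | .consVar i r => i < N ∧ varsLt N r

/-- The sort of a forest with variables among `∘₀, …, ∘_{N-1}` : the list of
numbers of occurrences of each variable. -/
def sort (N : ℕ) (h : PFV) : List ℕ := (List.range N).map h.occ

/-- Equality of raw forests with variables as unordered forests: the smallest
congruence allowing swapping of adjacent trees. -/
inductive Veq : PFV → PFV → Prop
  | refl (h : PFV) : Veq h h
  | symm {h h' : PFV} : Veq h h' → Veq h' h
  | trans {h₁ h₂ h₃ : PFV} : Veq h₁ h₂ → Veq h₂ h₃ → Veq h₁ h₃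
  | congrRoot {c c' r r' : PFV} : Veq c c' → Veq r r' → Veq (consRoot c r) (consRoot c' r')
  | congrVar {r r' : PFV} (i : ℕ) : Veq r r' → Veq (consVar i r) (consVar i r')
  | swapRR (c c' r : PFV) : Veq (consRoot c (consRoot c' r)) (consRoot c' (consRoot c r))
  | swapRV (c : PFV) (i : ℕ) (r : PFV) : Veq (consRoot c (consVar i r)) (consVar i (consRoot c r))
  | swapVV (i j : ℕ) (r : PFV) : Veq (consVar i (consVar j r)) (consVar j (consVar i r))

end PFV

/-- Input trees over a ranked alphabet whose symbols are natural numbers. -/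
inductive RTree : Type
  | node : ℕ → List RTree → RTree

/-- Syntactic update expressions over the algebra of unordered forests with
substitution variables: register variables, the constants `∅` and `∘ᵢ`,
forest sum, `root`, and substitution (the list gives the forests substituted
for `∘₀, ∘₁, …`; variables beyond its length are left unchanged). -/
inductive VExpr : Type
  | var : ℕ → VExpr
  | empty : VExpr
  | leaf : ℕ → VExpr
  | union : VExpr → VExpr → VExpr
  | root : VExpr → VExpr
  | subst : VExpr → List VExpr → VExpr

namespace VExpr

mutual
  /-- Evaluation of an update expression in an environment assigning forests
  to register variables. -/
  def eval (env : List PFV) : VExpr → PFV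
    | .var i => env.getD i .empty
    | .empty => .empty
    | .leaf i => .consVar i .empty
    | .union e₁ e₂ => PFV.union (eval env e₁) (eval env e₂)
    | .root e => PFV.root (eval env e)
    | .subst e l =>
        PFV.subst (fun i => (evalList env l).getD i (.consVar i .empty)) (eval env e)

  /-- Evaluation of a list of update expressions. -/
  def evalList (env : List PFV) : List VExpr → List PFV
    | [] => []
    | e :: es => eval env e :: evalList env es
end

mutual
  /-- An effective encoding of update expressions by natural numbers. -/
  def code : VExpr → ℕ
    | .var i => Nat.pair 0 i
    | .empty => Nat.pair 1 0
    | .leaf i => Nat.pair 2 i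
    | .union e₁ e₂ => Nat.pair 3 (Nat.pair e₁.code e₂.code)
    | .root e => Nat.pair 4 e.code
    | .subst e l => Nat.pair 5 (Nat.pair e.code (codeList l))

  /-- An effective encoding of lists of update expressions. -/
  def codeList : List VExpr → ℕ
    | [] => 0
    | e :: es => Nat.pair e.code (codeList es) + 1
end

end VExpr

/-- A bottom-up register automaton over the algebra of unordered forests with
substitution variables (same conventions as for the other register automata:
the update expressions' variable `i·regs + j` refers to register `j` of
child `i`). -/
structure RAV : Type where
  arity : List ℕ
  regs : ℕ
  states : ℕ
  delta : List (ℕ × List ℕ × ℕ × List VExpr)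
  out : List (ℕ × VExpr)

namespace RAV

/-- Well-formedness of the components. -/
def WF (A : RAV) : Prop :=
  (∀ tr ∈ A.delta, tr.1 < A.arity.length ∧ tr.2.1.length = A.arity.getD tr.1 0 ∧
    (∀ q ∈ tr.2.1, q < A.states) ∧ tr.2.2.1 < A.states ∧ tr.2.2.2.length = A.regs) ∧
  (∀ p ∈ A.out, p.1 < A.states) ∧ (A.out.map Prod.fst).Nodup

/-- The bottom-up reachability relation. -/
inductive Reaches (A : RAV) : RTree → ℕ → List PFV → Prop
  | step (a q : ℕ) (qs : List ℕ) (fs : List VExpr) (ts : List RTree)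
      (rs : List (List PFV)) :
      (a, qs, q, fs) ∈ A.delta →
      qs.length = ts.length → rs.length = ts.length →
      (∀ i, i < ts.length →
        Reaches A (ts.getD i (RTree.node 0 [])) (qs.getD i 0) (rs.getD i [])) →
      Reaches A (RTree.node a ts) q (fs.map (VExpr.eval rs.flatten))

/-- The semantics: the relation between input trees and output forests (raw
representatives). -/
def Sem (A : RAV) (t : RTree) (h : PFV) : Prop :=
  ∃ q r e, A.Reaches t q r ∧ (q, e) ∈ A.out ∧ h = VExpr.eval r e

/-- The automaton stays within the sorted algebra of forests with variables
among `∘₀, …, ∘_{N-1}` and at most `M` occurrences of variables: every value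
appearing in a reachable configuration or output obeys the bounds. -/
def BoundedBy (A : RAV) (N M : ℕ) : Prop :=
  (∀ t q r, A.Reaches t q r → ∀ v ∈ r, v.varsLt N ∧ v.totalOcc ≤ M) ∧
  (∀ t h, A.Sem t h → h.varsLt N ∧ h.totalOcc ≤ M)

/-- `A` is functional: its semantics, up to the identification `Veq`, is a
partial function. -/
def Functional (A : RAV) : Prop :=
  ∀ t h h', A.Sem t h → A.Sem t h' → PFV.Veq h h'

/-- Equivalence: the semantics coincide up to `Veq`. -/
def Equiv (A B : RAV) : Prop :=
  ∀ t h, (∃ h', PFV.Veq h h' ∧ A.Sem t h') ↔ (∃ h', PFV.Veq h h' ∧ B.Sem t h')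

/-- An effective encoding of these register automata by natural numbers. -/
def code (A : RAV) : ℕ :=
  Encodable.encode (A.arity, A.regs, A.states,
    A.delta.map (fun tr => Nat.pair tr.1 (Nat.pair (Encodable.encode tr.2.1)
      (Nat.pair tr.2.2.1 (Encodable.encode (tr.2.2.2.map VExpr.code))))),
    A.out.map (fun p => Nat.pair p.1 p.2.code))

end RAV


namespace PFVSim

open Polynomial

/-! ### Forests as polynomials: a complete invariant -/

/-- The value of a forest when the trees of a forest are multiplied, `root` is
`u ↦ T * u + 2` and the variable `∘ᵢ` is evaluated at `v i`. -/
def fval {R : Type*} [CommRing R] (T : R) (v : ℕ → R) : PFV → R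
  | .empty => 1
  | .consRoot c r => (T * fval T v c + 2) * fval T v r
  | .consVar i r => v i * fval T v r

theorem fval_veq {R : Type*} [CommRing R] (T : R) (v : ℕ → R) {h h' : PFV}
    (H : PFV.Veq h h') : fval T v h = fval T v h' := by
  induction H with
  | refl => rfl
  | symm _ ih => exact ih.symm
  | trans _ _ ih1 ih2 => exact ih1.trans ih2
  | congrRoot _ _ ih1 ih2 => simp only [fval, ih1, ih2]
  | congrVar i _ ih => simp only [fval, ih]
  | swapRR => simp only [fval]; ring
  | swapRV => simp only [fval]; ring
  | swapVV => simp only [fval]; ring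

theorem map_fval {R S : Type*} [CommRing R] [CommRing S] (φ : R →+* S) (T : R) (v : ℕ → R)
    (h : PFV) : φ (fval T v h) = fval (φ T) (fun i => φ (v i)) h := by
  induction h with
  | empty => simp [fval]
  | consRoot c r ih1 ih2 => simp [fval, ih1, ih2, map_ofNat φ 2]
  | consVar i r ih => simp [fval, ih]

theorem fval_union {R : Type*} [CommRing R] (T : R) (v : ℕ → R) (h g : PFV) :
    fval T v (h.union g) = fval T v h * fval T v g := by
  induction h with
  | empty => simp [fval, PFV.union]
  | consRoot c r ih1 ih2 => simp [fval, PFV.union, ih2, mul_assoc]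
  | consVar i r ih => simp [fval, PFV.union, ih, mul_assoc]

theorem fval_root {R : Type*} [CommRing R] (T : R) (v : ℕ → R) (h : PFV) :
    fval T v h.root = T * fval T v h + 2 := by
  simp [fval, PFV.root]

theorem fval_subst {R : Type*} [CommRing R] (T : R) (v : ℕ → R) (σ : ℕ → PFV) (h : PFV) :
    fval T v (h.subst σ) = fval T (fun i => fval T v (σ i)) h := by
  induction h with
  | empty => simp [fval, PFV.subst]
  | consRoot c r ih1 ih2 => simp [fval, PFV.subst, ih1, ih2]
  | consVar i r ih => simp [fval, PFV.subst, ih, fval_union]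

/-- The factorial ring in which forests are compared. -/
abbrev BR := Polynomial (MvPolynomial ℕ ℤ)

/-- The value of a forest in `ℤ[y₀, y₁, …][x]`. -/
noncomputable def up (h : PFV) : BR := fval X (fun i => C (MvPolynomial.X i)) h

/-- Leading coefficient a monomial in the variables, all other coefficients even. -/
def NF (u : BR) : Prop :=
  (∃ m : ℕ →₀ ℕ, u.leadingCoeff = MvPolynomial.monomial m 1) ∧
    ∀ k < u.natDegree, (2 : MvPolynomial ℕ ℤ) ∣ u.coeff k

theorem NF.ne_zero {u : BR} (h : NF u) : u ≠ 0 := by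
  obtain ⟨⟨m, hm⟩, _⟩ := h
  rintro rfl
  simp at hm
  exact absurd hm.symm (by simp)

theorem NF.mul {u v : BR} (hu : NF u) (hv : NF v) : NF (u * v) := by
  have hu0 := hu.ne_zero
  have hv0 := hv.ne_zero
  obtain ⟨⟨m, hm⟩, h1⟩ := hu
  obtain ⟨⟨m', hm'⟩, h2⟩ := hv
  refine ⟨⟨m + m', ?_⟩, ?_⟩
  · rw [leadingCoeff_mul, hm, hm', MvPolynomial.monomial_mul, one_mul]
  · intro k hk
    rw [natDegree_mul hu0 hv0] at hk
    rw [coeff_mul]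
    refine Finset.dvd_sum ?_
    rintro ⟨i, j⟩ hij
    rw [Finset.HasAntidiagonal.mem_antidiagonal] at hij
    simp only at hij ⊢
    by_cases hi : i < u.natDegree
    · exact (h1 i hi).mul_right _
    · exact (h2 j (by omega)).mul_left _

theorem natDegree_step {u : BR} (hu : u ≠ 0) : (X * u + 2).natDegree = u.natDegree + 1 := by
  have : (2 : BR) = C 2 := rfl
  rw [this, natDegree_add_C, natDegree_X_mul hu]

theorem coeff_step_succ (u : BR) (k : ℕ) : (X * u + 2 : BR).coeff (k + 1) = u.coeff k := by
  have : (2 : BR) = C 2 := rfl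
  rw [this, coeff_add, coeff_X_mul, coeff_C_succ, add_zero]

theorem coeff_step_zero (u : BR) : (X * u + 2 : BR).coeff 0 = 2 := by
  have : (2 : BR) = C 2 := rfl
  rw [this, coeff_add, mul_coeff_zero, coeff_X_zero, coeff_C_zero]; simp

theorem lc_step {u : BR} (hu : u ≠ 0) : (X * u + 2).leadingCoeff = u.leadingCoeff := by
  rw [leadingCoeff, natDegree_step hu, coeff_step_succ]; rfl

theorem NF.step {u : BR} (hu : NF u) : NF (X * u + 2) := by
  have h0 := hu.ne_zero
  refine ⟨by rw [lc_step h0]; exact hu.1, ?_⟩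
  rw [natDegree_step h0]
  rintro (_ | k) hk
  · rw [coeff_step_zero]
  · rw [coeff_step_succ]; exact hu.2 k (by omega)

theorem NF.C_X (i : ℕ) : NF (C (MvPolynomial.X i)) := by
  refine ⟨⟨Finsupp.single i 1, by rw [leadingCoeff_C]; rfl⟩, ?_⟩
  simp

theorem NF_up (h : PFV) : NF (up h) := by
  induction h with
  | empty => exact ⟨⟨0, by simp [up, fval]⟩, by simp [up, fval]⟩
  | consRoot c r ih1 ih2 => exact ih1.step.mul ih2
  | consVar i r ih => exact (NF.C_X i).mul ih

theorem two_prime : Prime (2 : MvPolynomial ℕ ℤ) := by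
  have : (2 : MvPolynomial ℕ ℤ) = MvPolynomial.C 2 := rfl
  rw [this, MvPolynomial.prime_C_iff]
  exact Int.prime_two

theorem two_not_dvd_monomial (m : ℕ →₀ ℕ) :
    ¬ (2 : MvPolynomial ℕ ℤ) ∣ MvPolynomial.monomial m 1 := by
  have : (2 : MvPolynomial ℕ ℤ) = MvPolynomial.C 2 := rfl
  rw [this, MvPolynomial.C_dvd_iff_dvd_coeff]
  intro h
  have := h m
  rw [MvPolynomial.coeff_monomial, if_pos rfl] at this
  omega

/-- Eisenstein's criterion at the prime `2`. -/
theorem NF.irreducible {u : BR} (hu : NF u) : Irreducible (X * u + 2) := by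
  have h0 := hu.ne_zero
  have hs := hu.step
  have hpos : 0 < (X * u + 2).natDegree := by rw [natDegree_step h0]; omega
  have hs0 := hs.ne_zero
  obtain ⟨⟨m, hm⟩, hd⟩ := hs
  refine irreducible_of_eisenstein_criterion (P := Ideal.span {2})
    ((Ideal.span_singleton_prime two_prime.ne_zero).2 two_prime) ?_ ?_
    (natDegree_pos_iff_degree_pos.1 hpos) ?_ ?_
  · rw [Ideal.mem_span_singleton, hm]
    exact two_not_dvd_monomial m
  · intro n hn
    rw [Ideal.mem_span_singleton]
    refine hd n ?_
    rwa [degree_eq_natDegree hs0, Nat.cast_lt] at hn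
  · rw [Ideal.span_singleton_pow, Ideal.mem_span_singleton, coeff_step_zero]
    rintro ⟨k, hk⟩
    have h1 : (2 : MvPolynomial ℕ ℤ) * 1 = 2 * (2 * k) := by rw [mul_one]; rw [← mul_assoc, ← sq]; exact hk
    have h2 := mul_left_cancel₀ two_prime.ne_zero h1
    exact two_prime.not_isUnit (IsUnit.of_mul_eq_one _ h2.symm)
  · intro r hr
    rw [C_dvd_iff_dvd_coeff] at hr
    have hr1 : r ∣ MvPolynomial.monomial m 1 := by rw [← hm]; exact hr _
    have hr2 : r ∣ 2 := by have := hr 0; rwa [coeff_step_zero] at this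
    obtain ⟨s, hs⟩ := hr2
    rcases two_prime.irreducible.isUnit_or_isUnit hs with h | h
    · exact h
    · exfalso
      refine two_not_dvd_monomial m (dvd_trans ?_ hr1)
      obtain ⟨w, rfl⟩ := h
      exact ⟨↑w⁻¹, by rw [hs]; simp⟩

theorem irreducible_X (i : ℕ) : Irreducible (MvPolynomial.X i : MvPolynomial ℕ ℤ) := by
  refine MvPolynomial.irreducible_of_totalDegree_eq_one (MvPolynomial.totalDegree_X i) ?_
  intro x hx
  have := hx (Finsupp.single i 1)
  rw [MvPolynomial.coeff_X] at this
  simpa using isUnit_of_dvd_one (by simpa using this)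

theorem prime_CX (i : ℕ) : Prime (C (MvPolynomial.X i) : BR) :=
  prime_C_iff.2 (irreducible_X i).prime

/-- Two factors `x * u + 2` are associated only if they are equal. -/
theorem step_inj {u v : BR} (hu : NF u) (hv : NF v) (h : (X * u + 2 : BR) ∣ X * v + 2) :
    u = v := by
  obtain ⟨w, hw⟩ := hu.irreducible.associated_of_dvd hv.irreducible h
  obtain ⟨r, hr, hrw⟩ := Polynomial.isUnit_iff.1 w.isUnit
  rw [← hrw] at hw
  have h0 := congrArg (fun p => coeff p 0) hw
  simp only [mul_coeff_zero, coeff_step_zero, coeff_C_zero] at h0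
  have : r = 1 := mul_left_cancel₀ two_prime.ne_zero (by rw [h0, mul_one])
  rw [this, C_1, mul_one] at hw
  have := add_right_cancel hw
  exact mul_left_cancel₀ X_ne_zero this

/-- A factor `x * up c + 2` of `up h` comes from a tree `root(c')` of `h`. -/
theorem exists_root_of_dvd (c : PFV) : ∀ h : PFV, (X * up c + 2 : BR) ∣ up h →
    ∃ c' r, PFV.Veq h (.consRoot c' r) ∧ up c = up c'
  | .empty, hd => absurd (isUnit_of_dvd_one hd) (NF_up c).irreducible.not_isUnit
  | .consRoot c2 r2, hd => by
    rcases (NF_up c).irreducible.prime.dvd_or_dvd hd with h | h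
    · exact ⟨c2, r2, .refl _, step_inj (NF_up c) (NF_up c2) h⟩
    · obtain ⟨c', r, h1, h2⟩ := exists_root_of_dvd c r2 h
      exact ⟨c', .consRoot c2 r, (PFV.Veq.congrRoot (.refl c2) h1).trans (.swapRR _ _ _), h2⟩
  | .consVar i r2, hd => by
    rcases (NF_up c).irreducible.prime.dvd_or_dvd hd with h | h
    · exfalso
      have h1 := natDegree_le_of_dvd h (prime_CX i).ne_zero
      rw [natDegree_C, natDegree_step (NF_up c).ne_zero] at h1
      omega
    · obtain ⟨c', r, h1, h2⟩ := exists_root_of_dvd c r2 h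
      exact ⟨c', .consVar i r, (PFV.Veq.congrVar i h1).trans (PFV.Veq.swapRV _ _ _).symm, h2⟩

/-- A factor `yᵢ` of `up h` comes from a leaf `∘ᵢ` of `h`. -/
theorem exists_var_of_dvd (i : ℕ) : ∀ h : PFV, (C (MvPolynomial.X i) : BR) ∣ up h →
    ∃ r, PFV.Veq h (.consVar i r)
  | .empty, hd => absurd (isUnit_of_dvd_one hd) (prime_CX i).not_isUnit
  | .consRoot c2 r2, hd => by
    rcases (prime_CX i).dvd_or_dvd hd with h | h
    · exfalso
      have := (C_dvd_iff_dvd_coeff _ _).1 h 0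
      change MvPolynomial.X i ∣ (X * up c2 + 2 : BR).coeff 0 at this
      rw [coeff_step_zero] at this
      obtain ⟨k, hk⟩ := this
      have := congrArg (MvPolynomial.eval (fun _ => (0 : ℤ))) hk
      rw [map_mul, MvPolynomial.eval_X, zero_mul, map_ofNat] at this
      exact absurd this (by norm_num)
    · obtain ⟨r, h1⟩ := exists_var_of_dvd i r2 h
      exact ⟨.consRoot c2 r, (PFV.Veq.congrRoot (.refl c2) h1).trans (.swapRV _ _ _)⟩
  | .consVar j r2, hd => by
    rcases (prime_CX i).dvd_or_dvd hd with h | h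
    · have := (C_dvd_iff_dvd_coeff _ _).1 h 0
      rw [coeff_C_zero, MvPolynomial.X_dvd_X] at this
      subst this
      exact ⟨r2, .refl _⟩
    · obtain ⟨r, h1⟩ := exists_var_of_dvd i r2 h
      exact ⟨.consVar j r, (PFV.Veq.congrVar j h1).trans (.swapVV _ _ _)⟩

/-- Peel off the first tree of `h`: it gives a prime factor of `up h'`, hence a tree of `h'`, and
both values can be divided by it. -/
theorem up_injective : ∀ h h' : PFV, up h = up h' → PFV.Veq h h'
  | .empty, h', H => by
    cases h' with
    | empty => exact .refl _
    | consRoot c r =>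
      exact absurd (IsUnit.of_mul_eq_one _ H.symm) (NF_up c).irreducible.not_isUnit
    | consVar i r => exact absurd (IsUnit.of_mul_eq_one _ H.symm) (prime_CX i).not_isUnit
  | .consRoot c r, h', H => by
    obtain ⟨c', r', h1, h2⟩ := exists_root_of_dvd c h' ⟨up r, H.symm⟩
    have h3 : up (.consRoot c r) = up (.consRoot c' r') := H.trans (fval_veq _ _ h1)
    change (X * up c + 2) * up r = (X * up c' + 2) * up r' at h3
    rw [← h2] at h3
    have h4 := mul_left_cancel₀ (NF_up c).irreducible.ne_zero h3
    exact (PFV.Veq.congrRoot (up_injective c c' h2) (up_injective r r' h4)).trans h1.symm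
  | .consVar i r, h', H => by
    obtain ⟨r', h1⟩ := exists_var_of_dvd i h' ⟨up r, H.symm⟩
    have h3 : up (.consVar i r) = up (.consVar i r') := H.trans (fval_veq _ _ h1)
    have h4 := mul_left_cancel₀ (prime_CX i).ne_zero h3
    exact (PFV.Veq.congrVar i (up_injective r r' h4)).trans h1.symm

/-- The value of a forest as a polynomial in the variables with coefficients in `ℚ[x]`. -/
noncomputable def pol (h : PFV) : MvPolynomial ℕ (Polynomial ℚ) :=
  fval (MvPolynomial.C X) MvPolynomial.X h

theorem eval_pol (ρ : ℕ → Polynomial ℚ) (h : PFV) :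
    MvPolynomial.eval ρ (pol h) = fval X ρ h := by
  rw [pol, map_fval]; simp

/-- Both `pol h` and `up h` are mapped to the value of `h` in `ℚ[y₀, y₁, …][x]`, the latter
injectively. -/
theorem pol_injective {h h' : PFV} (H : pol h = pol h') : PFV.Veq h h' := by
  apply up_injective
  apply Polynomial.map_injective (MvPolynomial.map (Int.castRingHom ℚ))
    (MvPolynomial.map_injective _ Int.cast_injective)
  have := congrArg (MvPolynomial.eval₂Hom (Polynomial.mapRingHom (MvPolynomial.C (σ := ℕ) (R := ℚ)))
    (fun i => C (MvPolynomial.X i))) H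
  rw [pol, pol, map_fval, map_fval] at this
  rw [← Polynomial.coe_mapRingHom, up, up, map_fval, map_fval]
  simpa using this

/-! ### The simulation by tuples of coefficients -/

/-- All monomials of `p` only use the variables below `N` and have degree at most `k`. -/
def Bd (N k : ℕ) (p : MvPolynomial ℕ (Polynomial ℚ)) : Prop :=
  ∀ m ∈ p.support, m.support ⊆ Finset.range N ∧ m.degree ≤ k

theorem Bd.mono {N k k' : ℕ} {p : MvPolynomial ℕ (Polynomial ℚ)} (h : Bd N k p) (hk : k ≤ k') :
    Bd N k' p := fun m hm => ⟨(h m hm).1, (h m hm).2.trans hk⟩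

theorem Bd.C (N k : ℕ) (c : Polynomial ℚ) : Bd N k (MvPolynomial.C c) := by
  intro m hm
  have := MvPolynomial.support_monomial_subset (s := (0 : ℕ →₀ ℕ)) hm
  rw [Finset.mem_singleton] at this
  subst this
  simp

theorem Bd.X {N i : ℕ} (hi : i < N) : Bd N 1 (MvPolynomial.X i) := by
  intro m hm
  have := MvPolynomial.support_monomial_subset hm
  rw [Finset.mem_singleton] at this
  subst this
  refine ⟨Finsupp.support_single_subset.trans ?_, by simp⟩
  simpa using hi

theorem Bd.add {N k : ℕ} {p q : MvPolynomial ℕ (Polynomial ℚ)} (hp : Bd N k p) (hq : Bd N k q) :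
    Bd N k (p + q) := by
  classical
  intro m hm
  rcases Finset.mem_union.1 (MvPolynomial.support_add hm) with h | h
  · exact hp m h
  · exact hq m h

theorem Bd.mul {N k l : ℕ} {p q : MvPolynomial ℕ (Polynomial ℚ)} (hp : Bd N k p)
    (hq : Bd N l q) : Bd N (k + l) (p * q) := by
  classical
  intro m hm
  obtain ⟨a, ha, b, hb, rfl⟩ := Finset.mem_add.1 (MvPolynomial.support_mul p q hm)
  refine ⟨Finsupp.support_add.trans (Finset.union_subset (hp a ha).1 (hq b hb).1), ?_⟩
  rw [map_add]
  exact add_le_add (hp a ha).2 (hq b hb).2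

/-- Each occurrence of a variable raises the degree by one, and `root` does not change it. -/
theorem Bd_pol (N : ℕ) : ∀ h : PFV, h.varsLt N → Bd N h.totalOcc (pol h)
  | .empty, _ => by
    have := Bd.C N 0 1
    rwa [MvPolynomial.C_1] at this
  | .consRoot c r, h => by
    have h1 := ((Bd.C N 0 X).mul (Bd_pol N c h.1)).add (Bd.C N _ 2)
    rw [zero_add] at h1
    exact h1.mul (Bd_pol N r h.2)
  | .consVar i r, h => (Bd.X h.1).mul (Bd_pol N r h.2)

/-- The monomials in the first `N` variables of degree at most `M`. -/
def monos (N M : ℕ) : Finset (ℕ →₀ ℕ) :=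
  (Finset.range (M + 1)).biUnion fun k => Finset.finsuppAntidiag (Finset.range N) k

theorem mem_monos {N M : ℕ} {m : ℕ →₀ ℕ} :
    m ∈ monos N M ↔ m.support ⊆ Finset.range N ∧ m.degree ≤ M := by
  simp only [monos, Finset.mem_biUnion, Finset.mem_range, Finset.mem_finsuppAntidiag]
  have key : m.support ⊆ Finset.range N → (Finset.range N).sum m = m.degree := by
    intro h
    rw [Finsupp.degree_apply]
    exact (Finset.sum_subset h (by intro x _ hx; simpa using hx)).symm
  constructor
  · rintro ⟨k, hk, h1, h2⟩
    exact ⟨h2, by rw [← key h2, h1]; omega⟩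
  · rintro ⟨h1, h2⟩
    exact ⟨_, Nat.lt_succ_of_le h2, key h1, h1⟩

/-- An enumeration of the monomials. -/
noncomputable def mono (N M : ℕ) (j : Fin (monos N M).card) : ℕ →₀ ℕ :=
  ((monos N M).equivFin.symm j).1

theorem mono_mem (N M : ℕ) (j : Fin (monos N M).card) : mono N M j ∈ monos N M :=
  ((monos N M).equivFin.symm j).2

/-- The polynomial with a given tuple of coefficients. -/
noncomputable def gp (N M : ℕ) {K : Type*} [CommRing K] (x : Fin (monos N M).card → K) :
    MvPolynomial ℕ K :=
  ∑ j, MvPolynomial.monomial (mono N M j) (x j)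

theorem map_gp (N M : ℕ) {K L : Type*} [CommRing K] [CommRing L] (φ : K →+* L)
    (x : Fin (monos N M).card → K) :
    MvPolynomial.map φ (gp N M x) = gp N M (fun j => φ (x j)) := by
  simp [gp, map_sum, MvPolynomial.map_monomial]

/-- The encoding of forests as tuples of coefficients in `ℚ[x]`. -/
noncomputable def alpha (N M : ℕ) (h : PFV) (j : Fin (monos N M).card) : Polynomial ℚ :=
  MvPolynomial.coeff (mono N M j) (pol h)

/-- A bounded forest is determined by its tuple of coefficients. -/
theorem gp_alpha {N M : ℕ} {h : PFV} (h1 : h.varsLt N) (h2 : h.totalOcc ≤ M) :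
    gp N M (alpha N M h) = pol h := by
  have hb : (pol h).support ⊆ monos N M := fun m hm =>
    mem_monos.2 ((Bd_pol N h h1).mono h2 m hm)
  conv_rhs => rw [MvPolynomial.as_sum (pol h)]
  rw [Finset.sum_subset hb (by
    intro m _ hm
    rw [MvPolynomial.notMem_support_iff.1 hm, map_zero])]
  rw [gp, ← Finset.sum_coe_sort (monos N M)
    (fun m => MvPolynomial.monomial m (MvPolynomial.coeff m (pol h)))]
  exact Fintype.sum_equiv (monos N M).equivFin.symm _ _ (fun j => rfl)

theorem alpha_injective {N M : ℕ} {h h' : PFV} (h1 : h.varsLt N) (h2 : h.totalOcc ≤ M)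
    (h1' : h'.varsLt N) (h2' : h'.totalOcc ≤ M) (H : alpha N M h = alpha N M h') :
    PFV.Veq h h' :=
  pol_injective (by rw [← gp_alpha h1 h2, H, gp_alpha h1' h2'])

theorem fval_congr {R : Type*} [CommRing R] (T : R) (v v' : ℕ → R) (N : ℕ)
    (hv : ∀ i < N, v i = v' i) : ∀ h : PFV, h.varsLt N → fval T v h = fval T v' h
  | .empty, _ => rfl
  | .consRoot c r, h => by
    simp only [fval, fval_congr T v v' N hv c h.1, fval_congr T v v' N hv r h.2]
  | .consVar i r, h => by
    simp only [fval, hv i h.1, fval_congr T v v' N hv r h.2]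

theorem eval_coeff {τ : Type*} (env : τ → Polynomial ℚ) (m : ℕ →₀ ℕ)
    (p : MvPolynomial ℕ (MvPolynomial τ (Polynomial ℚ))) :
    MvPolynomial.eval env (MvPolynomial.coeff m p) =
      MvPolynomial.coeff m (MvPolynomial.map (MvPolynomial.eval env) p) :=
  (MvPolynomial.coeff_map _ _ _).symm

/-- The coefficients of a product are polynomials in the coefficients of the factors, read off
from the product of two generic polynomials. -/
theorem alpha_union (N M : ℕ) :
    ∃ f : Fin (monos N M).card →
        MvPolynomial (Fin (monos N M).card ⊕ Fin (monos N M).card) (Polynomial ℚ),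
      ∀ h h', h.varsLt N → h'.varsLt N → h.totalOcc + h'.totalOcc ≤ M →
        alpha N M (PFV.union h h') =
          fun j => MvPolynomial.eval (Sum.elim (alpha N M h) (alpha N M h')) (f j) := by
  refine ⟨fun j => MvPolynomial.coeff (mono N M j)
    (gp N M (fun i => MvPolynomial.X (Sum.inl i)) * gp N M (fun i => MvPolynomial.X (Sum.inr i))),
    ?_⟩
  intro h h' h1 h1' h2
  funext j
  rw [eval_coeff, map_mul, map_gp, map_gp]
  simp only [MvPolynomial.eval_X, Sum.elim_inl, Sum.elim_inr]
  change MvPolynomial.coeff _ _ = MvPolynomial.coeff _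
    (gp N M (alpha N M h) * gp N M (alpha N M h'))
  rw [gp_alpha h1 (by omega), gp_alpha h1' (by omega), pol, fval_union]
  rfl

theorem alpha_root (N M : ℕ) :
    ∃ f : Fin (monos N M).card → MvPolynomial (Fin (monos N M).card) (Polynomial ℚ),
      ∀ h, h.varsLt N → h.totalOcc ≤ M →
        alpha N M (PFV.root h) = fun j => MvPolynomial.eval (alpha N M h) (f j) := by
  let K := MvPolynomial (Fin (monos N M).card) (Polynomial ℚ)
  let q : MvPolynomial ℕ K := MvPolynomial.C (MvPolynomial.C X : K) *
    gp N M (K := K) (fun i => MvPolynomial.X i) + 2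
  refine ⟨fun j => MvPolynomial.coeff (mono N M j) q, ?_⟩
  intro h h1 h2
  funext j
  rw [eval_coeff, map_add, map_mul, map_gp, map_ofNat, MvPolynomial.map_C, MvPolynomial.eval_C]
  simp only [MvPolynomial.eval_X]
  change MvPolynomial.coeff _ _ = MvPolynomial.coeff _
    (MvPolynomial.C X * gp N M (alpha N M h) + 2)
  rw [gp_alpha h1 h2, pol, fval_root]
  rfl

/-- The coefficients after substitution are read off from the generic polynomial evaluated at
generic polynomials. -/
theorem alpha_subst (N M : ℕ) :
    ∃ f : Fin (monos N M).card → MvPolynomial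
        (Fin (monos N M).card ⊕ Fin N × Fin (monos N M).card) (Polynomial ℚ),
      ∀ (h : PFV) (σ : ℕ → PFV), h.varsLt N → h.totalOcc ≤ M →
        (∀ i : Fin N, (σ i.val).varsLt N ∧ (σ i.val).totalOcc ≤ M) →
        alpha N M (PFV.subst σ h) =
          fun j => MvPolynomial.eval
            (Sum.elim (alpha N M h) (fun p : Fin N × Fin (monos N M).card =>
              alpha N M (σ p.1.val) p.2)) (f j) := by
  let K := MvPolynomial (Fin (monos N M).card ⊕ Fin N × Fin (monos N M).card) (Polynomial ℚ)
  let W (i : ℕ) : MvPolynomial ℕ K := if hi : i < N then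
    gp N M (K := K) (fun j => MvPolynomial.X (Sum.inr ((⟨i, hi⟩ : Fin N), j))) else 0
  let q : MvPolynomial ℕ K := ∑ j', MvPolynomial.C (MvPolynomial.X (Sum.inl j') : K) *
    (mono N M j').prod (fun i k => W i ^ k)
  refine ⟨fun j => MvPolynomial.coeff (mono N M j) q, ?_⟩
  intro h σ h1 h2 hσ
  funext j
  rw [eval_coeff, map_sum, alpha, pol, fval_subst]
  congr 1
  rw [fval_congr (MvPolynomial.C X) _ (fun i => if i < N then pol (σ i) else 0) N
    (fun i hi => by simp [hi, pol]) h h1]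
  have key : fval (MvPolynomial.C X) (fun i => if i < N then pol (σ i) else 0) h =
      MvPolynomial.aeval (fun i => if i < N then pol (σ i) else 0) (pol h) := by
    have := map_fval (MvPolynomial.aeval (R := Polynomial ℚ)
      (fun i => if i < N then pol (σ i) else 0)).toRingHom (MvPolynomial.C X) MvPolynomial.X h
    simp only [AlgHom.toRingHom_eq_coe, RingHom.coe_coe, MvPolynomial.aeval_X,
      MvPolynomial.algHom_C, MvPolynomial.algebraMap_eq] at this
    exact this.symm
  rw [key, ← gp_alpha h1 h2, gp, map_sum]
  refine Finset.sum_congr rfl fun j' _ => ?_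
  rw [MvPolynomial.aeval_monomial, map_mul, MvPolynomial.map_C, MvPolynomial.eval_X,
    Sum.elim_inl, MvPolynomial.algebraMap_eq, Finsupp.prod, Finsupp.prod, map_prod]
  congr 1
  refine Finset.prod_congr rfl fun i _ => ?_
  rw [map_pow]
  congr 1
  simp only [W]
  split_ifs with hi
  · rw [map_gp]
    simp only [MvPolynomial.eval_X, Sum.elim_inr]
    exact (gp_alpha (hσ ⟨i, hi⟩).1 (hσ ⟨i, hi⟩).2).symm
  · rw [map_zero]

/-! ### Semi-decidable predicates -/

section SemiDecidable

variable {α β γ : Type*} [Primcodable α] [Primcodable β] [Primcodable γ]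

/-- Semi-decidability: `p a` holds iff a primitive recursive search for a witness succeeds. -/
def SD (p : α → Prop) : Prop :=
  ∃ c : α → ℕ → Bool, Primrec₂ c ∧ ∀ a, p a ↔ ∃ k, c a k = true

theorem SD.of_eq {p q : α → Prop} (hp : SD p) (h : ∀ a, p a ↔ q a) : SD q := by
  obtain ⟨c, hc, H⟩ := hp
  exact ⟨c, hc, fun a => (h a).symm.trans (H a)⟩

theorem SD.of_prim {p : α → Prop} (hp : PrimrecPred p) : SD p := by
  obtain ⟨_, h⟩ := hp
  exact ⟨fun a _ => decide (p a), h.comp Primrec.fst, fun a => by simp⟩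

theorem SD.comp {p : β → Prop} (hp : SD p) {f : α → β} (hf : Primrec f) :
    SD fun a => p (f a) := by
  obtain ⟨c, hc, H⟩ := hp
  exact ⟨fun a k => c (f a) k, hc.comp (hf.comp Primrec.fst) Primrec.snd, fun a => H (f a)⟩

theorem SD.or {p q : α → Prop} (hp : SD p) (hq : SD q) : SD fun a => p a ∨ q a := by
  obtain ⟨c, hc, H⟩ := hp
  obtain ⟨d, hd, K⟩ := hq
  refine ⟨fun a k => c a k || d a k, Primrec.or.comp hc hd, fun a => ?_⟩
  simp only [Bool.or_eq_true, H, K, exists_or]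

theorem SD.and {p q : α → Prop} (hp : SD p) (hq : SD q) : SD fun a => p a ∧ q a := by
  obtain ⟨c, hc, H⟩ := hp
  obtain ⟨d, hd, K⟩ := hq
  have hu := Primrec.unpair.comp (Primrec.snd (α := α) (β := ℕ))
  refine ⟨fun a k => c a k.unpair.1 && d a k.unpair.2,
    Primrec.and.comp (hc.comp Primrec.fst (Primrec.fst.comp hu))
      (hd.comp Primrec.fst (Primrec.snd.comp hu)), fun a => ?_⟩
  simp only [Bool.and_eq_true, H, K]
  constructor
  · rintro ⟨⟨k, hk⟩, ⟨l, hl⟩⟩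
    exact ⟨Nat.pair k l, by simpa using ⟨hk, hl⟩⟩
  · rintro ⟨k, h1, h2⟩
    exact ⟨⟨_, h1⟩, ⟨_, h2⟩⟩

/-- Semi-decidability is preserved by unbounded existential quantification: witnesses are
searched in pairs. -/
theorem SD.ex {p : α → β → Prop} (hp : SD fun x : α × β => p x.1 x.2) :
    SD fun a => ∃ b, p a b := by
  obtain ⟨c, hc, H⟩ := hp
  have hu := Primrec.unpair.comp (Primrec.snd (α := α) (β := ℕ))
  refine ⟨fun a k => ((Encodable.decode k.unpair.1 : Option β).map
    (fun b => c (a, b) k.unpair.2)).getD false, ?_, fun a => ?_⟩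
  · refine Primrec.option_getD.comp (Primrec.option_map
      (Primrec.decode.comp (Primrec.fst.comp hu)) ?_) (Primrec.const false)
    exact hc.comp (Primrec.pair (Primrec.fst.comp Primrec.fst) Primrec.snd)
      (Primrec.snd.comp (hu.comp Primrec.fst))
  · constructor
    · rintro ⟨b, hb⟩
      obtain ⟨k, hk⟩ := (H (a, b)).1 hb
      exact ⟨Nat.pair (Encodable.encode b) k, by simpa using hk⟩
    · rintro ⟨k, hk⟩
      cases hd : (Encodable.decode k.unpair.1 : Option β) with
      | none => simp [hd] at hk
      | some b => exact ⟨b, (H (a, b)).2 ⟨k.unpair.2, by simpa [hd] using hk⟩⟩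

theorem prim_mem {α : Type*} [Primcodable α] :
    PrimrecPred fun x : α × List α => x.1 ∈ x.2 :=
  ((PrimrecRel.exists_mem_list (Primrec.eq (α := α))).comp Primrec.snd Primrec.fst).of_eq
    (by simp)

/-- A universal quantifier over a finite list is witnessed by a common bound of the witnesses. -/
theorem SD.all_list {p : α → β → Prop} (hp : SD fun x : α × β => p x.1 x.2)
    {f : α → List β} (hf : Primrec f) : SD fun a => ∀ b ∈ f a, p a b := by
  obtain ⟨c, hc, H⟩ := hp
  have h1 : PrimrecRel fun (k : ℕ) (x : α × β) => c x k = true :=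
    (Primrec.eq.comp (hc.comp Primrec.snd Primrec.fst) (Primrec.const true))
  have h2 : PrimrecPred fun y : β × (α × ℕ) => ∃ k < y.2.2, c (y.2.1, y.1) k = true :=
    (h1.exists_mem_list.comp (f := fun y : β × (α × ℕ) => List.range y.2.2)
      (g := fun y => (y.2.1, y.1)) (Primrec.list_range.comp (Primrec.snd.comp Primrec.snd))
      (Primrec.pair (Primrec.fst.comp Primrec.snd) Primrec.fst)).of_eq (by simp)
  have h3 : PrimrecPred fun x : α × ℕ => ∀ b ∈ f x.1, ∃ k < x.2, c (x.1, b) k = true :=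
    PrimrecRel.comp (PrimrecRel.forall_mem_list
      (R := fun (b : β) (x : α × ℕ) => ∃ k < x.2, c (x.1, b) k = true) h2)
      (hf.comp Primrec.fst) Primrec.id
  refine (SD.ex (p := fun a K => ∀ b ∈ f a, ∃ k < K, c (a, b) k = true)
    (SD.of_prim h3)).of_eq fun a => ?_
  constructor
  · rintro ⟨K, hK⟩ b hb
    obtain ⟨k, _, hk⟩ := hK b hb
    exact (H (a, b)).2 ⟨k, hk⟩
  · intro h
    generalize f a = l at h
    induction l with
    | nil => exact ⟨0, by simp⟩
    | cons b l ih =>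
      obtain ⟨K, hK⟩ := ih fun b' hb' => h b' (List.mem_cons_of_mem _ hb')
      obtain ⟨k, hk⟩ := (H (a, b)).1 (h b List.mem_cons_self)
      refine ⟨K + k + 1, fun b' hb' => ?_⟩
      rcases List.mem_cons.1 hb' with rfl | hb'
      · exact ⟨k, by omega, hk⟩
      · obtain ⟨k', h1, h2⟩ := hK b' hb'
        exact ⟨k', by omega, h2⟩

theorem SD.ex_list {p : α → β → Prop} (hp : SD fun x : α × β => p x.1 x.2)
    {f : α → List β} (hf : Primrec f) : SD fun a => ∃ b ∈ f a, p a b :=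
  SD.ex (p := fun a b => b ∈ f a ∧ p a b)
    ((SD.of_prim (prim_mem.comp (Primrec.pair Primrec.snd (hf.comp Primrec.fst)))).and hp)

/-- A predicate that is semi-decidable together with its negation is decided by a total
computable function. -/
theorem SD.decide {p : α → Prop} (hp : SD p) (hn : SD fun a => ¬ p a) :
    ∃ F : α → Bool, Computable F ∧ ∀ a, F a = true ↔ p a := by
  obtain ⟨c, hc, H⟩ := hp
  obtain ⟨d, hd, K⟩ := hn
  have hex : ∀ a, ∃ k, (c a k || d a k) = true := by
    intro a
    by_cases h : p a
    · obtain ⟨k, hk⟩ := (H a).1 h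
      exact ⟨k, by simp [hk]⟩
    · obtain ⟨k, hk⟩ := (K a).1 h
      exact ⟨k, by simp [hk]⟩
  have hf : Partrec fun a => Nat.rfind fun k => (Part.some (c a k || d a k) : Part Bool) :=
    Partrec.rfind (Primrec.or.comp hc hd).to_comp.partrec
  have hfind : Computable fun a => Nat.find (hex a) := by
    refine hf.of_eq fun a => Part.eq_some_iff.2 ?_
    refine Nat.mem_rfind.2 ⟨by simpa using (Nat.find_spec (hex a)).symm, fun {m} hm => ?_⟩
    simpa using (Nat.find_min (hex a) hm)
  refine ⟨fun a => c a (Nat.find (hex a)), hc.to_comp.comp Computable.id hfind, fun a => ?_⟩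
  constructor
  · intro h
    exact (H a).2 ⟨_, h⟩
  · intro h
    have h1 := Nat.find_spec (hex a)
    by_contra h2
    rw [Bool.or_eq_true] at h1
    rcases h1 with h1 | h1
    · exact h2 h1
    · exact (K a).2 ⟨_, h1⟩ h

end SemiDecidable

section Closure

variable {α : Type*}

/-- The set generated by a family of rules, `R ps a` allowing to derive `a` from `ps`. -/
inductive Clos (R : List α → α → Prop) : α → Prop
  | mk (ps : List α) (a : α) : R ps a → (∀ p ∈ ps, Clos R p) → Clos R a

/-- Lists of rule instances in which each premise is the conclusion of an instance of
smaller rank. -/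
def Valid (R : List α → α → Prop) (L : List (ℕ × List α × α)) : Prop :=
  ∀ e ∈ L, R e.2.1 e.2.2 ∧ ∀ p ∈ e.2.1, ∃ e' ∈ L, e'.1 < e.1 ∧ e'.2.2 = p

theorem Valid.clos {R : List α → α → Prop} {L : List (ℕ × List α × α)} (hL : Valid R L) :
    ∀ n, ∀ e ∈ L, e.1 ≤ n → Clos R e.2.2 := by
  intro n
  induction n with
  | zero =>
    intro e he hn
    refine .mk _ _ (hL e he).1 fun p hp => ?_
    obtain ⟨e', _, h2, _⟩ := (hL e he).2 p hp
    omega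
  | succ n ih =>
    intro e he hn
    refine .mk _ _ (hL e he).1 fun p hp => ?_
    obtain ⟨e', h1, h2, rfl⟩ := (hL e he).2 p hp
    exact ih e' h1 (by omega)

theorem Valid.append {R : List α → α → Prop} {L L' : List (ℕ × List α × α)} (hL : Valid R L)
    (hL' : Valid R L') : Valid R (L ++ L') := by
  intro e he
  rcases List.mem_append.1 he with h | h
  · refine ⟨(hL e h).1, fun p hp => ?_⟩
    obtain ⟨e', h1, h2⟩ := (hL e h).2 p hp
    exact ⟨e', List.mem_append_left _ h1, h2⟩
  · refine ⟨(hL' e h).1, fun p hp => ?_⟩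
    obtain ⟨e', h1, h2⟩ := (hL' e h).2 p hp
    exact ⟨e', List.mem_append_right _ h1, h2⟩

/-- A derivation can be laid out as a finite list ordered by rank. -/
theorem exists_valid {R : List α → α → Prop} {a : α} (h : Clos R a) :
    ∃ L, Valid R L ∧ ∃ e ∈ L, e.2.2 = a := by
  induction h with
  | mk ps a hR _ ih =>
    have h1 : ∀ qs : List α, (∀ q ∈ qs, ∃ L, Valid R L ∧ ∃ e ∈ L, e.2.2 = q) →
        ∃ L, Valid R L ∧ ∀ q ∈ qs, ∃ e ∈ L, e.2.2 = q := by
      intro qs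
      induction qs with
      | nil => exact fun _ => ⟨[], by simp [Valid], by simp⟩
      | cons q qs ihq =>
        intro hq
        obtain ⟨L, hL, h2⟩ := ihq fun q' hq' => hq q' (List.mem_cons_of_mem _ hq')
        obtain ⟨L', hL', e, he, h3⟩ := hq q List.mem_cons_self
        refine ⟨L ++ L', hL.append hL', fun q' hq' => ?_⟩
        rcases List.mem_cons.1 hq' with rfl | hq'
        · exact ⟨e, List.mem_append_right _ he, h3⟩
        · obtain ⟨e', he', h4⟩ := h2 q' hq'
          exact ⟨e', List.mem_append_left _ he', h4⟩
    obtain ⟨L, hL, h2⟩ := h1 ps ih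
    refine ⟨((L.map Prod.fst).sum + 1, ps, a) :: L, ?_, _, List.mem_cons_self, rfl⟩
    intro e he
    rcases List.mem_cons.1 he with rfl | he
    · refine ⟨hR, fun p hp => ?_⟩
      obtain ⟨e', he', rfl⟩ := h2 p hp
      refine ⟨e', List.mem_cons_of_mem _ he', ?_, rfl⟩
      have := List.le_sum_of_mem (List.mem_map_of_mem (f := Prod.fst) he')
      exact Nat.lt_succ_of_le this
    · refine ⟨(hL e he).1, fun p hp => ?_⟩
      obtain ⟨e', h3, h4⟩ := (hL e he).2 p hp
      exact ⟨e', List.mem_cons_of_mem _ h3, h4⟩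

/-- The closure under a semi-decidable family of rules is semi-decidable. -/
theorem SD.clos {γ : Type*} [Primcodable α] [Primcodable γ] {R : γ → List α → α → Prop}
    (hR : SD fun x : γ × (List α × α) => R x.1 x.2.1 x.2.2) :
    SD fun x : γ × α => Clos (R x.1) x.2 := by
  have h1 : PrimrecRel fun (e : ℕ × List α × α) (x : α × ℕ) => e.1 < x.2 ∧ e.2.2 = x.1 :=
    (Primrec.nat_lt.comp (Primrec.fst.comp Primrec.fst) (Primrec.snd.comp Primrec.snd)).and
      (Primrec.eq.comp (Primrec.snd.comp (Primrec.snd.comp Primrec.fst))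
        (Primrec.fst.comp Primrec.snd))
  have h2 : PrimrecRel fun (p : α) (x : List (ℕ × List α × α) × ℕ) =>
      ∃ e' ∈ x.1, e'.1 < x.2 ∧ e'.2.2 = p :=
    h1.exists_mem_list.comp (Primrec.fst.comp Primrec.snd)
      (Primrec.pair Primrec.fst (Primrec.snd.comp Primrec.snd))
  have h3 : PrimrecPred fun x : ((γ × α) × List (ℕ × List α × α)) × (ℕ × List α × α) =>
      ∀ p ∈ x.2.2.1, ∃ e' ∈ x.1.2, e'.1 < x.2.1 ∧ e'.2.2 = p :=
    h2.forall_mem_list.comp (Primrec.fst.comp (Primrec.snd.comp Primrec.snd))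
      (Primrec.pair (Primrec.snd.comp Primrec.fst) (Primrec.fst.comp Primrec.snd))
  have h4 : SD fun x : ((γ × α) × List (ℕ × List α × α)) × (ℕ × List α × α) =>
      R x.1.1.1 x.2.2.1 x.2.2.2 :=
    hR.comp (f := fun x : ((γ × α) × List (ℕ × List α × α)) × (ℕ × List α × α) =>
      (x.1.1.1, x.2.2)) (Primrec.pair (Primrec.fst.comp (Primrec.fst.comp Primrec.fst))
        (Primrec.snd.comp Primrec.snd))
  have h5 : SD fun x : (γ × α) × List (ℕ × List α × α) => Valid (R x.1.1) x.2 :=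
    (SD.all_list (p := fun (x : (γ × α) × List (ℕ × List α × α)) e =>
      R x.1.1 e.2.1 e.2.2 ∧ ∀ p ∈ e.2.1, ∃ e' ∈ x.2, e'.1 < e.1 ∧ e'.2.2 = p)
      (h4.and (.of_prim h3)) Primrec.snd).of_eq fun _ => Iff.rfl
  have h6 : PrimrecRel fun (e : ℕ × List α × α) (a : α) => e.2.2 = a :=
    Primrec.eq.comp (Primrec.snd.comp (Primrec.snd.comp Primrec.fst)) Primrec.snd
  have h7 : PrimrecPred fun x : (γ × α) × List (ℕ × List α × α) => ∃ e ∈ x.2, e.2.2 = x.1.2 :=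
    h6.exists_mem_list.comp Primrec.snd (Primrec.snd.comp Primrec.fst)
  refine (SD.ex (p := fun (x : γ × α) L => Valid (R x.1) L ∧ ∃ e ∈ L, e.2.2 = x.2)
    (h5.and (.of_prim h7))).of_eq fun x => ?_
  constructor
  · rintro ⟨L, hL, e, he, h⟩
    rw [← h]
    exact hL.clos _ e he le_rfl
  · exact exists_valid

end Closure

/-! ### Primitive recursion toolkit -/

attribute [fun_prop] Primrec PrimrecPred

section Prim

variable {α β γ δ : Type*} [Primcodable α] [Primcodable β] [Primcodable γ] [Primcodable δ]

@[fun_prop] theorem fp_id : Primrec fun a : α => a := Primrec.id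
@[fun_prop] theorem fp_const (b : β) : Primrec fun _ : α => b := Primrec.const b
@[fun_prop] theorem fp_comp {f : β → γ} {g : α → β} (hf : Primrec f) (hg : Primrec g) :
    Primrec fun a => f (g a) := hf.comp hg
@[fun_prop] theorem fp_pair {f : α → β} {g : α → γ} (hf : Primrec f) (hg : Primrec g) :
    Primrec fun a => (f a, g a) := hf.pair hg
@[fun_prop] theorem fp_fst {f : α → β × γ} (hf : Primrec f) : Primrec fun a => (f a).1 :=
  Primrec.fst.comp hf
@[fun_prop] theorem fp_snd {f : α → β × γ} (hf : Primrec f) : Primrec fun a => (f a).2 :=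
  Primrec.snd.comp hf
@[fun_prop] theorem fp_natPair {f g : α → ℕ} (hf : Primrec f) (hg : Primrec g) :
    Primrec fun a => Nat.pair (f a) (g a) := Primrec₂.natPair.comp hf hg
@[fun_prop] theorem fp_unpair {f : α → ℕ} (hf : Primrec f) :
    Primrec fun a => Nat.unpair (f a) := Primrec.unpair.comp hf
@[fun_prop] theorem fp_succ {f : α → ℕ} (hf : Primrec f) :
    Primrec fun a => Nat.succ (f a) := Primrec.succ.comp hf
@[fun_prop] theorem fp_add {f g : α → ℕ} (hf : Primrec f) (hg : Primrec g) :
    Primrec fun a => f a + g a := Primrec.nat_add.comp hf hg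
@[fun_prop] theorem fp_mul {f g : α → ℕ} (hf : Primrec f) (hg : Primrec g) :
    Primrec fun a => f a * g a := Primrec.nat_mul.comp hf hg
@[fun_prop] theorem fp_sub {f g : α → ℕ} (hf : Primrec f) (hg : Primrec g) :
    Primrec fun a => f a - g a := Primrec.nat_sub.comp hf hg
@[fun_prop] theorem fp_div {f g : α → ℕ} (hf : Primrec f) (hg : Primrec g) :
    Primrec fun a => f a / g a := Primrec.nat_div.comp hf hg
@[fun_prop] theorem fp_mod {f g : α → ℕ} (hf : Primrec f) (hg : Primrec g) :
    Primrec fun a => f a % g a := Primrec.nat_mod.comp hf hg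
@[fun_prop] theorem fp_cons {f : α → β} {g : α → List β} (hf : Primrec f) (hg : Primrec g) :
    Primrec fun a => f a :: g a := Primrec.list_cons.comp hf hg
@[fun_prop] theorem fp_append {f g : α → List β} (hf : Primrec f) (hg : Primrec g) :
    Primrec fun a => f a ++ g a := Primrec.list_append.comp hf hg
@[fun_prop] theorem fp_length {f : α → List β} (hf : Primrec f) :
    Primrec fun a => (f a).length := Primrec.list_length.comp hf
@[fun_prop] theorem fp_range {f : α → ℕ} (hf : Primrec f) :
    Primrec fun a => List.range (f a) := Primrec.list_range.comp hf
@[fun_prop] theorem fp_getD {f : α → List β} {g : α → ℕ} (d : β) (hf : Primrec f)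
    (hg : Primrec g) : Primrec fun a => (f a).getD (g a) d := (Primrec.list_getD d).comp hf hg
@[fun_prop] theorem fp_map {f : α → List β} {g : α → β → γ} (hf : Primrec f)
    (hg : Primrec fun x : α × β => g x.1 x.2) : Primrec fun a => (f a).map (g a) :=
  Primrec.list_map hf hg
@[fun_prop] theorem fp_flatMap {f : α → List β} {g : α → β → List γ} (hf : Primrec f)
    (hg : Primrec fun x : α × β => g x.1 x.2) : Primrec fun a => (f a).flatMap (g a) :=
  Primrec.list_flatMap hf hg
@[fun_prop] theorem fp_foldr {f : α → List β} {g : α → γ} {h : α → β → γ → γ} (hf : Primrec f)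
    (hg : Primrec g) (hh : Primrec fun x : α × (β × γ) => h x.1 x.2.1 x.2.2) :
    Primrec fun a => (f a).foldr (h a) (g a) :=
  (Primrec.list_foldr (h := fun a x => h a x.1 x.2) hf hg hh).of_eq fun _ => rfl
@[fun_prop] theorem fp_ofNat {α β : Type*} [Primcodable α] [Denumerable β] {f : α → ℕ}
    (hf : Primrec f) : Primrec fun a => Denumerable.ofNat β (f a) := (Primrec.ofNat β).comp hf
@[fun_prop] theorem fp_encode {f : α → β} (hf : Primrec f) :
    Primrec fun a => Encodable.encode (f a) := Primrec.encode.comp hf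

theorem fp_ite {c : α → Prop} [DecidablePred c] {f g : α → β} (hc : PrimrecPred c)
    (hf : Primrec f) (hg : Primrec g) : Primrec fun a => if c a then f a else g a :=
  Primrec.ite hc hf hg
attribute [fun_prop] fp_ite

@[fun_prop] theorem fp_eq {f g : α → β} (hf : Primrec f) (hg : Primrec g) :
    PrimrecPred fun a => f a = g a := Primrec.eq.comp hf hg
@[fun_prop] theorem fp_lt {f g : α → ℕ} (hf : Primrec f) (hg : Primrec g) :
    PrimrecPred fun a => f a < g a := Primrec.nat_lt.comp hf hg
@[fun_prop] theorem fp_le {f g : α → ℕ} (hf : Primrec f) (hg : Primrec g) :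
    PrimrecPred fun a => f a ≤ g a := Primrec.nat_le.comp hf hg
@[fun_prop] theorem fp_and {p q : α → Prop} (hp : PrimrecPred p) (hq : PrimrecPred q) :
    PrimrecPred fun a => p a ∧ q a := hp.and hq
@[fun_prop] theorem fp_or {p q : α → Prop} (hp : PrimrecPred p) (hq : PrimrecPred q) :
    PrimrecPred fun a => p a ∨ q a := hp.or hq
@[fun_prop] theorem fp_not {p : α → Prop} (hp : PrimrecPred p) :
    PrimrecPred fun a => ¬ p a := hp.not
@[fun_prop] theorem fp_mem {f : α → β} {g : α → List β} (hf : Primrec f) (hg : Primrec g) :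
    PrimrecPred fun a => f a ∈ g a := prim_mem.comp (hf.pair hg)
@[fun_prop] theorem fp_filter {f : α → List β} {p : α → β → Prop} [∀ a, DecidablePred (p a)]
    (hf : Primrec f) (hp : PrimrecPred fun x : α × β => p x.1 x.2) :
    Primrec fun a => (f a).filter (fun b => p a b) := by
  have h : Primrec fun a => (f a).flatMap fun b => if p a b then [b] else [] := by
    refine fp_flatMap hf ?_
    exact fp_ite hp (by fun_prop) (by fun_prop)
  refine h.of_eq fun a => ?_
  induction f a with
  | nil => rfl
  | cons b l ih =>
    rw [List.flatMap_cons, ih, List.filter_cons]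
    split_ifs <;> simp_all

end Prim

/-! ### Codes of ring terms -/

/-- The code of an atom. -/
def atom (m : ℕ) : ℕ := Nat.pair 0 m
/-- The code of a sum. -/
def addc (a b : ℕ) : ℕ := Nat.pair 1 (Nat.pair a b)
/-- The code of a product. -/
def mulc (a b : ℕ) : ℕ := Nat.pair 2 (Nat.pair a b)
/-- The code of `-1`. -/
def negc : ℕ := Nat.pair 3 0
/-- The code of a natural number. -/
def numc (k : ℕ) : ℕ := Nat.pair 4 k
/-- The code of the indeterminate `x` of `ℚ[x]`. -/
def xc : ℕ := Nat.pair 5 0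
/-- The code of `1 / (k + 1)`. -/
def invc (k : ℕ) : ℕ := Nat.pair 6 k

section PrimCodes
variable {α : Type*} [Primcodable α]
@[fun_prop] theorem fp_atom {f : α → ℕ} (hf : Primrec f) : Primrec fun a => atom (f a) := by
  unfold atom; fun_prop
@[fun_prop] theorem fp_addc {f g : α → ℕ} (hf : Primrec f) (hg : Primrec g) :
    Primrec fun a => addc (f a) (g a) := by unfold addc; fun_prop
@[fun_prop] theorem fp_mulc {f g : α → ℕ} (hf : Primrec f) (hg : Primrec g) :
    Primrec fun a => mulc (f a) (g a) := by unfold mulc; fun_prop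
@[fun_prop] theorem fp_numc {f : α → ℕ} (hf : Primrec f) : Primrec fun a => numc (f a) := by
  unfold numc; fun_prop
@[fun_prop] theorem fp_invc {f : α → ℕ} (hf : Primrec f) : Primrec fun a => invc (f a) := by
  unfold invc; fun_prop
end PrimCodes

theorem snd_lt_of_fst_pos {n : ℕ} (h : n.unpair.1 ≠ 0) : n.unpair.2 < n := by
  conv_rhs => rw [← Nat.pair_unpair n]
  have := Nat.add_le_pair n.unpair.1 n.unpair.2
  omega

theorem fold_dec1 {n : ℕ} (h : n.unpair.1 ≠ 0) : n.unpair.2.unpair.1 < n :=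
  (Nat.unpair_left_le _).trans_lt (snd_lt_of_fst_pos h)

theorem fold_dec2 {n : ℕ} (h : n.unpair.1 ≠ 0) : n.unpair.2.unpair.2 < n :=
  (Nat.unpair_right_le _).trans_lt (snd_lt_of_fst_pos h)

/-- Recursion over codes: atoms, the remaining leaves, sums and products. -/
def fold {σ : Type*} (A L : ℕ → σ) (p q : σ → σ → σ) (n : ℕ) : σ :=
  if _h0 : n.unpair.1 = 0 then A n.unpair.2
  else if n.unpair.1 = 1 then
    p (fold A L p q n.unpair.2.unpair.1) (fold A L p q n.unpair.2.unpair.2)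
  else if n.unpair.1 = 2 then
    q (fold A L p q n.unpair.2.unpair.1) (fold A L p q n.unpair.2.unpair.2)
  else L n
termination_by n
decreasing_by
  all_goals first | exact fold_dec1 (by assumption) | exact fold_dec2 (by assumption)

section Fold

variable {σ : Type*} (A L : ℕ → σ) (p q : σ → σ → σ)

theorem fold_atom (m : ℕ) : fold A L p q (atom m) = A m := by
  rw [fold]; simp [atom]
theorem fold_addc (a b : ℕ) :
    fold A L p q (addc a b) = p (fold A L p q a) (fold A L p q b) := by
  rw [fold]; simp [addc]
theorem fold_mulc (a b : ℕ) :
    fold A L p q (mulc a b) = q (fold A L p q a) (fold A L p q b) := by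
  rw [fold]; simp [mulc]
theorem fold_leaf {t : ℕ} (ht : 3 ≤ t) (m : ℕ) :
    fold A L p q (Nat.pair t m) = L (Nat.pair t m) := by
  rw [fold]
  simp only [Nat.unpair_pair]
  rw [dif_neg (by omega), if_neg (by omega), if_neg (by omega)]

end Fold

theorem code_ind {P : ℕ → Prop} (hA : ∀ m, P (atom m))
    (hp : ∀ a b, P a → P b → P (addc a b)) (hq : ∀ a b, P a → P b → P (mulc a b))
    (hL : ∀ t m, 3 ≤ t → P (Nat.pair t m)) : ∀ n, P n := by
  intro n
  induction n using Nat.strong_induction_on with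
  | _ n ih =>
    by_cases h0 : n.unpair.1 = 0
    · have := hA n.unpair.2
      rwa [atom, ← h0, Nat.pair_unpair] at this
    have h1 := ih _ (fold_dec1 h0)
    have h2 := ih _ (fold_dec2 h0)
    by_cases h3 : n.unpair.1 = 1
    · have := hp _ _ h1 h2
      rwa [addc, Nat.pair_unpair, ← h3, Nat.pair_unpair] at this
    by_cases h4 : n.unpair.1 = 2
    · have := hq _ _ h1 h2
      rwa [mulc, Nat.pair_unpair, ← h4, Nat.pair_unpair] at this
    · have := hL n.unpair.1 n.unpair.2 (by omega)
      rwa [Nat.pair_unpair] at this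

theorem prim_fold {α σ : Type*} [Primcodable α] [Primcodable σ] {A L : α → ℕ → σ}
    {p q : α → σ → σ → σ} (hA : Primrec fun x : α × ℕ => A x.1 x.2)
    (hL : Primrec fun x : α × ℕ => L x.1 x.2)
    (hp : Primrec fun x : α × (σ × σ) => p x.1 x.2.1 x.2.2)
    (hq : Primrec fun x : α × (σ × σ) => q x.1 x.2.1 x.2.2) :
    Primrec fun x : α × ℕ => fold (A x.1) (L x.1) (p x.1) (q x.1) x.2 := by
  let z : α → σ := fun a => A a 0
  have hz : Primrec z := by fun_prop
  refine Primrec.nat_strong_rec (fun (a : α) (n : ℕ) => fold (A a) (L a) (p a) (q a) n)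
    (g := fun a l => some (
      if l.length.unpair.1 = 0 then A a l.length.unpair.2
      else if l.length.unpair.1 = 1 then
        p a ((l[l.length.unpair.2.unpair.1]?).getD (z a))
          ((l[l.length.unpair.2.unpair.2]?).getD (z a))
      else if l.length.unpair.1 = 2 then
        q a ((l[l.length.unpair.2.unpair.1]?).getD (z a))
          ((l[l.length.unpair.2.unpair.2]?).getD (z a))
      else L a l.length)) ?_ ?_
  · have hg : ∀ f : List σ → ℕ, Primrec f →
        Primrec fun x : α × List σ => (x.2[f x.2]?).getD (z x.1) := by
      intro f hf
      exact Primrec.option_getD.comp (Primrec.list_getElem?.comp Primrec.snd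
        (hf.comp Primrec.snd)) (hz.comp Primrec.fst)
    have h1 := hg (fun l => l.length.unpair.2.unpair.1) (by fun_prop)
    have h2 := hg (fun l => l.length.unpair.2.unpair.2) (by fun_prop)
    have h3 := fp_comp hp (fp_pair (Primrec.fst (α := α) (β := List σ)) (fp_pair h1 h2))
    have h4 := fp_comp hq (fp_pair (Primrec.fst (α := α) (β := List σ)) (fp_pair h1 h2))
    refine Primrec.option_some.comp ?_
    exact fp_ite (by fun_prop) (by fun_prop) (fp_ite (by fun_prop) h3
      (fp_ite (by fun_prop) h4 (by fun_prop)))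
  · intro a n
    simp only [List.length_map, List.length_range, Option.some.injEq]
    conv_rhs => rw [fold]
    by_cases h0 : n.unpair.1 = 0
    · rw [if_pos h0, dif_pos h0]
    · rw [if_neg h0, dif_neg h0]
      have h1 := fold_dec1 h0
      have h2 := fold_dec2 h0
      simp [List.getElem?_range h1, List.getElem?_range h2]

/-- The value of a leaf of a code. -/
noncomputable def lv (R : Type*) [CommRing R] [Algebra ℚ[X] R] (n : ℕ) : R :=
  if n.unpair.1 = 3 then -1
  else if n.unpair.1 = 4 then (n.unpair.2 : R)
  else if n.unpair.1 = 5 then algebraMap ℚ[X] R X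
  else algebraMap ℚ[X] R (C ((n.unpair.2 + 1 : ℚ)⁻¹))

/-- The value of a code in a `ℚ[x]`-algebra, given the values of the atoms. -/
noncomputable def ev {R : Type*} [CommRing R] [Algebra ℚ[X] R] (env : ℕ → R) (n : ℕ) : R :=
  fold env (lv R) (· + ·) (· * ·) n

/-- Substitution of codes for the atoms of a code. -/
def bind (h : ℕ → ℕ) (n : ℕ) : ℕ := fold h id addc mulc n

theorem bind_atom (h : ℕ → ℕ) (m : ℕ) : bind h (atom m) = h m := fold_atom ..
theorem bind_addc (h : ℕ → ℕ) (a b : ℕ) : bind h (addc a b) = addc (bind h a) (bind h b) :=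
  fold_addc ..
theorem bind_mulc (h : ℕ → ℕ) (a b : ℕ) : bind h (mulc a b) = mulc (bind h a) (bind h b) :=
  fold_mulc ..
theorem bind_leaf (h : ℕ → ℕ) {t : ℕ} (ht : 3 ≤ t) (m : ℕ) :
    bind h (Nat.pair t m) = Nat.pair t m := fold_leaf _ _ _ _ ht _

@[fun_prop] theorem fp_bind {α : Type*} [Primcodable α] {h : α → ℕ → ℕ} {f : α → ℕ}
    (hh : Primrec fun x : α × ℕ => h x.1 x.2) (hf : Primrec f) :
    Primrec fun a => bind (h a) (f a) := by
  have := prim_fold (σ := ℕ) (A := h) (L := fun _ => id) (p := fun _ => addc)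
    (q := fun _ => mulc) hh Primrec.snd (by fun_prop) (by fun_prop)
  exact this.comp (Primrec.id.pair hf)

section Ev

variable {R : Type*} [CommRing R] [Algebra ℚ[X] R] (env : ℕ → R)

theorem ev_atom (m : ℕ) : ev env (atom m) = env m := fold_atom ..
theorem ev_addc (a b : ℕ) : ev env (addc a b) = ev env a + ev env b := fold_addc ..
theorem ev_mulc (a b : ℕ) : ev env (mulc a b) = ev env a * ev env b := fold_mulc ..
theorem ev_leaf {t : ℕ} (ht : 3 ≤ t) (m : ℕ) : ev env (Nat.pair t m) = lv R (Nat.pair t m) :=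
  fold_leaf _ _ _ _ ht _
theorem ev_negc : ev env negc = -1 := by rw [negc, ev_leaf _ (by norm_num)]; simp [lv]
theorem ev_numc (k : ℕ) : ev env (numc k) = k := by rw [numc, ev_leaf _ (by norm_num)]; simp [lv]
theorem ev_xc : ev env xc = algebraMap ℚ[X] R X := by
  rw [xc, ev_leaf _ (by norm_num)]; simp [lv]
theorem ev_invc (k : ℕ) : ev env (invc k) = algebraMap ℚ[X] R (C ((k + 1 : ℚ)⁻¹)) := by
  rw [invc, ev_leaf _ (by norm_num)]; simp [lv]

theorem ev_bind (h : ℕ → ℕ) : ∀ n, ev env (bind h n) = ev (fun m => ev env (h m)) n := by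
  apply code_ind
  · intro m; rw [bind_atom, ev_atom]
  · intro a b ha hb; rw [bind_addc, ev_addc, ev_addc, ha, hb]
  · intro a b ha hb; rw [bind_mulc, ev_mulc, ev_mulc, ha, hb]
  · intro t m ht; rw [bind_leaf _ ht, ev_leaf _ ht, ev_leaf _ ht]

theorem bind_bind (h g : ℕ → ℕ) : ∀ n, bind h (bind g n) = bind (fun m => bind h (g m)) n := by
  apply code_ind
  · intro m; rw [bind_atom, bind_atom]
  · intro a b ha hb; rw [bind_addc, bind_addc, bind_addc, ha, hb]
  · intro a b ha hb; rw [bind_mulc, bind_mulc, bind_mulc, ha, hb]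
  · intro t m ht; rw [bind_leaf _ ht, bind_leaf _ ht, bind_leaf _ ht]

theorem map_ev {S : Type*} [CommRing S] [Algebra ℚ[X] S] (φ : R →ₐ[ℚ[X]] S) :
    ∀ n, φ (ev env n) = ev (fun m => φ (env m)) n := by
  apply code_ind
  · intro m; rw [ev_atom, ev_atom]
  · intro a b ha hb; rw [ev_addc, ev_addc, map_add, ha, hb]
  · intro a b ha hb; rw [ev_mulc, ev_mulc, map_mul, ha, hb]
  · intro t m ht
    rw [ev_leaf _ ht, ev_leaf _ ht]
    unfold lv
    split_ifs <;> simp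

end Ev

/-- Every polynomial is the value of a code. -/
theorem exists_code {τ : Type*} (g : τ → ℕ) (p : MvPolynomial τ ℚ[X]) :
    ∃ n, ∀ {R : Type} [CommRing R] [Algebra ℚ[X] R] (env : ℕ → R),
      ev env n = MvPolynomial.aeval (fun t => env (g t)) p := by
  induction p using MvPolynomial.induction_on with
  | C c =>
    simp only [MvPolynomial.aeval_C]
    induction c using Polynomial.induction_on' with
    | add p q hp hq =>
      obtain ⟨a, ha⟩ := hp
      obtain ⟨b, hb⟩ := hq
      exact ⟨addc a b, fun env => by rw [ev_addc, ha, hb, map_add]⟩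
    | monomial k c =>
      have hx : ∃ n, ∀ {R : Type} [CommRing R] [Algebra ℚ[X] R] (env : ℕ → R),
          ev env n = algebraMap ℚ[X] R (X ^ k) := by
        induction k with
        | zero => exact ⟨numc 1, fun env => by rw [ev_numc]; simp⟩
        | succ k ih =>
          obtain ⟨n, hn⟩ := ih
          exact ⟨mulc n xc, fun env => by rw [ev_mulc, hn, ev_xc, pow_succ, map_mul]⟩
      have hz : ∀ z : ℤ, ∃ n, ∀ {R : Type} [CommRing R] [Algebra ℚ[X] R] (env : ℕ → R),
          ev env n = (z : R) := by
        intro z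
        obtain ⟨k, rfl | rfl⟩ := Int.eq_nat_or_neg z
        · exact ⟨numc k, fun env => by rw [ev_numc]; simp⟩
        · exact ⟨mulc negc (numc k), fun env => by rw [ev_mulc, ev_negc, ev_numc]; simp⟩
      obtain ⟨n, hn⟩ := hx
      obtain ⟨m, hm⟩ := hz c.num
      refine ⟨mulc (mulc m (invc (c.den - 1))) n, fun {R} _ _ env => ?_⟩
      rw [ev_mulc, ev_mulc, hm, hn, ev_invc, ← C_mul_X_pow_eq_monomial, map_mul]
      congr 1
      have h1 : ((c.den - 1 : ℕ) + 1 : ℚ) = c.den := by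
        have := c.den_pos
        exact_mod_cast (by omega : c.den - 1 + 1 = c.den)
      rw [h1]
      conv_rhs => rw [← Rat.num_div_den c]
      rw [div_eq_mul_inv, C_mul, map_mul]
      congr 1
      simp
  | add p q hp hq =>
    obtain ⟨a, ha⟩ := hp
    obtain ⟨b, hb⟩ := hq
    exact ⟨addc a b, fun env => by rw [ev_addc, ha, hb, map_add]⟩
  | mul_X p i hp =>
    obtain ⟨a, ha⟩ := hp
    exact ⟨mulc a (atom (g i)), fun env => by
      rw [ev_mulc, ha, ev_atom, map_mul, MvPolynomial.aeval_X]⟩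

/-! ### Provable equality of ring terms -/

/-- The code of `(x - ξ) * s + 1`. -/
def dl (ξ s : ℕ) : ℕ := addc (mulc (addc xc (mulc negc (numc ξ))) s) (numc 1)

/-- The standard code with the same value as a given leaf. -/
def canon (n : ℕ) : ℕ :=
  if n.unpair.1 = 3 then negc else if n.unpair.1 = 4 then n
  else if n.unpair.1 = 5 then xc else invc n.unpair.2

/-- Equational rules: the axioms of commutative rings and of the constants, the hypotheses
`l ≈ 0` for `l ∈ H`, and cancellation of factors of the form `(x - ξ) * s + 1`. -/
def rules (H : List ℕ) (x y z : ℕ) : List (List (ℕ × ℕ) × (ℕ × ℕ)) :=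
  [([], (x, x)),
   ([(x, y), (x, z)], (y, z)),
   ([(x, y)], (addc x z, addc y z)),
   ([(x, y)], (mulc x z, mulc y z)),
   ([], (addc x y, addc y x)),
   ([], (addc (addc x y) z, addc x (addc y z))),
   ([], (mulc x y, mulc y x)),
   ([], (mulc (mulc x y) z, mulc x (mulc y z))),
   ([], (mulc x (addc y z), addc (mulc x y) (mulc x z))),
   ([], (addc (numc 0) x, x)),
   ([], (mulc (numc 1) x, x)),
   ([], (mulc (numc 0) x, numc 0)),
   ([], (addc negc (numc 1), numc 0)),
   ([], (numc (x + 1), addc (numc x) (numc 1))),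
   ([], (mulc (numc (x + 1)) (invc x), numc 1)),
   ([], (Nat.pair (x + 3) y, canon (Nat.pair (x + 3) y))),
   ([], (H.getD x (numc 0), numc 0)),
   ([(mulc (dl x y) z, numc 0)], (z, numc 0))]

/-- Provable equality of codes from the hypotheses `l ≈ 0`, `l ∈ H`. -/
def EqN (H : List ℕ) (a b : ℕ) : Prop :=
  Clos (fun ps c => ∃ w : ℕ × ℕ × ℕ, (ps, c) ∈ rules H w.1 w.2.1 w.2.2) (a, b)

theorem SD_EqN : SD fun x : List ℕ × (ℕ × ℕ) => EqN x.1 x.2.1 x.2.2 := by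
  refine SD.clos (γ := List ℕ) (α := ℕ × ℕ)
    (R := fun H ps c => ∃ w : ℕ × ℕ × ℕ, (ps, c) ∈ rules H w.1 w.2.1 w.2.2) ?_
  refine SD.ex (p := fun (x : List ℕ × List (ℕ × ℕ) × (ℕ × ℕ)) (w : ℕ × ℕ × ℕ) =>
    (x.2.1, x.2.2) ∈ rules x.1 w.1 w.2.1 w.2.2) (SD.of_prim ?_)
  unfold rules dl canon
  fun_prop

section Rules

variable {H : List ℕ}

theorem EqN.rule {a b : ℕ} (x y z : ℕ) (ps : List (ℕ × ℕ)) (h : (ps, (a, b)) ∈ rules H x y z)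
    (hp : ∀ p ∈ ps, EqN H p.1 p.2) : EqN H a b :=
  Clos.mk ps (a, b) ⟨(x, y, z), h⟩ hp

theorem EqN.refl (a : ℕ) : EqN H a a := .rule a 0 0 [] (by simp [rules]) (by simp)
theorem EqN.euclid {a b c : ℕ} (h1 : EqN H a b) (h2 : EqN H a c) : EqN H b c :=
  .rule a b c [(a, b), (a, c)] (by simp [rules]) (by simpa using ⟨h1, h2⟩)
theorem EqN.symm {a b : ℕ} (h : EqN H a b) : EqN H b a := h.euclid (.refl a)
theorem EqN.trans {a b c : ℕ} (h1 : EqN H a b) (h2 : EqN H b c) : EqN H a c :=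
  h1.symm.euclid h2
theorem EqN.addr {a b : ℕ} (c : ℕ) (h : EqN H a b) : EqN H (addc a c) (addc b c) :=
  .rule a b c [(a, b)] (by simp [rules]) (by simpa using h)
theorem EqN.mulr {a b : ℕ} (c : ℕ) (h : EqN H a b) : EqN H (mulc a c) (mulc b c) :=
  .rule a b c [(a, b)] (by simp [rules]) (by simpa using h)
theorem EqN.ac (a b : ℕ) : EqN H (addc a b) (addc b a) :=
  .rule a b 0 [] (by simp [rules]) (by simp)
theorem EqN.mc (a b : ℕ) : EqN H (mulc a b) (mulc b a) :=
  .rule a b 0 [] (by simp [rules]) (by simp)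
theorem EqN.add {a b c d : ℕ} (h : EqN H a b) (h' : EqN H c d) : EqN H (addc a c) (addc b d) :=
  (h.addr c).trans ((EqN.ac b c).trans ((h'.addr b).trans (.ac d b)))
theorem EqN.mul {a b c d : ℕ} (h : EqN H a b) (h' : EqN H c d) : EqN H (mulc a c) (mulc b d) :=
  (h.mulr c).trans ((EqN.mc b c).trans ((h'.mulr b).trans (.mc d b)))

end Rules

/-- Provable equality is sound for valuations in `ℚ[x]` satisfying the hypotheses. -/
theorem EqN.sound {H : List ℕ} {env : ℕ → ℚ[X]} (hH : ∀ l ∈ H, ev env l = 0) {a b : ℕ}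
    (h : EqN H a b) : ev env a = ev env b := by
  have key : ∀ c : ℕ × ℕ, Clos (fun ps c => ∃ w : ℕ × ℕ × ℕ,
      (ps, c) ∈ rules H w.1 w.2.1 w.2.2) c → ev env c.1 = ev env c.2 := by
    intro c hc
    induction hc with
    | mk ps c hR _ ih =>
      obtain ⟨⟨x, y, z⟩, hw⟩ := hR
      simp only [rules, List.mem_cons, Prod.mk.injEq, List.not_mem_nil, or_false] at hw
      rcases hw with ⟨rfl, rfl⟩ | ⟨rfl, rfl⟩ | ⟨rfl, rfl⟩ | ⟨rfl, rfl⟩ | ⟨rfl, rfl⟩ | ⟨rfl, rfl⟩ |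
        ⟨rfl, rfl⟩ | ⟨rfl, rfl⟩ | ⟨rfl, rfl⟩ | ⟨rfl, rfl⟩ | ⟨rfl, rfl⟩ | ⟨rfl, rfl⟩ | ⟨rfl, rfl⟩ |
        ⟨rfl, rfl⟩ | ⟨rfl, rfl⟩ | ⟨rfl, rfl⟩ | ⟨rfl, rfl⟩ | ⟨rfl, rfl⟩
      · rfl
      · exact (ih (x, y) (by simp)).symm.trans (ih (x, z) (by simp))
      · simpa only [ev_addc] using congrArg (· + ev env z) (ih (x, y) (by simp))
      · simpa only [ev_mulc] using congrArg (· * ev env z) (ih (x, y) (by simp))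
      · simp only [ev_addc]; ring
      · simp only [ev_addc]; ring
      · simp only [ev_mulc]; ring
      · simp only [ev_mulc]; ring
      · simp only [ev_mulc, ev_addc]; ring
      · simp only [ev_addc, ev_numc]; simp
      · simp only [ev_mulc, ev_numc]; simp
      · simp only [ev_mulc, ev_numc]; simp
      · simp only [ev_addc, ev_negc, ev_numc]; simp
      · simp only [ev_addc, ev_numc]; simp
      · simp only [ev_mulc, ev_numc, ev_invc]
        have h1 : ((x + 1 : ℕ) : ℚ[X]) = C (x + 1 : ℚ) := by simp
        rw [h1, Algebra.algebraMap_self, RingHom.id_apply, ← C_mul,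
          mul_inv_cancel₀ (by positivity)]
        simp
      · rw [ev_leaf _ (by omega)]
        unfold canon
        split_ifs with h1 h2 h3
        · simp only [ev_negc, lv, if_pos h1]
        · rw [ev_leaf _ (by omega)]
        · simp only [ev_xc, lv, if_neg h1, if_neg h2, if_pos h3]
        · simp only [ev_invc, lv, if_neg h1, if_neg h2, if_neg h3]
      · have : ∀ l ∈ H, ev env l = ev env (numc 0) := fun l hl => by rw [hH l hl, ev_numc]; simp
        rw [List.getD_eq_getElem?_getD]
        by_cases hx : x < H.length
        · rw [List.getElem?_eq_getElem hx]
          exact this _ (List.getElem_mem hx)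
        · rw [List.getElem?_eq_none (by omega)]
          rfl
      · have h1 := ih (mulc (dl x y) z, numc 0) (by simp)
        simp only [ev_mulc, dl, ev_addc, ev_numc, ev_xc, ev_negc] at h1
        rw [Nat.cast_zero] at h1
        rw [ev_numc, Nat.cast_zero]
        rcases mul_eq_zero.1 h1 with h2 | h2
        · have := congrArg (Polynomial.eval (x : ℚ)) h2
          simp at this
        · exact h2
  exact key _ h

/-- Provable equality as an equivalence relation. -/
def eqSetoid (H : List ℕ) : Setoid ℕ :=
  ⟨EqN H, EqN.refl, EqN.symm, EqN.trans⟩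

/-- The ring of codes modulo provable equality. -/
def QH (H : List ℕ) : Type := Quotient (eqSetoid H)

section Quot

variable {H : List ℕ}

/-- The class of a code. -/
def qm (H : List ℕ) (n : ℕ) : QH H := Quotient.mk (eqSetoid H) n

theorem qm_eq {a b : ℕ} : qm H a = qm H b ↔ EqN H a b :=
  ⟨fun h => Quotient.exact h, fun h => Quotient.sound h⟩

theorem qm_surj (a : QH H) : ∃ n, qm H n = a := Quotient.exists_rep a

instance : Add (QH H) := ⟨Quotient.map₂ addc (fun _ _ h _ _ h' => EqN.add h h')⟩
instance : Mul (QH H) := ⟨Quotient.map₂ mulc (fun _ _ h _ _ h' => EqN.mul h h')⟩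
instance : Zero (QH H) := ⟨qm H (numc 0)⟩
instance : One (QH H) := ⟨qm H (numc 1)⟩
instance : Neg (QH H) := ⟨Quotient.map (mulc negc) (fun _ _ h => EqN.mul (.refl _) h)⟩

noncomputable instance : CommRing (QH H) where
  natCast k := qm H (numc k)
  natCast_zero := rfl
  natCast_succ k := qm_eq.2 (.rule k 0 0 [] (by simp [rules]) (by simp))
  nsmul := nsmulRec
  zsmul := zsmulRec
  add_assoc := by
    rintro ⟨a⟩ ⟨b⟩ ⟨c⟩
    exact qm_eq.2 (.rule a b c [] (by simp [rules]) (by simp))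
  zero_add := by
    rintro ⟨a⟩
    exact qm_eq.2 (.rule a 0 0 [] (by simp [rules]) (by simp))
  add_zero := by
    rintro ⟨a⟩
    exact qm_eq.2 ((EqN.ac _ _).trans (.rule a 0 0 [] (by simp [rules]) (by simp)))
  add_comm := by
    rintro ⟨a⟩ ⟨b⟩
    exact qm_eq.2 (.ac a b)
  mul_assoc := by
    rintro ⟨a⟩ ⟨b⟩ ⟨c⟩
    exact qm_eq.2 (.rule a b c [] (by simp [rules]) (by simp))
  mul_comm := by
    rintro ⟨a⟩ ⟨b⟩
    exact qm_eq.2 (.mc a b)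
  one_mul := by
    rintro ⟨a⟩
    exact qm_eq.2 (.rule a 0 0 [] (by simp [rules]) (by simp))
  mul_one := by
    rintro ⟨a⟩
    exact qm_eq.2 ((EqN.mc _ _).trans (.rule a 0 0 [] (by simp [rules]) (by simp)))
  zero_mul := by
    rintro ⟨a⟩
    exact qm_eq.2 (.rule a 0 0 [] (by simp [rules]) (by simp))
  mul_zero := by
    rintro ⟨a⟩
    exact qm_eq.2 ((EqN.mc _ _).trans (.rule a 0 0 [] (by simp [rules]) (by simp)))
  left_distrib := by
    rintro ⟨a⟩ ⟨b⟩ ⟨c⟩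
    exact qm_eq.2 (.rule a b c [] (by simp [rules]) (by simp))
  right_distrib := by
    rintro ⟨a⟩ ⟨b⟩ ⟨c⟩
    exact qm_eq.2 ((EqN.mc _ _).trans ((EqN.rule c a b [] (by simp [rules]) (by simp)).trans
      (EqN.add (.mc _ _) (.mc _ _))))
  neg_add_cancel := by
    rintro ⟨a⟩
    refine (qm_eq (b := numc 0) (a := addc (mulc negc a) a)).2 ?_
    have h1 : EqN H (addc (mulc negc a) a) (addc (mulc a negc) (mulc a (numc 1))) :=
      EqN.add (.mc _ _) (.symm ((EqN.mc _ _).trans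
        (.rule a 0 0 [] (by simp [rules]) (by simp))))
    have h2 : EqN H (mulc a (addc negc (numc 1))) (addc (mulc a negc) (mulc a (numc 1))) :=
      .rule a negc (numc 1) [] (by simp [rules]) (by simp)
    have h3 : EqN H (addc negc (numc 1)) (numc 0) := .rule 0 0 0 [] (by simp [rules]) (by simp)
    have h4 : EqN H (mulc (numc 0) a) (numc 0) := .rule a 0 0 [] (by simp [rules]) (by simp)
    exact h1.trans (h2.symm.trans ((EqN.mc _ _).trans ((h3.mulr a).trans h4)))

theorem qm_add (a b : ℕ) : qm H (addc a b) = qm H a + qm H b := rfl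
theorem qm_mul (a b : ℕ) : qm H (mulc a b) = qm H a * qm H b := rfl
theorem qm_num (k : ℕ) : qm H (numc k) = (k : QH H) := rfl
theorem qm_neg : qm H negc = -1 := by
  rw [eq_neg_iff_add_eq_zero]
  exact qm_eq.2 (.rule 0 0 0 [] (by simp [rules]) (by simp))

theorem qm_inv (k : ℕ) : ((k : QH H) + 1) * qm H (invc k) = 1 := by
  have : ((k + 1 : ℕ) : QH H) * qm H (invc k) = 1 :=
    qm_eq.2 (.rule k 0 0 [] (by simp [rules]) (by simp))
  rwa [Nat.cast_succ] at this

theorem qm_hyp {l : ℕ} (hl : l ∈ H) : qm H l = 0 := by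
  obtain ⟨i, hi, rfl⟩ := List.getElem_of_mem hl
  refine (qm_eq (b := numc 0)).2 (.rule i 0 0 [] ?_ (by simp))
  have : H[i] = H.getD i (numc 0) := by simp [hi]
  rw [this]
  simp [rules]

/-- The embedding of the rationals in the ring of codes. -/
noncomputable def ratHom (H : List ℕ) : ℚ →+* QH H :=
  IsLocalization.lift (M := nonZeroDivisors ℤ) (g := Int.castRingHom (QH H)) (by
    rintro ⟨z, hz⟩
    have hz0 := nonZeroDivisors.ne_zero hz
    obtain ⟨k, hk⟩ := Nat.exists_eq_succ_of_ne_zero (Int.natAbs_ne_zero.2 hz0)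
    have hu : IsUnit ((z.natAbs : ℤ) : QH H) := by
      rw [hk]
      push_cast
      exact IsUnit.of_mul_eq_one _ (qm_inv k)
    rcases Int.natAbs_eq z with h | h
    · change IsUnit ((z : ℤ) : QH H)
      rw [h]
      exact hu
    · change IsUnit ((z : ℤ) : QH H)
      rw [h, Int.cast_neg]
      exact hu.neg)

noncomputable instance : Algebra ℚ[X] (QH H) :=
  (Polynomial.eval₂RingHom (ratHom H) (qm H xc)).toAlgebra

theorem algebraMap_X : algebraMap ℚ[X] (QH H) X = qm H xc := by
  change Polynomial.eval₂RingHom (ratHom H) (qm H xc) X = _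
  simp

theorem algebraMap_inv (k : ℕ) : algebraMap ℚ[X] (QH H) (C ((k + 1 : ℚ)⁻¹)) = qm H (invc k) := by
  change Polynomial.eval₂RingHom (ratHom H) (qm H xc) _ = _
  rw [coe_eval₂RingHom, eval₂_C]
  have h1 : ((k : QH H) + 1) * ratHom H ((k + 1 : ℚ)⁻¹) = 1 := by
    have : ratHom H (k + 1 : ℚ) = (k : QH H) + 1 := by simp
    rw [← this, ← map_mul, mul_inv_cancel₀ (by positivity), map_one]
  have h2 := qm_inv (H := H) k
  calc ratHom H ((k + 1 : ℚ)⁻¹) = ratHom H ((k + 1 : ℚ)⁻¹) * (((k : QH H) + 1) * qm H (invc k)) := by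
        rw [h2, mul_one]
    _ = (((k : QH H) + 1) * ratHom H ((k + 1 : ℚ)⁻¹)) * qm H (invc k) := by ring
    _ = _ := by rw [h1, one_mul]

/-- In the ring of codes, evaluation at the classes of codes is substitution of these codes. -/
theorem ev_qm (h : ℕ → ℕ) : ∀ n, ev (fun m => qm H (h m)) n = qm H (bind h n) := by
  apply code_ind
  · intro m; rw [bind_atom, ev_atom]
  · intro a b ha hb; rw [bind_addc, ev_addc, qm_add, ha, hb]
  · intro a b ha hb; rw [bind_mulc, ev_mulc, qm_mul, ha, hb]
  · intro t m ht
    rw [bind_leaf _ ht, ev_leaf _ ht]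
    obtain ⟨t, rfl⟩ := Nat.exists_eq_add_of_le' ht
    have h0 : qm H (Nat.pair (t + 3) m) = qm H (canon (Nat.pair (t + 3) m)) :=
      qm_eq.2 (.rule t m 0 [] (by simp [rules]) (by simp))
    rw [h0]
    unfold canon lv
    split_ifs with h1 h2 h3
    · exact qm_neg.symm
    · simp only [Nat.unpair_pair] at h2 ⊢
      rw [h2]
      exact (qm_num m).symm
    · exact algebraMap_X
    · exact algebraMap_inv _

theorem bind_atom_id : ∀ n, bind atom n = n := by
  apply code_ind
  · intro m; rw [bind_atom]
  · intro a b ha hb; rw [bind_addc, ha, hb]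
  · intro a b ha hb; rw [bind_mulc, ha, hb]
  · intro t m ht; rw [bind_leaf _ ht]

/-- The cancellation rule, in the ring of codes. -/
theorem qm_cancel {ξ s a : ℕ} (h : qm H (dl ξ s) * qm H a = 0) : qm H a = 0 :=
  (qm_eq (b := numc 0)).2 (.rule ξ s a [(mulc (dl ξ s) a, numc 0)] (by simp [rules])
    (by simpa using (qm_eq (b := numc 0) (a := mulc (dl ξ s) a)).1 h))

/-- The code of an element of `ℚ[x]`. -/
theorem exists_code_base (c : ℚ[X]) :
    ∃ n, ∀ {R : Type} [CommRing R] [Algebra ℚ[X] R] (env : ℕ → R),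
      ev env n = algebraMap ℚ[X] R c := by
  obtain ⟨n, hn⟩ := exists_code (τ := Empty) (fun _ => 0) (MvPolynomial.C c)
  exact ⟨n, fun env => by rw [hn, MvPolynomial.aeval_C]⟩

/-- Nonzero polynomials divide some `(x - ξ) * s + 1`: choose `ξ` outside the zeros. -/
theorem exists_dvd_dl {δ : ℚ[X]} (hδ : δ ≠ 0) :
    ∃ (ξ : ℕ) (s m : ℚ[X]), δ * m = (X + -1 * (ξ : ℚ[X])) * s + 1 := by
  obtain ⟨ξ, hξ⟩ : ∃ ξ : ℕ, δ.eval (ξ : ℚ) ≠ 0 := by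
    by_contra! h
    refine hδ (Polynomial.eq_zero_of_infinite_isRoot δ ?_)
    exact (Set.infinite_range_of_injective (Nat.cast_injective (R := ℚ))).mono
      (by rintro _ ⟨k, rfl⟩; exact h k)
  obtain ⟨s, hs⟩ := Polynomial.X_sub_C_dvd_sub_C_eval (a := (ξ : ℚ)) (p := δ)
  refine ⟨ξ, s * C ((δ.eval (ξ : ℚ))⁻¹), C ((δ.eval (ξ : ℚ))⁻¹), ?_⟩
  have h1 : C (δ.eval (ξ : ℚ)) * C ((δ.eval (ξ : ℚ))⁻¹) = 1 := by
    rw [← C_mul, mul_inv_cancel₀ hξ, C_1]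
  have h2 : δ = (X - C (ξ : ℚ)) * s + C (δ.eval (ξ : ℚ)) := by rw [← hs]; ring
  have h3 : (C (ξ : ℚ) : ℚ[X]) = (ξ : ℚ[X]) := by simp
  calc δ * C ((δ.eval (ξ : ℚ))⁻¹)
      = ((X - C (ξ : ℚ)) * s + C (δ.eval (ξ : ℚ))) * C ((δ.eval (ξ : ℚ))⁻¹) := by rw [← h2]
    _ = (X - C (ξ : ℚ)) * s * C ((δ.eval (ξ : ℚ))⁻¹) +
        C (δ.eval (ξ : ℚ)) * C ((δ.eval (ξ : ℚ))⁻¹) := by ring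
    _ = _ := by rw [h1, h3]; ring

/-- Multiplication by a nonzero polynomial is injective in the ring of codes. -/
theorem cancel_base {δ : ℚ[X]} (hδ : δ ≠ 0) {a : QH H}
    (h : algebraMap ℚ[X] (QH H) δ * a = 0) : a = 0 := by
  obtain ⟨ξ, s, m, hm⟩ := exists_dvd_dl hδ
  obtain ⟨n, hn⟩ := exists_code_base s
  obtain ⟨a, rfl⟩ := qm_surj a
  have h1 : qm H (dl ξ n) = algebraMap ℚ[X] (QH H) (δ * m) := by
    rw [hm, ← bind_atom_id n, dl, qm_add, qm_mul, qm_add, qm_mul, qm_neg, ← ev_qm, hn, qm_num,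
      qm_num, ← algebraMap_X]
    simp
  apply qm_cancel (ξ := ξ) (s := n)
  rw [h1, map_mul, mul_comm (algebraMap _ _ δ), mul_assoc, h, mul_zero]

end Quot

/-- A closed code `c` has a nonzero value iff some multiple of it is provably equal to some
`(x - ξ) * s + 1`. -/
theorem ev_ne_zero_iff (c : ℕ) :
    ev (fun _ => (0 : ℚ[X])) c ≠ 0 ↔
      ∃ w : ℕ × ℕ × ℕ, EqN [] (bind (fun _ => numc 0) (mulc c w.1))
        (bind (fun _ => numc 0) (dl w.2.1 w.2.2)) := by
  have hz : (fun _ : ℕ => qm [] (numc 0)) = fun _ => algebraMap ℚ[X] (QH []) 0 := by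
    rw [qm_num]; simp
  have hq : ∀ n, qm [] (bind (fun _ => numc 0) n) =
      algebraMap ℚ[X] (QH []) (ev (fun _ => (0 : ℚ[X])) n) := by
    intro n
    rw [← ev_qm, hz]
    exact (map_ev (fun _ => (0 : ℚ[X])) (Algebra.ofId ℚ[X] (QH [])) n).symm
  constructor
  · intro h
    obtain ⟨ξ, s, m, hm⟩ := exists_dvd_dl h
    obtain ⟨s', hs⟩ := exists_code_base s
    obtain ⟨m', hm'⟩ := exists_code_base m
    refine ⟨(m', ξ, s'), qm_eq.1 ?_⟩
    rw [hq, hq]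
    congr 1
    simp only [dl, ev_mulc, ev_addc, ev_numc, ev_xc, ev_negc, hs, hm', Algebra.algebraMap_self,
      RingHom.id_apply]
    rw [hm]
    simp
  · rintro ⟨⟨m, ξ, s⟩, h⟩ h0
    have h1 := h.sound (env := fun _ => 0) (by simp)
    simp only [ev_bind, ev_mulc, dl, ev_addc, ev_numc, ev_xc, ev_negc] at h1
    have hz : (fun _ : ℕ => ((0 : ℕ) : ℚ[X])) = fun _ => 0 := by simp
    rw [hz, h0, zero_mul] at h1
    have := congrArg (Polynomial.eval (ξ : ℚ)) h1
    simp at this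

/-! ### Polynomials vanishing on products of sets -/

section Vanish

variable {D ι τ : Type} [CommRing D]

/-- The ideal of polynomials vanishing on a set of points. -/
def van (V : Set (τ → D)) : Ideal (MvPolynomial τ D) where
  carrier := {p | ∀ v ∈ V, MvPolynomial.eval v p = 0}
  add_mem' := by
    intro p q hp hq v hv
    rw [map_add, hp v hv, hq v hv, add_zero]
  zero_mem' := by intro v _; exact map_zero _
  smul_mem' := by
    intro c p hp v hv
    rw [smul_eq_mul, map_mul, hp v hv, mul_zero]

theorem mem_van {V : Set (τ → D)} {p : MvPolynomial τ D} :
    p ∈ van V ↔ ∀ v ∈ V, MvPolynomial.eval v p = 0 := Iff.rfl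

/-- The ideal generated by the vanishing ideals of the factors of a product of sets. -/
noncomputable def prodIdeal (V : ι → Set (τ → D)) : Ideal (MvPolynomial (ι × τ) D) :=
  ⨆ i, (van (V i)).map (MvPolynomial.rename (R := D) (Prod.mk i))

/-- The sum of the products `u(Xᵢ) * v` over a list of pairs `(u, v)`. -/
noncomputable def psum (i : ι) (l : List (MvPolynomial τ D × MvPolynomial (ι × τ) D)) :
    MvPolynomial (ι × τ) D :=
  (l.map fun e => MvPolynomial.rename (Prod.mk i) e.1 * e.2).sum

/-- The value of `psum` after evaluation of the `i`-th block of variables at `a`. -/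
noncomputable def pspec (a : τ → D) (l : List (MvPolynomial τ D × MvPolynomial (ι × τ) D)) :
    MvPolynomial (ι × τ) D :=
  (l.map fun e => MvPolynomial.C (MvPolynomial.eval a e.1) * e.2).sum

/-- Independence of the `i`-th block of variables. -/
def FreeOf (i : ι) (v : MvPolynomial (ι × τ) D) : Prop :=
  ∀ ω η : ι × τ → D, (∀ j t, j ≠ i → ω (j, t) = η (j, t)) →
    MvPolynomial.eval ω v = MvPolynomial.eval η v

/-- Every polynomial is separated into the `i`-th block of variables and the others. -/
theorem exists_psum (i : ι) (f : MvPolynomial (ι × τ) D) :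
    ∃ l : List (MvPolynomial τ D × MvPolynomial (ι × τ) D),
      (∀ e ∈ l, FreeOf i e.2) ∧ f = psum i l := by
  induction f using MvPolynomial.induction_on with
  | C c =>
    refine ⟨[(MvPolynomial.C c, 1)], ?_, by simp [psum]⟩
    intro e he ω ω' _
    rw [List.mem_singleton.1 he, map_one, map_one]
  | add p q hp hq =>
    obtain ⟨l, hl, rfl⟩ := hp
    obtain ⟨l', hl', rfl⟩ := hq
    refine ⟨l ++ l', ?_, by simp [psum]⟩
    intro e he
    rcases List.mem_append.1 he with h | h
    · exact hl e h
    · exact hl' e h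
  | mul_X p x hp =>
    obtain ⟨l, hl, rfl⟩ := hp
    obtain ⟨j, t⟩ := x
    by_cases hj : j = i
    · subst hj
      refine ⟨l.map fun e => (e.1 * MvPolynomial.X t, e.2), ?_, ?_⟩
      · intro e he
        obtain ⟨e', he', rfl⟩ := List.mem_map.1 he
        exact hl e' he'
      · unfold psum
        rw [List.map_map, ← List.sum_map_mul_right]
        congr 1
        refine List.map_congr_left fun e _ => ?_
        simp only [Function.comp, map_mul, MvPolynomial.rename_X]
        ring
    · refine ⟨l.map fun e => (e.1, e.2 * MvPolynomial.X (j, t)), ?_, ?_⟩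
      · intro e he
        obtain ⟨e', he', rfl⟩ := List.mem_map.1 he
        intro ω ω' hω
        simp only [map_mul, MvPolynomial.eval_X, hl e' he' ω ω' hω, hω j t hj]
      · unfold psum
        rw [List.map_map, ← List.sum_map_mul_right]
        congr 1
        refine List.map_congr_left fun e _ => ?_
        simp only [Function.comp]
        ring

/-- Elimination step: multiplying by `c` and subtracting a multiple of the specialization at `a`.
With `u` the first component of an entry and `c` its value at `a`, that entry becomes zero. -/
theorem psum_elim (i : ι) (a : τ → D) (u : MvPolynomial τ D) (c : D)
    (l : List (MvPolynomial τ D × MvPolynomial (ι × τ) D)) :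
    psum i (l.map fun e =>
      (MvPolynomial.C c * e.1 - u * MvPolynomial.C (MvPolynomial.eval a e.1), e.2)) =
    MvPolynomial.C c * psum i l - MvPolynomial.rename (Prod.mk i) u * pspec a l := by
  unfold pspec psum
  induction l with
  | nil => simp
  | cons e l ih =>
    simp only [List.map_cons, List.sum_cons, ih, map_sub, map_mul, MvPolynomial.rename_C]
    ring

variable [DecidableEq ι]

/-- The specialization at `a` has the values of the original at points with `i`-th block `a`. -/
theorem eval_pspec (i : ι) (a : τ → D) (ω : ι × τ → D)
    (l : List (MvPolynomial τ D × MvPolynomial (ι × τ) D)) (hl : ∀ e ∈ l, FreeOf i e.2) :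
    MvPolynomial.eval ω (pspec a l) =
      MvPolynomial.eval (fun x => if x.1 = i then a x.2 else ω x) (psum i l) := by
  unfold pspec psum
  induction l with
  | nil => simp
  | cons e l ih =>
    simp only [List.map_cons, List.sum_cons, map_add, map_mul]
    rw [ih fun e he => hl e (by simp [he])]
    congr 2
    · rw [MvPolynomial.eval_C, MvPolynomial.eval_rename]
      have : (fun x : ι × τ => if x.1 = i then a x.2 else ω x) ∘ Prod.mk i = a := by
        funext t
        simp
      rw [this]
    · refine hl e (by simp) _ _ fun j t hj => ?_
      simp [hj]

/-- Over an infinite domain, a polynomial vanishing on a product of sets lies, up to a nonzero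
constant factor, in the ideal generated by the vanishing ideals of the factors. -/
theorem vanish_prod [IsDomain D] [Infinite D] [Fintype ι] (V : ι → Set (τ → D))
    (f : MvPolynomial (ι × τ) D)
    (hf : ∀ ω : ι × τ → D, (∀ i, (fun t => ω (i, t)) ∈ V i) → MvPolynomial.eval ω f = 0) :
    ∃ δ : D, δ ≠ 0 ∧ MvPolynomial.C δ * f ∈ prodIdeal V := by
  -- the blocks in `s` range over the given sets, the remaining ones over all points
  suffices H : ∀ (s : Finset ι) (f : MvPolynomial (ι × τ) D),
      (∀ ω : ι × τ → D, (∀ i ∈ s, (fun t => ω (i, t)) ∈ V i) → MvPolynomial.eval ω f = 0) →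
      ∃ δ : D, δ ≠ 0 ∧ MvPolynomial.C δ * f ∈ prodIdeal V from
    H Finset.univ f fun ω hω => hf ω fun i => hω i (Finset.mem_univ i)
  intro s
  induction s using Finset.induction_on with
  | empty =>
    intro f hf
    have : f = 0 := MvPolynomial.funext fun ω => by rw [hf ω (by simp), map_zero]
    exact ⟨1, one_ne_zero, by rw [this, mul_zero]; exact Ideal.zero_mem _⟩
  | insert i s _ IH =>
    intro f hf
    obtain ⟨l, hl, rfl⟩ := exists_psum i f
    induction hn : l.length generalizing l with
    | zero =>
      rw [List.length_eq_zero_iff] at hn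
      subst hn
      exact ⟨1, one_ne_zero, by simp [psum]⟩
    | succ n ih =>
      obtain _ | ⟨e, l⟩ := l
      · simp at hn
      have hl' : ∀ e ∈ l, FreeOf i e.2 := fun e' he' => hl e' (by simp [he'])
      have hcons : psum i (e :: l) = MvPolynomial.rename (Prod.mk i) e.1 * e.2 + psum i l := by
        simp [psum]
      by_cases hV : e.1 ∈ van (V i)
      · have hmem : MvPolynomial.rename (Prod.mk i) e.1 * e.2 ∈ prodIdeal V :=
          Ideal.mul_mem_right _ _ (le_iSup (fun i => (van (V i)).map
            (MvPolynomial.rename (R := D) (Prod.mk i))) i (Ideal.mem_map_of_mem _ hV))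
        obtain ⟨δ, hδ, h⟩ := ih l hl' (fun ω hω => by
          have h1 := hf ω hω
          rw [hcons, map_add, map_mul, MvPolynomial.eval_rename] at h1
          have h2 := hV _ (hω i (Finset.mem_insert_self i s))
          have h3 : MvPolynomial.eval (ω ∘ Prod.mk i) e.1 = 0 := h2
          rwa [h3, zero_mul, zero_add] at h1) (by simpa using hn)
        exact ⟨δ, hδ, by rw [hcons, mul_add]; exact add_mem (Ideal.mul_mem_left _ _ hmem) h⟩
      · rw [mem_van] at hV
        push Not at hV
        obtain ⟨a, ha, hc⟩ := hV
        set c := MvPolynomial.eval a e.1 with hcdef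
        -- specialising the block `i` at `a` leaves a polynomial vanishing for the blocks in `s`
        have hg : ∀ ω : ι × τ → D, (∀ j ∈ s, (fun t => ω (j, t)) ∈ V j) →
            MvPolynomial.eval ω (pspec a (e :: l)) = 0 := by
          intro ω hω
          rw [eval_pspec i a ω _ hl]
          refine hf _ fun j hj => ?_
          by_cases hji : j = i
          · subst hji
            simpa using ha
          · simpa [hji] using hω j (Finset.mem_of_mem_insert_of_ne hj hji)
        have hspec : pspec a (e :: l) = MvPolynomial.C c * e.2 + pspec a l := by
          simp [pspec, hcdef]
        have hel : MvPolynomial.C c * psum i (e :: l) -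
            MvPolynomial.rename (Prod.mk i) e.1 * pspec a (e :: l) =
            psum i (l.map fun e' => (MvPolynomial.C c * e'.1 -
              e.1 * MvPolynomial.C (MvPolynomial.eval a e'.1), e'.2)) := by
          rw [psum_elim, hcons, hspec]
          ring
        obtain ⟨δ, hδ, h⟩ := IH _ hg
        obtain ⟨δ', hδ', h'⟩ := ih (l.map fun e' => (MvPolynomial.C c * e'.1 -
              e.1 * MvPolynomial.C (MvPolynomial.eval a e'.1), e'.2))
          (by
            intro e' he'
            obtain ⟨e'', he'', rfl⟩ := List.mem_map.1 he'
            exact hl' e'' he'')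
          (by
            intro ω hω
            rw [← hel, map_sub, map_mul, map_mul, hf ω hω,
              hg ω fun j hj => hω j (Finset.mem_insert_of_mem hj)]
            simp)
          (by simpa using hn)
        refine ⟨δ * δ' * c, mul_ne_zero (mul_ne_zero hδ hδ') hc, ?_⟩
        rw [← hel] at h'
        have : MvPolynomial.C (δ * δ' * c) * psum i (e :: l) =
            MvPolynomial.C δ * (MvPolynomial.C δ' * (MvPolynomial.C c * psum i (e :: l) -
              MvPolynomial.rename (Prod.mk i) e.1 * pspec a (e :: l))) +
            MvPolynomial.C δ' * MvPolynomial.rename (Prod.mk i) e.1 *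
              (MvPolynomial.C δ * pspec a (e :: l)) := by
          simp only [map_mul]
          ring
        rw [this]
        exact add_mem (Ideal.mul_mem_left _ _ h') (Ideal.mul_mem_left _ _ h)

end Vanish

/-! ### Polynomial grammars -/

/-- Codes of polynomial grammars over `ℚ[x]`: the number of registers, the rules (head, children,
codes of the register updates), and the tests (nonterminal, code of a term). -/
abbrev Gr : Type := ℕ × List (ℕ × List ℕ × List ℕ) × List (ℕ × ℕ)

/-- The values of the atoms `(i, j)` (register `j` of child `i`) for `k` children with `R`
registers each; other atoms have the value `0`. -/
noncomputable def cenv (R k : ℕ) (ws : ℕ → ℕ → ℚ[X]) (m : ℕ) : ℚ[X] :=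
  if m.unpair.1 < k ∧ m.unpair.2 < R then ws m.unpair.1 m.unpair.2 else 0

/-- The register contents after the application of a rule. -/
noncomputable def upd (R k : ℕ) (us : List ℕ) (ws : ℕ → ℕ → ℚ[X]) (j : ℕ) : ℚ[X] :=
  if j < R then ev (cenv R k ws) (us.getD j (numc 0)) else 0

/-- The register contents derivable from the nonterminals of a grammar. -/
inductive Reach (G : Gr) : ℕ → (ℕ → ℚ[X]) → Prop
  | mk (r : ℕ × List ℕ × List ℕ) (ws : ℕ → ℕ → ℚ[X]) (hr : r ∈ G.2.1)
      (hws : ∀ i, i < r.2.1.length → Reach G (r.2.1.getD i 0) (ws i)) :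
      Reach G r.1 (upd G.1 r.2.1.length r.2.2 ws)

/-- All tests of the grammar evaluate to `0` on all derivable register contents. -/
def Good (G : Gr) : Prop :=
  ∀ p ∈ G.2.2, ∀ w, Reach G p.1 w → ev (cenv G.1 1 fun _ => w) p.2 = 0

/-- Substitution of the register contents `css` of the children, given as closed codes. -/
def genv (R : ℕ) (css : List (List ℕ)) (m : ℕ) : ℕ :=
  if m.unpair.1 < css.length ∧ m.unpair.2 < R then
    (css.getD m.unpair.1 []).getD m.unpair.2 (numc 0) else numc 0

/-- One derivation step on register contents given as closed codes. -/
def DerStep (G : Gr) (ps : List (ℕ × List ℕ)) (c : ℕ × List ℕ) : Prop :=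
  ∃ r ∈ G.2.1, c.1 = r.1 ∧ ps.map Prod.fst = r.2.1 ∧
    c.2 = (List.range G.1).map fun j => bind (genv G.1 (ps.map Prod.snd)) (r.2.2.getD j (numc 0))

/-- The register contents given by a list of closed codes. -/
noncomputable def cval (cs : List ℕ) (j : ℕ) : ℚ[X] := ev (fun _ => 0) (cs.getD j (numc 0))

theorem ev_zeroc (env : ℕ → ℚ[X]) : ev env (numc 0) = 0 := by rw [ev_numc, Nat.cast_zero]

theorem ev_genv (R : ℕ) (css : List (List ℕ)) (n : ℕ) (ws : ℕ → ℕ → ℚ[X])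
    (h : ∀ i < css.length, ∀ j < R, ws i j = cval (css.getD i []) j) :
    ev (fun _ => 0) (bind (genv R css) n) = ev (cenv R css.length ws) n := by
  rw [ev_bind]
  congr 1
  funext m
  unfold genv cenv
  split_ifs with hm
  · rw [h _ hm.1 _ hm.2, cval]
  · exact ev_zeroc _

theorem cval_map_range (R : ℕ) (f : ℕ → ℕ) (j : ℕ) :
    cval ((List.range R).map f) j = if j < R then ev (fun _ => 0) (f j) else 0 := by
  unfold cval
  split_ifs with h
  · simp [List.getD_eq_getElem?_getD, h]
  · rw [List.getD_eq_getElem?_getD, List.getElem?_eq_none (by simpa using h)]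
    exact ev_zeroc _

/-- Derivations on closed codes describe reachable register contents. -/
theorem reach_of_der {G : Gr} {c : ℕ × List ℕ} (h : Clos (DerStep G) c) :
    Reach G c.1 (cval c.2) := by
  induction h with
  | mk ps c hR _ ih =>
    obtain ⟨r, hr, h1, h2, h3⟩ := hR
    have hlen : r.2.1.length = ps.length := by rw [← h2, List.length_map]
    have := Reach.mk (G := G) r (fun i => cval ((ps.map Prod.snd).getD i [])) hr (by
      intro i hi
      rw [hlen] at hi
      have := ih ps[i] (List.getElem_mem hi)
      have e1 : r.2.1.getD i 0 = ps[i].1 := by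
        rw [← h2]; simp [List.getD_eq_getElem?_getD, hi]
      have e2 : (ps.map Prod.snd).getD i [] = ps[i].2 := by
        simp [List.getD_eq_getElem?_getD, hi]
      rw [e1, e2]
      exact this)
    rw [h1, h3]
    convert this using 1
    funext j
    rw [cval_map_range]
    unfold upd
    split_ifs with hj
    · rw [ev_genv _ _ _ _ (fun _ _ _ _ => rfl), List.length_map, hlen]
    · rfl

/-- Reachable register contents have derivations on closed codes. -/
theorem der_of_reach {G : Gr} {nt : ℕ} {w : ℕ → ℚ[X]} (h : Reach G nt w) :
    ∃ cs, Clos (DerStep G) (nt, cs) ∧ w = cval cs := by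
  induction h with
  | mk r ws hr _ ih =>
    choose! f hf hw using ih
    set ps : List (ℕ × List ℕ) := (List.range r.2.1.length).map fun i => (r.2.1.getD i 0, f i)
      with hps
    have hlen : ps.length = r.2.1.length := by simp [hps]
    refine ⟨(List.range G.1).map fun j =>
      bind (genv G.1 (ps.map Prod.snd)) (r.2.2.getD j (numc 0)),
      Clos.mk ps _ ⟨r, hr, rfl, ?_, rfl⟩ ?_, ?_⟩
    · apply List.ext_getElem
      · simpa using hlen
      · intro i h1 h2
        simp [hps, h2]
    · intro p hp
      obtain ⟨i, hi, rfl⟩ := List.mem_map.1 hp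
      exact hf i (List.mem_range.1 hi)
    · funext j
      rw [cval_map_range]
      unfold upd
      split_ifs with hj
      · rw [ev_genv G.1 (ps.map Prod.snd) _ ws, List.length_map, hlen]
        intro i hi j _
        rw [List.length_map, hlen] at hi
        rw [hw i hi]
        congr 1
        simp [hps, hi]
      · rfl

/-- A violated test shows in finitely many derivation steps. -/
theorem not_good_iff (G : Gr) : ¬ Good G ↔ ∃ c : ℕ × List ℕ, Clos (DerStep G) c ∧
    ∃ p ∈ G.2.2, p.1 = c.1 ∧ ∃ w : ℕ × ℕ × ℕ,
      EqN [] (bind (fun _ => numc 0) (mulc (bind (genv G.1 [c.2]) p.2) w.1))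
        (bind (fun _ => numc 0) (dl w.2.1 w.2.2)) := by
  simp only [← ev_ne_zero_iff]
  have key : ∀ (cs : List ℕ) (n : ℕ), ev (fun _ => 0) (bind (genv G.1 [cs]) n) =
      ev (cenv G.1 1 fun _ => cval cs) n := by
    intro cs n
    rw [ev_genv G.1 [cs] n fun _ => cval cs]
    · rfl
    · intro i hi j _
      have : i = 0 := by simpa using hi
      subst this
      rfl
  constructor
  · intro h
    unfold Good at h
    push Not at h
    obtain ⟨p, hp, w, hw, h⟩ := h
    obtain ⟨cs, h1, rfl⟩ := der_of_reach hw
    exact ⟨(p.1, cs), h1, p, hp, rfl, by rwa [key]⟩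
  · rintro ⟨c, hc, p, hp, h1, h2⟩ h
    rw [key] at h2
    exact h2 (h p hp _ (h1 ▸ reach_of_der hc))

theorem SD_not_good : SD fun G : Gr => ¬ Good G := by
  refine SD.of_eq ?_ (fun G => (not_good_iff G).symm)
  refine SD.ex (p := fun (G : Gr) (c : ℕ × List ℕ) => Clos (DerStep G) c ∧
    ∃ p ∈ G.2.2, p.1 = c.1 ∧ ∃ w : ℕ × ℕ × ℕ,
      EqN [] (bind (fun _ => numc 0) (mulc (bind (genv G.1 [c.2]) p.2) w.1))
        (bind (fun _ => numc 0) (dl w.2.1 w.2.2))) ?_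
  refine SD.and ?_ ?_
  · refine SD.clos ?_
    unfold DerStep
    refine SD.ex_list (p := fun (x : Gr × List (ℕ × List ℕ) × ℕ × List ℕ)
      (r : ℕ × List ℕ × List ℕ) => x.2.2.1 = r.1 ∧ x.2.1.map Prod.fst = r.2.1 ∧
        x.2.2.2 = (List.range x.1.1).map fun j =>
          bind (genv x.1.1 (x.2.1.map Prod.snd)) (r.2.2.getD j (numc 0)))
      (SD.of_prim ?_) (by fun_prop)
    unfold genv
    fun_prop
  · refine SD.ex_list (p := fun (x : Gr × ℕ × List ℕ) (p : ℕ × ℕ) => p.1 = x.2.1 ∧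
      ∃ w : ℕ × ℕ × ℕ,
      EqN [] (bind (fun _ => numc 0) (mulc (bind (genv x.1.1 [x.2.2]) p.2) w.1))
        (bind (fun _ => numc 0) (dl w.2.1 w.2.2))) ?_ (by fun_prop)
    refine SD.and (SD.of_prim (by fun_prop)) ?_
    refine SD.ex (p := fun (x : (Gr × ℕ × List ℕ) × (ℕ × ℕ)) (w : ℕ × ℕ × ℕ) =>
      EqN [] (bind (fun _ => numc 0) (mulc (bind (genv x.1.1.1 [x.1.2.2]) x.2.2) w.1))
        (bind (fun _ => numc 0) (dl w.2.1 w.2.2))) ?_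
    refine SD_EqN.comp (f := fun x : ((Gr × ℕ × List ℕ) × (ℕ × ℕ)) × (ℕ × ℕ × ℕ) =>
      (([] : List ℕ), (bind (fun _ => numc 0)
        (mulc (bind (genv x.1.1.1.1 [x.1.1.2.2]) x.1.2.2) x.2.1),
        bind (fun _ => numc 0) (dl x.2.2.1 x.2.2.2)))) ?_
    unfold genv dl
    fun_prop

/-! ### Certificates for polynomial grammars -/

/-- Atoms that do not refer to a register of a child are replaced by `0`. -/
def san (R k m : ℕ) : ℕ := if m.unpair.1 < k ∧ m.unpair.2 < R then atom m else numc 0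

/-- The updates of a rule, as a substitution for the registers. -/
def cc (R k : ℕ) (us : List ℕ) (m : ℕ) : ℕ :=
  if m.unpair.1 < 1 ∧ m.unpair.2 < R then bind (san R k) (us.getD m.unpair.2 (numc 0))
  else numc 0

/-- The registers of child `i`, as a substitution for the registers. -/
def sh (R i m : ℕ) : ℕ :=
  if m.unpair.1 < 1 ∧ m.unpair.2 < R then atom (Nat.pair i m.unpair.2) else numc 0

/-- The equations that the list `E` of invariants provides for the children of a rule. -/
def hyps (R : ℕ) (ks : List ℕ) (E : List (ℕ × ℕ)) : List ℕ :=
  (List.range ks.length).flatMap fun i => E.flatMap fun e =>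
    if ks.getD i 0 = e.1 then [bind (sh R i) e.2] else []

theorem mem_hyps {R : ℕ} {ks : List ℕ} {E : List (ℕ × ℕ)} {l : ℕ} :
    l ∈ hyps R ks E ↔ ∃ i < ks.length, ∃ e ∈ E, ks.getD i 0 = e.1 ∧ l = bind (sh R i) e.2 := by
  unfold hyps
  simp only [List.mem_flatMap, List.mem_range]
  refine exists_congr fun i => and_congr_right fun _ => exists_congr fun e =>
    and_congr_right fun _ => ?_
  by_cases h : ks.getD i 0 = e.1
  · rw [if_pos h, List.mem_singleton]
    exact ⟨fun hl => ⟨h, hl⟩, fun hl => hl.2⟩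
  · rw [if_neg h]
    exact ⟨fun hl => absurd hl List.not_mem_nil, fun hl => absurd hl.1 h⟩

/-- The list `E` of invariants contains all tests and is provably inductive. -/
def Cert (G : Gr) (E : List (ℕ × ℕ)) : Prop :=
  (∀ p ∈ G.2.2, p ∈ E) ∧ ∀ r ∈ G.2.1, ∀ e ∈ E, ¬ r.1 = e.1 ∨
    EqN (hyps G.1 r.2.1 E) (bind (cc G.1 r.2.1.length r.2.2) e.2) (numc 0)

theorem ev_sh (R k i n : ℕ) (hi : i < k) (ws : ℕ → ℕ → ℚ[X]) :
    ev (cenv R k ws) (bind (sh R i) n) = ev (cenv R 1 fun _ => ws i) n := by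
  rw [ev_bind]
  congr 1
  funext m
  unfold sh
  split_ifs with hm
  · rw [ev_atom]; simp [cenv, hm, hi]
  · rw [ev_zeroc, cenv, if_neg hm]

theorem ev_cc (R k n : ℕ) (us : List ℕ) (ws : ℕ → ℕ → ℚ[X]) :
    ev (cenv R k ws) (bind (cc R k us) n) = ev (cenv R 1 fun _ => upd R k us ws) n := by
  rw [ev_bind]
  congr 1
  funext m
  unfold cc
  split_ifs with hm
  · rw [ev_bind, cenv, if_pos hm, upd, if_pos hm.2]
    congr 1
    funext m'
    unfold san
    split_ifs with hm'
    · rw [ev_atom]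
    · rw [ev_zeroc, cenv, if_neg hm']
  · rw [ev_zeroc, cenv, if_neg hm]

/-- A certificate proves, by induction on derivations, that its invariants hold. -/
theorem Cert.sound {G : Gr} {E : List (ℕ × ℕ)} (h : Cert G E) : Good G := by
  have key : ∀ nt w, Reach G nt w → ∀ e ∈ E, nt = e.1 →
      ev (cenv G.1 1 fun _ => w) e.2 = 0 := by
    intro nt w hw
    induction hw with
    | mk r ws hr _ ih =>
      intro e he hre
      rw [← ev_cc, ← ev_zeroc (cenv G.1 r.2.1.length ws)]
      refine EqN.sound ?_ ((h.2 r hr e he).resolve_left (not_not.2 hre))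
      intro l hl
      obtain ⟨i, hi, e', he', h1, rfl⟩ := mem_hyps.1 hl
      rw [ev_sh _ _ _ _ hi]
      exact ih i hi e' he' h1
  exact fun p hp w hw => key _ _ hw p (h.1 p hp) rfl

theorem bind_san_cc (R k n : ℕ) (us : List ℕ) :
    bind (san R k) (bind (cc R k us) n) = bind (cc R k us) n := by
  have h0 : ∀ h : ℕ → ℕ, bind h (numc 0) = numc 0 := fun h => bind_leaf h (by norm_num) _
  have h1 : ∀ n, bind (san R k) (bind (san R k) n) = bind (san R k) n := by
    intro n
    rw [bind_bind]
    congr 1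
    funext m
    unfold san
    split_ifs with h
    · rw [bind_atom, if_pos h]
    · rw [h0]
  rw [bind_bind]
  congr 1
  funext m
  unfold cc
  split_ifs with h
  · rw [h1]
  · rw [h0]

/-- The register contents reachable at a nonterminal, as points of an affine space. -/
def reachSet (G : Gr) (nt : ℕ) : Set (Fin G.1 → ℚ[X]) :=
  {v | ∃ w, Reach G nt w ∧ v = fun j => w j.val}

/-- The environment giving the values `s` to the registers of the first child. -/
noncomputable def regEnv {S : Type} [Zero S] {R : ℕ} (s : Fin R → S) (m : ℕ) : S :=
  if h : m.unpair.1 < 1 ∧ m.unpair.2 < R then s ⟨m.unpair.2, h.2⟩ else 0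

/-- Codes of generators of the ideal of invariants of a nonterminal. -/
theorem exists_gens (G : Gr) (nt : ℕ) : ∃ L : List ℕ,
    (∀ n ∈ L, ∀ w, Reach G nt w → ev (cenv G.1 1 fun _ => w) n = 0) ∧
    ∀ {S : Type} [CommRing S] [Algebra ℚ[X] S] (s : Fin G.1 → S),
      (∀ n ∈ L, ev (regEnv s) n = 0) →
      ∀ g ∈ van (reachSet G nt), MvPolynomial.aeval s g = 0 := by
  obtain ⟨T, hT⟩ := (isNoetherianRing_iff_ideal_fg (MvPolynomial (Fin G.1) ℚ[X])).1
    inferInstance (van (reachSet G nt))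
  choose c hc using fun g : MvPolynomial (Fin G.1) ℚ[X] =>
    exists_code (fun t : Fin G.1 => Nat.pair 0 t) g
  refine ⟨T.toList.map c, ?_, ?_⟩
  · intro n hn w hw
    obtain ⟨g, hg, rfl⟩ := List.mem_map.1 hn
    have hg' : g ∈ van (reachSet G nt) := by
      rw [← hT]
      exact Ideal.subset_span (by simpa using hg)
    rw [hc, MvPolynomial.aeval_eq_eval]
    refine Eq.trans ?_ (hg' (fun j => w j) ⟨w, hw, rfl⟩)
    congr 2
    funext j
    simp [cenv]
  · intro S _ _ s hs g hg
    have h1 : van (reachSet G nt) ≤ RingHom.ker (MvPolynomial.aeval (R := ℚ[X]) s) := by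
      rw [← hT]
      refine Ideal.span_le.2 fun g hg => ?_
      have := hs (c g) (List.mem_map.2 ⟨g, by simpa using hg, rfl⟩)

      rw [hc] at this
      simpa [regEnv] using this
    exact h1 hg

/-- The consequence of `vanish_prod` for provable equality: a term that vanishes on all children
register contents is provably zero from generators of the ideals of invariants. -/
theorem eqN_of_vanish (G : Gr) (ks : List ℕ) (E : List (ℕ × ℕ)) (n : ℕ)
    (hn : bind (san G.1 ks.length) n = n)
    (hE : ∀ i < ks.length, ∃ L : List ℕ, (∀ l ∈ L, (ks.getD i 0, l) ∈ E) ∧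
      ∀ {S : Type} [CommRing S] [Algebra ℚ[X] S] (s : Fin G.1 → S),
      (∀ n ∈ L, ev (regEnv s) n = 0) →
      ∀ g ∈ van (reachSet G (ks.getD i 0)), MvPolynomial.aeval s g = 0)
    (h0 : ∀ ws, (∀ i < ks.length, Reach G (ks.getD i 0) (ws i)) →
      ev (cenv G.1 ks.length ws) n = 0) :
    EqN (hyps G.1 ks E) n (numc 0) := by
  set R := G.1
  set k := ks.length with hk
  set H := hyps R ks E with hH
  let f : MvPolynomial (Fin k × Fin R) ℚ[X] := ev (fun m =>
    if h : m.unpair.1 < k ∧ m.unpair.2 < R then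
      MvPolynomial.X (⟨m.unpair.1, h.1⟩, ⟨m.unpair.2, h.2⟩) else 0) n
  obtain ⟨δ, hδ, hmem⟩ := vanish_prod (fun i : Fin k => reachSet G (ks.getD i 0)) f (by
    intro ω hω
    choose ws hws hωs using (fun i => hω i : ∀ i : Fin k, ∃ w, Reach G (ks.getD i 0) w ∧
      (fun t => ω (i, t)) = fun j => w j.val)
    have h1 := h0 (fun i => if h : i < k then ws ⟨i, h⟩ else 0) (by
      intro i hi
      rw [dif_pos hi]
      exact hws ⟨i, hi⟩)
    rw [← h1, ← MvPolynomial.aeval_eq_eval]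
    change (MvPolynomial.aeval ω) f = _
    rw [map_ev]
    congr 1
    funext m
    unfold cenv
    split_ifs with hm
    · rw [MvPolynomial.aeval_X]
      simp only [dif_pos hm.1]
      exact congrFun (hωs ⟨_, hm.1⟩) (⟨_, hm.2⟩ : Fin R)
    · exact map_zero _)
  let ψ : MvPolynomial (Fin k × Fin R) ℚ[X] →ₐ[ℚ[X]] QH H :=
    MvPolynomial.aeval fun x => qm H (atom (Nat.pair x.1 x.2))
  have hJ : prodIdeal (fun i : Fin k => reachSet G (ks.getD i 0)) ≤ RingHom.ker ψ := by
    refine iSup_le fun i => Ideal.map_le_iff_le_comap.2 fun g hg => ?_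
    obtain ⟨L, hL, hgen⟩ := hE i i.2
    change ψ (MvPolynomial.rename (Prod.mk i) g) = 0
    rw [MvPolynomial.aeval_rename]
    refine hgen _ ?_ g hg
    intro l hl
    have h1 : ev (fun m => qm H (sh R i m)) l = 0 := by
      rw [ev_qm]
      exact qm_hyp (mem_hyps.2 ⟨i, i.2, _, hL l hl, rfl, rfl⟩)
    rw [← h1]
    congr 1
    funext m
    unfold regEnv sh
    split_ifs with hm
    · rfl
    · rw [qm_num, Nat.cast_zero]
  have hψ : ψ f = qm H n := by
    rw [map_ev, ← hn, ← ev_qm, hn]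
    congr 1
    funext m
    unfold san
    split_ifs with hm
    · simp [ψ]
    · rw [map_zero, qm_num, Nat.cast_zero]
  have h2 : ψ (MvPolynomial.C δ * f) = 0 := hJ hmem
  rw [map_mul, hψ, ← MvPolynomial.algebraMap_eq, AlgHom.commutes] at h2
  exact (qm_eq (b := numc 0)).1 (cancel_base hδ h2)

/-- The tests together with generators of the ideals of invariants form a certificate. -/
theorem exists_cert {G : Gr} (h : Good G) : ∃ E, Cert G E := by
  choose L hL hgen using exists_gens G
  set nts : List ℕ := G.2.1.flatMap fun r => r.2.1 with hnts
  set E : List (ℕ × ℕ) := G.2.2 ++ nts.flatMap fun nt => (L nt).map fun l => (nt, l) with hE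
  have hinv : ∀ e ∈ E, ∀ w, Reach G e.1 w → ev (cenv G.1 1 fun _ => w) e.2 = 0 := by
    intro e he w hw
    rcases List.mem_append.1 he with he | he
    · exact h e he w hw
    · obtain ⟨nt, _, he⟩ := List.mem_flatMap.1 he
      obtain ⟨l, hl, rfl⟩ := List.mem_map.1 he
      exact hL nt l hl w hw
  refine ⟨E, fun p hp => List.mem_append_left _ hp, fun r hr e he => ?_⟩
  by_cases hre : r.1 = e.1
  · right
    refine eqN_of_vanish G r.2.1 E _ (bind_san_cc _ _ _ _) (fun i hi => ⟨L (r.2.1.getD i 0), ?_,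
      fun s hs => hgen _ s hs⟩) ?_
    · intro l hl
      refine List.mem_append_right _ (List.mem_flatMap.2 ⟨r.2.1.getD i 0, ?_,
        List.mem_map.2 ⟨l, hl, rfl⟩⟩)
      refine List.mem_flatMap.2 ⟨r, hr, ?_⟩
      rw [List.getD_eq_getElem _ _ hi]
      exact List.getElem_mem hi
    · intro ws hws
      rw [ev_cc]
      exact hinv e he _ (hre ▸ Reach.mk r ws hr hws)
  · exact Or.inl hre

theorem SD_good : SD fun G : Gr => Good G := by
  have h : ∀ G : Gr, (∃ E, Cert G E) ↔ Good G :=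
    fun G => ⟨fun ⟨_, h⟩ => h.sound, exists_cert⟩
  refine SD.of_eq ?_ h
  refine SD.ex (p := Cert) ?_
  unfold Cert
  refine SD.and ?_ ?_
  · exact SD.all_list (p := fun (x : Gr × List (ℕ × ℕ)) (p : ℕ × ℕ) => p ∈ x.2)
      (SD.of_prim (by fun_prop)) (by fun_prop)
  · refine SD.all_list (p := fun (x : Gr × List (ℕ × ℕ)) (r : ℕ × List ℕ × List ℕ) =>
      ∀ e ∈ x.2, ¬ r.1 = e.1 ∨
        EqN (hyps x.1.1 r.2.1 x.2) (bind (cc x.1.1 r.2.1.length r.2.2) e.2) (numc 0)) ?_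
      (by fun_prop)
    refine SD.all_list (p := fun (x : (Gr × List (ℕ × ℕ)) × (ℕ × List ℕ × List ℕ)) (e : ℕ × ℕ) =>
      ¬ x.2.1 = e.1 ∨ EqN (hyps x.1.1.1 x.2.2.1 x.1.2)
        (bind (cc x.1.1.1 x.2.2.1.length x.2.2.2) e.2) (numc 0)) ?_ (by fun_prop)
    refine SD.or (SD.of_prim (by fun_prop)) ?_
    refine SD_EqN.comp (f := fun x : ((Gr × List (ℕ × ℕ)) × (ℕ × List ℕ × List ℕ)) × (ℕ × ℕ) =>
      (hyps x.1.1.1.1 x.1.2.2.1 x.1.1.2,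
        (bind (cc x.1.1.1.1 x.1.2.2.1.length x.1.2.2.2) x.2.2, numc 0))) ?_
    unfold hyps cc san sh
    fun_prop

/-- It is decidable whether all tests of a polynomial grammar evaluate to zero. -/
theorem decide_good : ∃ F : Gr → Bool, Computable F ∧ ∀ G, F G = true ↔ Good G :=
  SD_good.decide SD_not_good

/-! ### Interpolation on a finite grid -/

/-- Univariate interpolation at the points `0, …, M`. -/
theorem exists_lagrange (M : ℕ) : ∃ ℓ : ℕ → ℚ[X], ∀ e ≤ M, ∀ y : ℚ[X],
    y ^ e = ∑ a ∈ Finset.range (M + 1), (a : ℚ[X]) ^ e * aeval y (ℓ a) := by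
  classical
  refine ⟨Lagrange.basis (Finset.range (M + 1)) (fun a : ℕ => (a : ℚ)), fun e he y => ?_⟩
  have hinj : Set.InjOn (fun a : ℕ => (a : ℚ)) (Finset.range (M + 1)) :=
    fun a _ b _ h => Nat.cast_injective h
  have h1 : (X ^ e : ℚ[X]) = Lagrange.interpolate (Finset.range (M + 1)) (fun a : ℕ => (a : ℚ))
      (fun a => ((a : ℚ)) ^ e) := by
    refine Lagrange.eq_interpolate_of_eval_eq _ hinj ?_ ?_
    · rw [degree_X_pow, Finset.card_range]
      exact_mod_cast Nat.lt_succ_of_le he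
    · intro i _
      simp
  have h2 := congrArg (aeval y) h1
  rw [map_pow, aeval_X, Lagrange.interpolate_apply, map_sum] at h2
  rw [h2]
  refine Finset.sum_congr rfl fun a _ => ?_
  rw [map_mul, aeval_C]
  simp

/-- The value of a bounded forest at a point is a polynomial combination of its values on a
finite grid; the grid `ν` and the codes of the coefficients depend only on the bounds. -/
theorem exists_grid (N M : ℕ) : ∃ (ν : ℕ → ℕ → ℕ) (L : List ℕ),
    (Primrec fun x : ℕ × ℕ => ν x.1 x.2) ∧
    (∀ h h' : PFV, h.varsLt N → h'.varsLt N → h.totalOcc ≤ M → h'.totalOcc ≤ M →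
      (∀ s < L.length, fval X (fun i => (ν s i : ℚ[X])) h = fval X (fun i => (ν s i : ℚ[X])) h') →
      PFV.Veq h h') ∧
    ∀ h : PFV, h.varsLt N → h.totalOcc ≤ M → ∀ env : ℕ → ℚ[X],
      fval X (fun i => env (Nat.pair 0 i)) h =
        ∑ s ∈ Finset.range L.length, fval X (fun i => (ν s i : ℚ[X])) h * ev env (L.getD s 0) := by
  classical
  obtain ⟨ℓ, hℓ⟩ := exists_lagrange M
  let pts : List (Fin N → Fin (M + 1)) := Finset.univ.toList
  let tab : List (List ℕ) := pts.map fun φ => List.ofFn fun i => (φ i : ℕ)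
  let Λ : (Fin N → Fin (M + 1)) → MvPolynomial ℕ ℚ[X] := fun φ =>
    ∏ i : Fin N, aeval (MvPolynomial.X (i : ℕ)) (ℓ (φ i))
  choose c hc using fun φ => exists_code (fun i : ℕ => Nat.pair 0 i) (Λ φ)
  let ν : ℕ → ℕ → ℕ := fun s i => (tab.getD s []).getD i 0
  have hrep : ∀ h : PFV, h.varsLt N → h.totalOcc ≤ M → ∀ ρ : ℕ → ℚ[X],
      fval X ρ h = ∑ φ : Fin N → Fin (M + 1),
        fval X (fun i => if hi : i < N then ((φ ⟨i, hi⟩ : ℕ) : ℚ[X]) else 0) h *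
          MvPolynomial.aeval ρ (Λ φ) := by
    intro h h1 h2 ρ
    simp only [← eval_pol]
    rw [← gp_alpha h1 h2]
    simp only [gp, map_sum, Finset.sum_mul]
    rw [Finset.sum_comm]
    refine Finset.sum_congr rfl fun j _ => ?_
    obtain ⟨hm1, hm2⟩ := mem_monos.1 (mono_mem N M j)
    have hprod : ∀ ρ : ℕ → ℚ[X], MvPolynomial.eval ρ
        (MvPolynomial.monomial (mono N M j) (alpha N M h j)) =
        alpha N M h j * ∏ i : Fin N, ρ i ^ mono N M j i := by
      intro ρ
      rw [MvPolynomial.eval_monomial, Finsupp.prod_of_support_subset _ hm1 _ (by simp),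
        Finset.prod_range]
    simp only [hprod, mul_assoc, ← Finset.mul_sum]
    congr 1
    have hle : ∀ i : Fin N, mono N M j i ≤ M := fun i =>
      (Finsupp.le_degree (i : ℕ) (mono N M j)).trans hm2
    have hone : ∀ i : Fin N, ρ i ^ mono N M j i =
        ∑ a : Fin (M + 1), ((a : ℕ) : ℚ[X]) ^ mono N M j i * aeval (ρ i) (ℓ a) := by
      intro i
      rw [hℓ _ (hle i), Finset.sum_range]
    rw [Finset.prod_congr rfl fun i _ => hone i, Finset.prod_univ_sum, Fintype.piFinset_univ]
    refine Finset.sum_congr rfl fun φ _ => ?_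
    rw [Finset.prod_mul_distrib]
    congr 1
    · refine Finset.prod_congr rfl fun i _ => ?_
      simp
    · rw [map_prod]
      refine Finset.prod_congr rfl fun i _ => ?_
      have := Polynomial.aeval_algHom_apply ((MvPolynomial.aeval (R := ℚ[X]) ρ).restrictScalars ℚ)
        (MvPolynomial.X (i : ℕ)) (ℓ (φ i))
      simpa using this
  have hν : ∀ s (hs : s < pts.length) i, ν s i =
      if hi : i < N then (pts[s] ⟨i, hi⟩ : ℕ) else 0 := by
    intro s hs i
    have h1 : tab.getD s [] = List.ofFn fun i => (pts[s] i : ℕ) := by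
      simp [tab, List.getD_eq_getElem?_getD, hs]
    change (tab.getD s []).getD i 0 = _
    rw [h1]
    split_ifs with hi
    · simp [List.getD_eq_getElem?_getD, hi]
    · simp [List.getD_eq_getElem?_getD, hi]
  have hgrid : ∀ s (hs : s < pts.length) (h : PFV), fval X (fun i => (ν s i : ℚ[X])) h =
      fval X (fun i => if hi : i < N then ((pts[s] ⟨i, hi⟩ : ℕ) : ℚ[X]) else 0) h := by
    intro s hs h
    congr 1
    funext i
    rw [hν s hs]
    split_ifs
    · rfl
    · simp
  have hmem : ∀ φ, ∃ s, ∃ hs : s < pts.length, pts[s] = φ := fun φ =>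
    List.getElem_of_mem (by simp [pts])
  refine ⟨ν, pts.map c, by fun_prop, ?_, ?_⟩
  · intro h h' h1 h1' h2 h2' H
    refine pol_injective (MvPolynomial.funext fun ρ => ?_)
    rw [eval_pol, eval_pol, hrep h h1 h2, hrep h' h1' h2']
    refine Finset.sum_congr rfl fun φ _ => ?_
    obtain ⟨s, hs, rfl⟩ := hmem φ
    have := H s (by simpa using hs)
    rw [hgrid s hs, hgrid s hs] at this
    rw [this]
  · intro h h1 h2 env
    rw [hrep h h1 h2, List.length_map, ← Finset.sum_map_toList]
    change (pts.map _).sum = _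
    rw [← Fin.sum_univ_fun_getElem, Finset.sum_range]
    refine Finset.sum_congr rfl fun s _ => ?_
    rw [hgrid s s.2]
    congr 1
    have : (pts.map c).getD s 0 = c pts[s.1] := by
      simp [List.getD_eq_getElem?_getD]
    rw [this, hc]

/-! ### Compilation of update expressions -/

/-- The code of the simulated value of an expression from the list of values (as an expression and
as a list of expressions) of all smaller numbers. The atom `(0, i)` stands for the value of `∘ᵢ`,
the atom `(v + 1, s)` for the value of register variable `v` at the interpolation node `s`. -/
def stepE (L : List ℕ) (l : List (ℕ × List ℕ)) : ℕ :=
  if l.length.unpair.1 = 0 then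
    (List.range L.length).foldr (fun s acc =>
      addc (mulc (atom (Nat.pair (l.length.unpair.2 + 1) s)) (L.getD s 0)) acc) (numc 0)
  else if l.length.unpair.1 = 1 then numc 1
  else if l.length.unpair.1 = 2 then atom (Nat.pair 0 l.length.unpair.2)
  else if l.length.unpair.1 = 3 then
    mulc (l.getD l.length.unpair.2.unpair.1 (0, [])).1
      (l.getD l.length.unpair.2.unpair.2 (0, [])).1
  else if l.length.unpair.1 = 4 then
    addc (mulc xc (l.getD l.length.unpair.2 (0, [])).1) (numc 2)
  else
    bind (fun m =>
      if m.unpair.1 = 0 ∧ m.unpair.2 < (l.getD l.length.unpair.2.unpair.2 (0, [])).2.length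
      then (l.getD l.length.unpair.2.unpair.2 (0, [])).2.getD m.unpair.2 0 else atom m)
      (l.getD l.length.unpair.2.unpair.1 (0, [])).1

/-- One step of the recursion over codes of expressions and of lists of expressions. -/
def stepT (L : List ℕ) (l : List (ℕ × List ℕ)) : ℕ × List ℕ :=
  (stepE L l, if l.length = 0 then [] else
    (l.getD (l.length - 1).unpair.1 (0, [])).1 :: (l.getD (l.length - 1).unpair.2 (0, [])).2)

/-- The list of the first `n` values of `tmF`. -/
def hist (L : List ℕ) : ℕ → List (ℕ × List ℕ)
  | 0 => []
  | n + 1 => hist L n ++ [stepT L (hist L n)]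

/-- The translation of (a code of) an expression, and of (a code of) a list of expressions, into
codes of ring terms. -/
def tmF (L : List ℕ) (n : ℕ) : ℕ × List ℕ := stepT L (hist L n)

theorem hist_eq (L : List ℕ) (n : ℕ) : hist L n = (List.range n).map (tmF L) := by
  induction n with
  | zero => rfl
  | succ n ih =>
    conv_rhs => rw [List.range_succ, List.map_append, ← ih]
    rfl

theorem hist_length (L : List ℕ) (n : ℕ) : (hist L n).length = n := by simp [hist_eq]

theorem hist_getD (L : List ℕ) {n i : ℕ} (h : i < n) (d) : (hist L n).getD i d = tmF L i := by
  simp [hist_eq, List.getD_eq_getElem?_getD, h]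

theorem prim_stepT (L : List ℕ) : Primrec (stepT L) := by
  unfold stepT stepE
  have h : PrimrecPred fun x : List (ℕ × List ℕ) => x.length = 0 := by fun_prop
  fun_prop

theorem prim_tmF (L : List ℕ) : Primrec (tmF L) := by
  have h : Primrec (hist L) := by
    refine (Primrec.nat_rec₁ ([] : List (ℕ × List ℕ))
      (f := fun _ l => l ++ [stepT L l]) ?_).of_eq ?_
    · have := prim_stepT L
      change Primrec fun x : ℕ × List (ℕ × List ℕ) => x.2 ++ [stepT L x.2]
      fun_prop
    · intro n
      induction n with
      | zero => rfl
      | succ n ih => exact congrArg (fun l => l ++ [stepT L l]) ih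
  exact (prim_stepT L).comp h

theorem tmF_nil (L : List ℕ) : (tmF L 0).2 = [] := by simp [tmF, stepT, hist]

theorem tmF_cons (L : List ℕ) (a b : ℕ) :
    (tmF L (Nat.pair a b + 1)).2 = (tmF L a).1 :: (tmF L b).2 := by
  have ha := Nat.lt_succ_of_le (Nat.left_le_pair a b)
  have hb := Nat.lt_succ_of_le (Nat.right_le_pair a b)
  conv_lhs => rw [tmF]
  simp [-List.getD_eq_getElem?_getD, stepT, hist_length, hist_getD L ha, hist_getD L hb]

theorem tmF_list (L : List ℕ) (l : List VExpr) :
    (tmF L (VExpr.codeList l)).2 = l.map fun e => (tmF L e.code).1 := by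
  induction l with
  | nil => rw [VExpr.codeList, tmF_nil]; rfl
  | cons e l ih => rw [VExpr.codeList, tmF_cons, ih]; rfl

theorem lt_pair_pos {a b : ℕ} (h : a ≠ 0) : b < Nat.pair a b := by
  have := Nat.add_le_pair a b
  omega

theorem tmF_var (L : List ℕ) (i : ℕ) : (tmF L (VExpr.var i).code).1 =
    (List.range L.length).foldr (fun s acc =>
      addc (mulc (atom (Nat.pair (i + 1) s)) (L.getD s 0)) acc) (numc 0) := by
  rw [VExpr.code, tmF]; simp [stepT, stepE, hist_length]

theorem tmF_empty (L : List ℕ) : (tmF L VExpr.empty.code).1 = numc 1 := by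
  rw [VExpr.code, tmF]; simp [stepT, stepE, hist_length]

theorem tmF_leaf (L : List ℕ) (i : ℕ) :
    (tmF L (VExpr.leaf i).code).1 = atom (Nat.pair 0 i) := by
  rw [VExpr.code, tmF]; simp [stepT, stepE, hist_length]

theorem tmF_union (L : List ℕ) (e f : VExpr) :
    (tmF L (VExpr.union e f).code).1 = mulc (tmF L e.code).1 (tmF L f.code).1 := by
  have h := lt_pair_pos (a := 3) (b := Nat.pair e.code f.code) (by norm_num)
  rw [VExpr.code, tmF]
  simp [-List.getD_eq_getElem?_getD, stepT, stepE, hist_length, hist_getD L ((Nat.left_le_pair _ _).trans_lt h),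
    hist_getD L ((Nat.right_le_pair _ _).trans_lt h)]

theorem tmF_root (L : List ℕ) (e : VExpr) :
    (tmF L (VExpr.root e).code).1 = addc (mulc xc (tmF L e.code).1) (numc 2) := by
  have h := lt_pair_pos (a := 4) (b := e.code) (by norm_num)
  rw [VExpr.code, tmF]
  simp [-List.getD_eq_getElem?_getD, stepT, stepE, hist_length, hist_getD L h]

theorem tmF_subst (L : List ℕ) (e : VExpr) (l : List VExpr) :
    (tmF L (VExpr.subst e l).code).1 = bind (fun m =>
      if m.unpair.1 = 0 ∧ m.unpair.2 < l.length
      then (l.map fun e => (tmF L e.code).1).getD m.unpair.2 0 else atom m)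
      (tmF L e.code).1 := by
  have h := lt_pair_pos (a := 5) (b := Nat.pair e.code (VExpr.codeList l)) (by norm_num)
  rw [VExpr.code, tmF]
  simp only [stepT, stepE, hist_length, hist_getD L ((Nat.left_le_pair _ _).trans_lt h),
    hist_getD L ((Nat.right_le_pair _ _).trans_lt h), Nat.unpair_pair, tmF_list, List.length_map]
  simp

theorem evalList_eq (r : List PFV) (l : List VExpr) :
    VExpr.evalList r l = l.map (VExpr.eval r) := by
  induction l with
  | nil => rfl
  | cons e l ih => rw [VExpr.evalList, ih]; rfl

theorem ev_foldr {R : Type*} [CommRing R] [Algebra ℚ[X] R] (env : ℕ → R) (f : ℕ → ℕ) (n : ℕ) :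
    ev env ((List.range n).foldr (fun s acc => addc (f s) acc) (numc 0)) =
      ∑ s ∈ Finset.range n, ev env (f s) := by
  change _ = ((List.range n).map fun s => ev env (f s)).sum
  induction List.range n with
  | nil => simp [ev_numc]
  | cons a l ih => simp [ev_addc, ih]

/-- The interpolation property: the value of a bounded forest at arbitrary values of the variables
is obtained from its values at the nodes `ν s` through the codes in `L`. -/
def Interp (N M : ℕ) (ν : ℕ → ℕ → ℕ) (L : List ℕ) : Prop :=
  ∀ h : PFV, h.varsLt N → h.totalOcc ≤ M → ∀ env : ℕ → ℚ[X],
    fval X (fun i => env (Nat.pair 0 i)) h =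
      ∑ s ∈ Finset.range L.length, fval X (fun i => (ν s i : ℚ[X])) h * ev env (L.getD s 0)

/-- The list `r` of register contents agrees with the atoms `(v + 1, s)`. -/
def AgreeE (N M : ℕ) (ν : ℕ → ℕ → ℕ) (L : List ℕ) (r : List PFV) (env : ℕ → ℚ[X]) : Prop :=
  (∀ v, (r.getD v .empty).varsLt N ∧ (r.getD v .empty).totalOcc ≤ M) ∧
  ∀ v s, s < L.length →
    env (Nat.pair (v + 1) s) = fval X (fun i => (ν s i : ℚ[X])) (r.getD v .empty)

/-- Correctness of the compilation: substitution evaluates the substituted forest at the values of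
the substituting ones, which by interpolation only needs the values of the registers at the nodes. -/
theorem ev_tmF {N M : ℕ} {ν : ℕ → ℕ → ℕ} {L : List ℕ} (hI : Interp N M ν L) (r : List PFV) :
    ∀ e : VExpr, ∀ env : ℕ → ℚ[X], AgreeE N M ν L r env →
      ev env (tmF L e.code).1 = fval X (fun i => env (Nat.pair 0 i)) (e.eval r) := by
  apply VExpr.rec
    (motive_1 := fun e => ∀ env : ℕ → ℚ[X], AgreeE N M ν L r env →
      ev env (tmF L e.code).1 = fval X (fun i => env (Nat.pair 0 i)) (e.eval r))
    (motive_2 := fun l => ∀ e ∈ l, ∀ env : ℕ → ℚ[X], AgreeE N M ν L r env →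
      ev env (tmF L e.code).1 = fval X (fun i => env (Nat.pair 0 i)) (e.eval r))
  case var =>
    intro v env hr
    rw [tmF_var, ev_foldr, VExpr.eval, hI _ (hr.1 v).1 (hr.1 v).2]
    refine Finset.sum_congr rfl fun s hs => ?_
    rw [ev_mulc, ev_atom, hr.2 v s (Finset.mem_range.1 hs)]
  case empty => intro env _; rw [tmF_empty, ev_numc]; simp [VExpr.eval, fval]
  case leaf => intro i env _; rw [tmF_leaf, ev_atom]; simp [VExpr.eval, fval]
  case union =>
    intro e f he hf env hr
    rw [tmF_union, ev_mulc, he env hr, hf env hr, VExpr.eval, fval_union]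
  case root =>
    intro e he env hr
    rw [tmF_root, ev_addc, ev_mulc, ev_xc, ev_numc, he env hr, VExpr.eval, fval_root]
    simp
  case subst =>
    intro e l he hl env hr
    rw [tmF_subst, ev_bind, he, VExpr.eval, fval_subst, evalList_eq]
    · congr 1
      funext i
      by_cases hi : i < l.length
      · simp only [Nat.unpair_pair, hi, and_self, if_true]
        simpa [List.getD_eq_getElem?_getD, hi] using hl l[i] (List.getElem_mem hi) env hr
      · simp [List.getD_eq_getElem?_getD, hi, ev_atom, fval]
    · refine ⟨hr.1, fun v s hs => ?_⟩
      rw [← hr.2 v s hs]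
      simp [ev_atom]
  case nil => exact fun _ h => absurd h List.not_mem_nil
  case cons => exact fun e l he hl => List.forall_mem_cons.2 ⟨he, hl⟩

/-! ### Codes of register automata and their runs -/

/-- A decoded register automaton: number of registers, number of states, transitions and outputs,
with expressions given by their codes. -/
abbrev RC := ℕ × ℕ × List (ℕ × List ℕ × ℕ × List ℕ) × List (ℕ × ℕ)

/-- The decoded form of an automaton. -/
def toRC (A : RAV) : RC :=
  (A.regs, A.states, A.delta.map fun tr => (tr.1, tr.2.1, tr.2.2.1, tr.2.2.2.map VExpr.code),
    A.out.map fun p => (p.1, p.2.code))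

/-- Decoding of transitions. -/
def decTr (n : ℕ) : ℕ × List ℕ × ℕ × List ℕ :=
  (n.unpair.1, Denumerable.ofNat (List ℕ) n.unpair.2.unpair.1, n.unpair.2.unpair.2.unpair.1,
    Denumerable.ofNat (List ℕ) n.unpair.2.unpair.2.unpair.2)

/-- Decoding of automata. -/
def decA (n : ℕ) : RC :=
  ((Denumerable.ofNat (List ℕ × ℕ × ℕ × List ℕ × List ℕ) n).2.1,
    (Denumerable.ofNat (List ℕ × ℕ × ℕ × List ℕ × List ℕ) n).2.2.1,
    (Denumerable.ofNat (List ℕ × ℕ × ℕ × List ℕ × List ℕ) n).2.2.2.1.map decTr,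
    (Denumerable.ofNat (List ℕ × ℕ × ℕ × List ℕ × List ℕ) n).2.2.2.2.map Nat.unpair)

theorem decA_code (A : RAV) : decA A.code = toRC A := by
  unfold decA toRC RAV.code
  rw [Denumerable.ofNat_encode]
  simp only [List.map_map]
  congr 3
  · refine List.map_congr_left fun tr _ => ?_
    simp [decTr]
  · refine List.map_congr_left fun tr _ => ?_
    simp

theorem prim_decA : Primrec decA := by
  have : Primrec decTr := by unfold decTr; fun_prop
  unfold decA
  fun_prop

theorem getD_range_map {α : Type*} (f : ℕ → α) {n i : ℕ} (h : i < n) (d : α) :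
    ((List.range n).map f).getD i d = f i := by
  simp [List.getD_eq_getElem?_getD, h]

theorem reaches_mk {A : RAV} {a q : ℕ} {qs : List ℕ} {fs : List VExpr}
    (h : (a, qs, q, fs) ∈ A.delta) {t : ℕ → RTree} {r : ℕ → List PFV}
    (H : ∀ i, i < qs.length → A.Reaches (t i) (qs.getD i 0) (r i)) :
    A.Reaches (.node a ((List.range qs.length).map t)) q
      (fs.map (VExpr.eval ((List.range qs.length).map r).flatten)) := by
  refine .step a q qs fs _ _ h (by simp) (by simp) fun i hi => ?_
  have hi : i < qs.length := by simpa using hi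
  rw [getD_range_map _ hi, getD_range_map _ hi]
  exact H i hi

theorem reaches_length {A : RAV} (hA : A.WF) {t : RTree} {q : ℕ} {r : List PFV}
    (h : A.Reaches t q r) : r.length = A.regs := by
  cases h with
  | step a q qs fs ts rs hd => simpa using (hA.1 _ hd).2.2.2.2

theorem reaches_lt {A : RAV} (hA : A.WF) {t : RTree} {q : ℕ} {r : List PFV}
    (h : A.Reaches t q r) : q < A.states := by
  cases h with
  | step a q qs fs ts rs hd => exact (hA.1 _ hd).2.2.2.1

/-- The registers of all children, listed consecutively. -/
theorem flatten_getD (m : ℕ) : ∀ (rs : List (List PFV)), (∀ r ∈ rs, r.length = m) → ∀ v,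
    rs.flatten.getD v .empty = if v < rs.length * m then
      (rs.getD (v / m) []).getD (v % m) .empty else .empty := by
  intro rs
  induction rs with
  | nil => intro _ v; simp
  | cons r rs ih =>
    intro h v
    have hr := h r (by simp)
    have ih := ih fun r hr => h r (by simp [hr])
    rw [List.flatten_cons, List.length_cons, Nat.add_mul, one_mul]
    by_cases hv : v < m
    · rw [List.getD_append _ _ _ _ (by omega), Nat.div_eq_of_lt hv, Nat.mod_eq_of_lt hv,
        if_pos (by omega)]
      rfl
    · rw [List.getD_append_right _ _ _ _ (by omega), ih, hr]
      rcases Nat.eq_zero_or_pos m with rfl | hm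
      · simp
      · have h1 : v / m = (v - m) / m + 1 := by
          rw [← Nat.add_div_right _ hm]; congr 1; omega
        have h2 : v % m = (v - m) % m := by
          conv_lhs => rw [show v = v - m + m by omega, Nat.add_mod_right]
        rw [h1, h2]
        simp only [List.getD_cons_succ]
        congr 1
        apply propext
        omega

/-! ### Comparing the outputs of two automata -/

/-- Relocation of the atoms of a compiled expression: registers of child `i` of the automaton on
side `b` become atoms `(i, (b, (j, s)))`, the values of the variables are those at node `s`. -/
def rg (ν : ℕ → ℕ → ℕ) (g b k s m : ℕ) : ℕ :=
  if m.unpair.1 = 0 then numc (ν s m.unpair.2)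
  else if m.unpair.1 - 1 < k * g then
    atom (Nat.pair ((m.unpair.1 - 1) / g) (Nat.pair b (Nat.pair ((m.unpair.1 - 1) % g) m.unpair.2)))
  else numc 1

/-- The code of the value at node `s` of the expression with code `e`. -/
def tm (ν : ℕ → ℕ → ℕ) (L : List ℕ) (g b k s e : ℕ) : ℕ := bind (rg ν g b k s) (tmF L e).1

/-- The values `w` on side `b` are the values at the nodes of the register contents `r`. -/
def Ag (ν : ℕ → ℕ → ℕ) (n g b : ℕ) (w : ℕ → ℚ[X]) (r : List PFV) : Prop :=
  ∀ j s, j < g → s < n → w (Nat.pair b (Nat.pair j s)) =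
    fval X (fun i => (ν s i : ℚ[X])) (r.getD j .empty)

/-- The compiled expressions compute the values at the nodes, for the concatenation of the registers
of the children. -/
theorem ev_tm {N M : ℕ} {ν : ℕ → ℕ → ℕ} {L : List ℕ} (hI : Interp N M ν L) {g b R : ℕ}
    (hR : ∀ j s, j < g → s < L.length → Nat.pair b (Nat.pair j s) < R)
    {rs : List (List PFV)} (hl : ∀ r ∈ rs, r.length = g)
    (hb : ∀ r ∈ rs, ∀ v ∈ r, v.varsLt N ∧ v.totalOcc ≤ M)
    {ws : ℕ → ℕ → ℚ[X]} (hw : ∀ i, i < rs.length → Ag ν L.length g b (ws i) (rs.getD i []))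
    (s : ℕ) (e : VExpr) :
    ev (cenv R rs.length ws) (tm ν L g b rs.length s e.code) =
      fval X (fun i => (ν s i : ℚ[X])) (e.eval rs.flatten) := by
  rw [tm, ev_bind, ev_tmF hI rs.flatten]
  · congr 1
    funext i
    simp [rg, ev_numc]
  · constructor
    · intro v
      by_cases hv : v < rs.flatten.length
      · rw [List.getD_eq_getElem _ _ hv]
        obtain ⟨r, hr, hvr⟩ := List.mem_flatten.1 (List.getElem_mem hv)
        exact hb r hr _ hvr
      · rw [List.getD_eq_default _ _ (by omega)]
        exact ⟨trivial, Nat.zero_le _⟩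
    · intro v s' hs'
      rw [flatten_getD g rs hl]
      simp only [rg, Nat.unpair_pair, Nat.add_sub_cancel, Nat.succ_ne_zero, if_false]
      by_cases hv : v < rs.length * g
      · rw [if_pos hv, if_pos hv, ev_atom]
        have hg : 0 < g := Nat.pos_of_ne_zero (by rintro rfl; simp at hv)
        have h1 : v / g < rs.length := (Nat.div_lt_iff_lt_mul hg).2 hv
        have h2 := Nat.mod_lt v hg
        simp only [cenv, Nat.unpair_pair]
        rw [if_pos ⟨h1, hR _ _ h2 hs'⟩, hw _ h1 _ _ h2 hs']
      · rw [if_neg hv, if_neg hv, ev_numc]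
        simp [fval]

/-- The number of components of the nonterminals of `cross`. -/
def crR (L : List ℕ) (x y : RC) : ℕ := Nat.pair 2 (Nat.pair (x.1 + y.1) L.length)

/-- The update of the product of two transitions. -/
def crU (ν : ℕ → ℕ → ℕ) (L : List ℕ) (x y : RC) (tr tr' : ℕ × List ℕ × ℕ × List ℕ) : List ℕ :=
  (List.range (crR L x y)).map fun j =>
    if j.unpair.1 = 0 then
      tm ν L x.1 0 tr.2.1.length j.unpair.2.unpair.2 (tr.2.2.2.getD j.unpair.2.unpair.1 0)
    else
      tm ν L y.1 1 tr.2.1.length j.unpair.2.unpair.2 (tr'.2.2.2.getD j.unpair.2.unpair.1 0)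

/-- The product of two transitions. -/
def crRule (ν : ℕ → ℕ → ℕ) (L : List ℕ) (x y : RC) (tr tr' : ℕ × List ℕ × ℕ × List ℕ) :
    ℕ × List ℕ × List ℕ :=
  (Nat.pair tr.2.2.1 tr'.2.2.1,
    (List.range tr.2.1.length).map fun i => Nat.pair (tr.2.1.getD i 0) (tr'.2.1.getD i 0),
    crU ν L x y tr tr')

/-- The difference of two outputs at node `s`. -/
def crTest (ν : ℕ → ℕ → ℕ) (L : List ℕ) (x y : RC) (p p' : ℕ × ℕ) (s : ℕ) : ℕ × ℕ :=
  (Nat.pair p.1 p'.1, addc (tm ν L x.1 0 1 s p.2) (mulc negc (tm ν L y.1 1 1 s p'.2)))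

/-- The pairs of transitions reading the same letter with the same number of children. -/
def crPairs (x y : RC) : List ((ℕ × List ℕ × ℕ × List ℕ) × (ℕ × List ℕ × ℕ × List ℕ)) :=
  x.2.2.1.flatMap fun tr => (y.2.2.1.filter fun tr' =>
    tr'.1 = tr.1 ∧ tr'.2.1.length = tr.2.1.length).map fun tr' => (tr, tr')

/-- The pairs of outputs together with a node. -/
def crOuts (n : ℕ) (x y : RC) : List ((ℕ × ℕ) × (ℕ × ℕ) × ℕ) :=
  x.2.2.2.flatMap fun p => y.2.2.2.flatMap fun p' => (List.range n).map fun s => (p, p', s)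

/-- The polynomial grammar generating the pairs of configurations of two automata over a common
input tree, together with the differences of their outputs. -/
def cross (ν : ℕ → ℕ → ℕ) (L : List ℕ) (x y : RC) : Gr :=
  (crR L x y, (crPairs x y).map fun z => crRule ν L x y z.1 z.2,
    (crOuts L.length x y).map fun z => crTest ν L x y z.1 z.2.1 z.2.2)

theorem prim_crPairs : Primrec fun z : RC × RC => crPairs z.1 z.2 := by
  unfold crPairs; fun_prop

theorem prim_crOuts (n : ℕ) : Primrec fun z : RC × RC => crOuts n z.1 z.2 := by
  unfold crOuts; fun_prop

set_option maxHeartbeats 1000000 in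
theorem prim_cross {ν : ℕ → ℕ → ℕ} (hν : Primrec fun x : ℕ × ℕ => ν x.1 x.2) (L : List ℕ) :
    Primrec fun z : RC × RC => cross ν L z.1 z.2 := by
  have hν' : ∀ {α : Type} [Primcodable α] {f g : α → ℕ}, Primrec f → Primrec g →
      Primrec fun a => ν (f a) (g a) := fun hf hg => hν.comp (hf.pair hg)
  have h0 := prim_tmF L
  have hrg : Primrec fun z : (ℕ × ℕ × ℕ × ℕ) × ℕ => rg ν z.1.1 z.1.2.1 z.1.2.2.1 z.1.2.2.2 z.2 := by
    unfold rg
    have := hν' (α := (ℕ × ℕ × ℕ × ℕ) × ℕ) (f := fun z => z.1.2.2.2) (g := fun z => z.2.unpair.2)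
      (by fun_prop) (by fun_prop)
    fun_prop
  have htm : Primrec fun z : (ℕ × ℕ × ℕ × ℕ) × ℕ =>
      tm ν L z.1.1 z.1.2.1 z.1.2.2.1 z.1.2.2.2 z.2 := by
    unfold tm
    refine fp_bind ?_ (Primrec.fst.comp (h0.comp Primrec.snd))
    exact fp_comp (f := fun z : (ℕ × ℕ × ℕ × ℕ) × ℕ => rg ν z.1.1 z.1.2.1 z.1.2.2.1 z.1.2.2.2 z.2)
      (g := fun x : ((ℕ × ℕ × ℕ × ℕ) × ℕ) × ℕ => (x.1.1, x.2)) hrg (by fun_prop)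
  have htm' : ∀ {α : Type} [Primcodable α] {a b c d e : α → ℕ}, Primrec a → Primrec b →
      Primrec c → Primrec d → Primrec e → Primrec fun x => tm ν L (a x) (b x) (c x) (d x) (e x) :=
    fun ha hb hc hd he => htm.comp (((ha.pair (hb.pair (hc.pair hd)))).pair he)
  have hU : Primrec fun z : (RC × RC) × ((ℕ × List ℕ × ℕ × List ℕ) × (ℕ × List ℕ × ℕ × List ℕ)) =>
      crU ν L z.1.1 z.1.2 z.2.1 z.2.2 := by
    unfold crU crR
    refine fp_map (by fun_prop) (fp_ite (by fun_prop) (htm' ?_ ?_ ?_ ?_ ?_)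
      (htm' ?_ ?_ ?_ ?_ ?_)) <;> fun_prop
  have hT : Primrec fun z : (RC × RC) × ((ℕ × ℕ) × (ℕ × ℕ) × ℕ) =>
      crTest ν L z.1.1 z.1.2 z.2.1 z.2.2.1 z.2.2.2 := by
    unfold crTest
    have h1 := htm' (α := (RC × RC) × ((ℕ × ℕ) × (ℕ × ℕ) × ℕ)) (a := fun z => z.1.1.1)
      (b := fun _ => 0) (c := fun _ => 1) (d := fun z => z.2.2.2) (e := fun z => z.2.1.2)
      (by fun_prop) (by fun_prop) (by fun_prop) (by fun_prop) (by fun_prop)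
    have h2 := htm' (α := (RC × RC) × ((ℕ × ℕ) × (ℕ × ℕ) × ℕ)) (a := fun z => z.1.2.1)
      (b := fun _ => 1) (c := fun _ => 1) (d := fun z => z.2.2.2) (e := fun z => z.2.2.1.2)
      (by fun_prop) (by fun_prop) (by fun_prop) (by fun_prop) (by fun_prop)
    exact fp_pair (by fun_prop) (fp_addc h1 (fp_mulc (by fun_prop) h2))
  have hRu : Primrec fun z : (RC × RC) × ((ℕ × List ℕ × ℕ × List ℕ) × (ℕ × List ℕ × ℕ × List ℕ)) =>
      crRule ν L z.1.1 z.1.2 z.2.1 z.2.2 := by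
    unfold crRule
    exact fp_pair (by fun_prop) (fp_pair (by fun_prop) hU)
  exact fp_pair (by unfold crR; fun_prop) (fp_pair (Primrec.list_map prim_crPairs hRu)
    (Primrec.list_map (prim_crOuts _) hT))

section CrossCorrect

variable {N M : ℕ} {ν : ℕ → ℕ → ℕ} {L : List ℕ} {A B : RAV}

theorem lt_crR {b j s g : ℕ} (hb : b ≤ 1) (x y : RC) (hg : g ≤ x.1 + y.1) (hj : j < g)
    (hs : s < L.length) : Nat.pair b (Nat.pair j s) < crR L x y := by
  unfold crR
  have h1 : Nat.pair j s < Nat.pair (x.1 + y.1) L.length :=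
    (Nat.pair_lt_pair_left s (by omega)).trans (Nat.pair_lt_pair_right _ hs)
  exact (Nat.pair_lt_pair_left _ (by omega)).trans (Nat.pair_lt_pair_right _ h1)

/-- The updates of the product of two transitions compute the new register contents. -/
theorem upd_cross (hI : Interp N M ν L) (hA : A.WF) (hAb : A.BoundedBy N M) (hB : B.WF)
    (hBb : B.BoundedBy N M) {a q q' : ℕ} {qs qs' : List ℕ} {fs fs' : List VExpr}
    (h : (a, qs, q, fs) ∈ A.delta) (h' : (a, qs', q', fs') ∈ B.delta)
    {t : ℕ → RTree} {r r' : ℕ → List PFV}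
    (H : ∀ i, i < qs.length → A.Reaches (t i) (qs.getD i 0) (r i))
    (H' : ∀ i, i < qs.length → B.Reaches (t i) (qs'.getD i 0) (r' i))
    {ws : ℕ → ℕ → ℚ[X]} (hw : ∀ i, i < qs.length → Ag ν L.length A.regs 0 (ws i) (r i))
    (hw' : ∀ i, i < qs.length → Ag ν L.length B.regs 1 (ws i) (r' i)) :
    Ag ν L.length A.regs 0
      (upd (crR L (toRC A) (toRC B)) qs.length (crU ν L (toRC A) (toRC B)
        (a, qs, q, fs.map VExpr.code) (a, qs', q', fs'.map VExpr.code)) ws)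
      (fs.map (VExpr.eval ((List.range qs.length).map r).flatten)) ∧
    Ag ν L.length B.regs 1
      (upd (crR L (toRC A) (toRC B)) qs.length (crU ν L (toRC A) (toRC B)
        (a, qs, q, fs.map VExpr.code) (a, qs', q', fs'.map VExpr.code)) ws)
      (fs'.map (VExpr.eval ((List.range qs.length).map r').flatten)) := by
  have hfs : fs.length = A.regs := (hA.1 _ h).2.2.2.2
  have hfs' : fs'.length = B.regs := (hB.1 _ h').2.2.2.2
  have hx : (toRC A).1 = A.regs := rfl
  have hy : (toRC B).1 = B.regs := rfl
  constructor
  · intro j s hj hs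
    have hlt := lt_crR (L := L) (b := 0) (by norm_num) (toRC A) (toRC B) (Nat.le_add_right _ _) hj hs
    have hjf : j < fs.length := by omega
    rw [upd, if_pos hlt, crU, getD_range_map _ hlt]
    simp only [Nat.unpair_pair, if_true, hx]
    have := ev_tm hI (g := A.regs) (b := 0) (R := crR L (toRC A) (toRC B))
      (fun j s hj hs => lt_crR (by norm_num) _ _ (Nat.le_add_right _ _) hj hs)
      (rs := (List.range qs.length).map r) ?_ ?_ (ws := ws) ?_ s fs[j]
    · rw [List.length_map, List.length_range] at this
      simpa [List.getD_eq_getElem?_getD, hjf] using this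
    · simp only [List.mem_map, List.mem_range]
      rintro _ ⟨i, hi, rfl⟩
      exact reaches_length hA (H i hi)
    · simp only [List.mem_map, List.mem_range]
      rintro _ ⟨i, hi, rfl⟩
      exact hAb.1 _ _ _ (H i hi)
    · intro i hi
      have hi : i < qs.length := by simpa using hi
      rw [getD_range_map _ hi]
      exact hw i hi
  · intro j s hj hs
    have hlt := lt_crR (L := L) (b := 1) le_rfl (toRC A) (toRC B) (Nat.le_add_left _ _) hj hs
    have hjf : j < fs'.length := by omega
    rw [upd, if_pos hlt, crU, getD_range_map _ hlt]
    simp only [Nat.unpair_pair, one_ne_zero, if_false, hy]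
    have := ev_tm hI (g := B.regs) (b := 1) (R := crR L (toRC A) (toRC B))
      (fun j s hj hs => lt_crR (by norm_num) _ _ (Nat.le_add_left _ _) hj hs)
      (rs := (List.range qs.length).map r') ?_ ?_ (ws := ws) ?_ s fs'[j]
    · rw [List.length_map, List.length_range] at this
      simpa [List.getD_eq_getElem?_getD, hjf] using this
    · simp only [List.mem_map, List.mem_range]
      rintro _ ⟨i, hi, rfl⟩
      exact reaches_length hB (H' i hi)
    · simp only [List.mem_map, List.mem_range]
      rintro _ ⟨i, hi, rfl⟩
      exact hBb.1 _ _ _ (H' i hi)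
    · intro i hi
      have hi : i < qs.length := by simpa using hi
      rw [getD_range_map _ hi]
      exact hw' i hi

theorem mem_cross_rules {z : ℕ × List ℕ × List ℕ} :
    z ∈ (cross ν L (toRC A) (toRC B)).2.1 ↔ ∃ a q qs fs q' qs' fs',
      (a, qs, q, fs) ∈ A.delta ∧ (a, qs', q', fs') ∈ B.delta ∧ qs'.length = qs.length ∧
      crRule ν L (toRC A) (toRC B) (a, qs, q, fs.map VExpr.code)
        (a, qs', q', fs'.map VExpr.code) = z := by
  simp only [cross, crPairs, List.mem_map, List.mem_flatMap, List.mem_filter, decide_eq_true_eq,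
    toRC]
  constructor
  · rintro ⟨_, ⟨_, ⟨⟨a, qs, q, fs⟩, h, rfl⟩, _, ⟨⟨⟨a', qs', q', fs'⟩, h', rfl⟩, h1, h2⟩, rfl⟩, rfl⟩
    dsimp only at h1 h2
    subst h1
    exact ⟨_, _, _, _, _, _, _, h, h', h2, rfl⟩
  · rintro ⟨a, q, qs, fs, q', qs', fs', h, h', h1, rfl⟩
    exact ⟨_, ⟨_, ⟨_, h, rfl⟩, _, ⟨⟨_, h', rfl⟩, rfl, h1⟩, rfl⟩, rfl⟩

/-- Everything generated by `cross` comes from a pair of runs over a common tree. -/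
theorem reach_cross (hI : Interp N M ν L) (hA : A.WF) (hAb : A.BoundedBy N M) (hB : B.WF)
    (hBb : B.BoundedBy N M) {p : ℕ} {w : ℕ → ℚ[X]}
    (h : Reach (cross ν L (toRC A) (toRC B)) p w) :
    ∃ t r r', A.Reaches t p.unpair.1 r ∧ B.Reaches t p.unpair.2 r' ∧
      Ag ν L.length A.regs 0 w r ∧ Ag ν L.length B.regs 1 w r' := by
  induction h with
  | mk z ws hz hws ih =>
    obtain ⟨a, q, qs, fs, q', qs', fs', h, h', hl, rfl⟩ := mem_cross_rules.1 hz
    have hlen : (crRule ν L (toRC A) (toRC B) (a, qs, q, fs.map VExpr.code)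
        (a, qs', q', fs'.map VExpr.code)).2.1.length = qs.length := by simp [crRule]
    have hget : ∀ i, i < qs.length → (crRule ν L (toRC A) (toRC B) (a, qs, q, fs.map VExpr.code)
        (a, qs', q', fs'.map VExpr.code)).2.1.getD i 0 =
          Nat.pair (qs.getD i 0) (qs'.getD i 0) := fun i hi => getD_range_map _ hi _
    rw [hlen] at ih ⊢
    have ih' : ∀ i, ∃ t r r', i < qs.length → A.Reaches t (qs.getD i 0) r ∧
        B.Reaches t (qs'.getD i 0) r' ∧ Ag ν L.length A.regs 0 (ws i) r ∧
        Ag ν L.length B.regs 1 (ws i) r' := by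
      intro i
      by_cases hi : i < qs.length
      · obtain ⟨t, r, r', h1⟩ := ih i hi
        rw [hget i hi, Nat.unpair_pair] at h1
        exact ⟨t, r, r', fun _ => h1⟩
      · exact ⟨.node 0 [], [], [], fun h => absurd h hi⟩
    choose t r r' H using ih'
    have hu := upd_cross hI hA hAb hB hBb h h' (fun i hi => (H i hi).1)
      (fun i hi => (H i hi).2.1) (fun i hi => (H i hi).2.2.1) (fun i hi => (H i hi).2.2.2)
    refine ⟨.node a ((List.range qs.length).map t), _, _, ?_, ?_, hu.1, hu.2⟩
    · simp only [crRule, Nat.unpair_pair]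
      exact reaches_mk h fun i hi => (H i hi).1
    · simp only [crRule, Nat.unpair_pair]
      have := reaches_mk h' (t := t) (r := r') fun i hi => (H i (by omega)).2.1
      rwa [hl] at this

/-- Every pair of runs over a common tree is generated by `cross`. -/
theorem cross_reach (hI : Interp N M ν L) (hA : A.WF) (hAb : A.BoundedBy N M) (hB : B.WF)
    (hBb : B.BoundedBy N M) {t : RTree} {q : ℕ} {r : List PFV} (h : A.Reaches t q r) :
    ∀ q' r', B.Reaches t q' r' → ∃ w, Reach (cross ν L (toRC A) (toRC B)) (Nat.pair q q') w ∧
      Ag ν L.length A.regs 0 w r ∧ Ag ν L.length B.regs 1 w r' := by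
  induction h with
  | step a q qs fs ts rs hd hq hr H ih =>
    intro q' r' h'
    cases h' with
    | step _ _ qs' fs' _ rs' hd' hq' hr' H' =>
      have ih' : ∀ i, ∃ w, i < qs.length →
          Reach (cross ν L (toRC A) (toRC B)) (Nat.pair (qs.getD i 0) (qs'.getD i 0)) w ∧
          Ag ν L.length A.regs 0 w (rs.getD i []) ∧ Ag ν L.length B.regs 1 w (rs'.getD i []) := by
        intro i
        by_cases hi : i < qs.length
        · obtain ⟨w, hw⟩ := ih i (by omega) _ _ (H' i (by omega))
          exact ⟨w, fun _ => hw⟩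
        · exact ⟨0, fun h => absurd h hi⟩
      choose ws hws using ih'
      have hl : qs'.length = qs.length := by omega
      have hu := upd_cross hI hA hAb hB hBb hd hd'
        (t := fun i => ts.getD i (RTree.node 0 [])) (r := fun i => rs.getD i [])
        (r' := fun i => rs'.getD i []) (fun i hi => H i (by omega)) (fun i hi => H' i (by omega))
        (fun i hi => (hws i hi).2.1) (fun i hi => (hws i hi).2.2)
      have hrs : ∀ l : List (List PFV), l.length = qs.length →
          (List.range qs.length).map (fun i => l.getD i []) = l := by
        intro l hl
        refine List.ext_getElem (by simp [hl]) fun i h1 h2 => ?_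
        simp [List.getD_eq_getElem?_getD, h2]
      rw [hrs rs (by omega), hrs rs' (by omega)] at hu
      have hm := Reach.mk (G := cross ν L (toRC A) (toRC B)) (crRule ν L (toRC A) (toRC B)
        (a, qs, q, fs.map VExpr.code) (a, qs', q', fs'.map VExpr.code)) ws
        (mem_cross_rules.2 ⟨_, _, _, _, _, _, _, hd, hd', hl, rfl⟩) (fun i hi => by
          have hi : i < qs.length := by simpa [crRule] using hi
          have := (hws i hi).1
          rwa [← getD_range_map (fun i => Nat.pair (qs.getD i 0) (qs'.getD i 0)) hi 0] at this)
      have hlen : (crRule ν L (toRC A) (toRC B) (a, qs, q, fs.map VExpr.code)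
        (a, qs', q', fs'.map VExpr.code)).2.1.length = qs.length := by simp [crRule]
      rw [hlen] at hm
      exact ⟨_, hm, hu⟩

/-- The product grammar satisfies its equations iff the outputs of the two automata agree. -/
theorem good_cross (hI : Interp N M ν L)
    (hN : ∀ h h' : PFV, h.varsLt N → h'.varsLt N → h.totalOcc ≤ M → h'.totalOcc ≤ M →
      (∀ s, s < L.length → fval X (fun i => (ν s i : ℚ[X])) h =
        fval X (fun i => (ν s i : ℚ[X])) h') → PFV.Veq h h')
    (hA : A.WF) (hAb : A.BoundedBy N M) (hB : B.WF) (hBb : B.BoundedBy N M) :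
    Good (cross ν L (toRC A) (toRC B)) ↔
      ∀ t h h', A.Sem t h → B.Sem t h' → PFV.Veq h h' := by
  have key : ∀ {t q q' r r' w}, A.Reaches t q r → B.Reaches t q' r' →
      Ag ν L.length A.regs 0 w r → Ag ν L.length B.regs 1 w r' → ∀ (e e' : VExpr) (s : ℕ),
      ev (cenv (crR L (toRC A) (toRC B)) 1 fun _ => w)
        (crTest ν L (toRC A) (toRC B) (q, e.code) (q', e'.code) s).2 =
      fval X (fun i => (ν s i : ℚ[X])) (e.eval r) -
        fval X (fun i => (ν s i : ℚ[X])) (e'.eval r') := by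
    intro t q q' r r' w h h' hw hw' e e' s
    have h1 := ev_tm hI (g := A.regs) (b := 0) (R := crR L (toRC A) (toRC B))
      (fun j s hj hs => lt_crR (by norm_num) _ _ (Nat.le_add_right _ _) hj hs)
      (rs := [r]) (by simpa using reaches_length hA h)
      (by simpa using hAb.1 _ _ _ h) (ws := fun _ => w)
      (by intro i hi; have : i = 0 := by simpa using hi
          subst this; exact hw) s e
    have h2 := ev_tm hI (g := B.regs) (b := 1) (R := crR L (toRC A) (toRC B))
      (fun j s hj hs => lt_crR (by norm_num) _ _ (Nat.le_add_left _ _) hj hs)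
      (rs := [r']) (by simpa using reaches_length hB h')
      (by simpa using hBb.1 _ _ _ h') (ws := fun _ => w)
      (by intro i hi; have : i = 0 := by simpa using hi
          subst this; exact hw') s e'
    simp only [List.length_singleton, List.flatten_cons, List.flatten_nil, List.append_nil] at h1 h2
    simp only [crTest, ev_addc, ev_mulc, ev_negc]
    change ev _ (tm ν L A.regs 0 1 s e.code) + -1 * ev _ (tm ν L B.regs 1 1 s e'.code) = _
    rw [h1, h2]
    ring
  constructor
  · rintro hG t h h' hh hh'
    have hb := hAb.2 _ _ hh
    have hb' := hBb.2 _ _ hh'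
    obtain ⟨q, r, e, hr, ho, rfl⟩ := hh
    obtain ⟨q', r', e', hr', ho', rfl⟩ := hh'
    refine hN _ _ hb.1 hb'.1 hb.2 hb'.2 fun s hs => ?_
    obtain ⟨w, hw, hw1, hw2⟩ := cross_reach hI hA hAb hB hBb hr _ _ hr'
    have := hG (crTest ν L (toRC A) (toRC B) (q, e.code) (q', e'.code) s) (by
      simp only [cross, crOuts, List.mem_map, List.mem_flatMap, List.mem_range, toRC]
      exact ⟨_, ⟨_, ⟨_, ho, rfl⟩, _, ⟨_, ho', rfl⟩, s, hs, rfl⟩, rfl⟩) w hw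
    exact sub_eq_zero.1 ((key hr hr' hw1 hw2 e e' s).symm.trans this)
  · intro H p hp w hw
    simp only [cross, crOuts, List.mem_map, List.mem_flatMap, List.mem_range, toRC] at hp
    obtain ⟨_, ⟨_, ⟨⟨q, e⟩, ho, rfl⟩, _, ⟨⟨q', e'⟩, ho', rfl⟩, s, hs, rfl⟩, rfl⟩ := hp
    obtain ⟨t, r, r', hr, hr', hw1, hw2⟩ := reach_cross hI hA hAb hB hBb hw
    simp only [crTest, Nat.unpair_pair] at hr hr'
    refine (key hr hr' hw1 hw2 e e' s).trans (sub_eq_zero.2 ?_)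
    exact fval_veq _ _ (H t _ _ ⟨q, r, e, hr, ho, rfl⟩ ⟨q', r', e', hr', ho', rfl⟩)

end CrossCorrect

/-! ### Comparing the domains of two automata -/

open Classical in
/-- The indicator of a proposition. -/
noncomputable def ind (p : Prop) : ℚ[X] := if p then 1 else 0

theorem ind_eq_zero {p : Prop} : ind p = 0 ↔ ¬ p := by
  unfold ind; split_ifs <;> simp_all

theorem ind_and {p q : Prop} : ind (p ∧ q) = ind p * ind q := by
  unfold ind
  by_cases hp : p <;> by_cases hq : q <;> simp [hp, hq]

/-- The code of `1 - a`. -/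
def notc (a : ℕ) : ℕ := addc (numc 1) (mulc negc a)

theorem ev_notc {env : ℕ → ℚ[X]} {a : ℕ} {p : Prop} (h : ev env a = ind p) :
    ev env (notc a) = ind (¬ p) := by
  rw [notc, ev_addc, ev_mulc, ev_numc, ev_negc, h]
  unfold ind
  by_cases hp : p <;> simp [hp]

/-- The code of the product of the codes `f a` for `a` in a list. -/
def allc {α : Type*} (f : α → ℕ) (l : List α) : ℕ := l.foldr (fun a b => mulc (f a) b) (numc 1)

theorem ev_allc {α : Type*} {env : ℕ → ℚ[X]} {f : α → ℕ} {p : α → Prop} {l : List α}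
    (h : ∀ a ∈ l, ev env (f a) = ind (p a)) : ev env (allc f l) = ind (∀ a ∈ l, p a) := by
  induction l with
  | nil => simp [allc, ev_numc, ind]
  | cons a l ih =>
    have h1 := ih fun b hb => h b (by simp [hb])
    have h2 := h a (by simp)
    rw [allc, List.foldr_cons, ev_mulc, h2]
    change _ * ev env (allc f l) = _
    rw [h1]
    rw [← ind_and, List.forall_mem_cons]

section PrimDom
variable {α β : Type*} [Primcodable α] [Primcodable β]
@[fun_prop] theorem fp_notc {f : α → ℕ} (hf : Primrec f) : Primrec fun a => notc (f a) := by
  unfold notc; fun_prop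
@[fun_prop] theorem fp_allc {f : α → β → ℕ} {l : α → List β}
    (hf : Primrec fun x : α × β => f x.1 x.2) (hl : Primrec l) :
    Primrec fun a => allc (f a) (l a) := by
  unfold allc
  refine fp_foldr hl (by fun_prop) ?_
  exact fp_mulc (fp_comp (f := fun x : α × β => f x.1 x.2) (g := fun x : α × (β × ℕ) => (x.1, x.2.1))
    hf (by fun_prop)) (by fun_prop)
end PrimDom

/-- The transitions of `y` with letter `a`, `k` children and target `j`. -/
def dmTr (y : RC) (a k j : ℕ) : List (ℕ × List ℕ × ℕ × List ℕ) :=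
  y.2.2.1.filter fun tr' => tr'.1 = a ∧ tr'.2.1.length = k ∧ tr'.2.2.1 = j

/-- The code of the indicator of `j` being a state of `y` reachable through the letter `a`. -/
def dmC (y : RC) (a k j : ℕ) : ℕ :=
  notc (allc (fun tr' : ℕ × List ℕ × ℕ × List ℕ =>
    notc (allc (fun i => atom (Nat.pair i (tr'.2.1.getD i 0))) (List.range k))) (dmTr y a k j))

/-- The polynomial grammar generating the states of the first automaton together with the indicator
vectors of the sets of states of the second one reached on a common input tree; the equations
require that acceptance by the first automaton entails acceptance by the second one. -/
def dom (x y : RC) : Gr :=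
  (y.2.1, x.2.2.1.map fun tr => (tr.2.2.1, tr.2.1,
      (List.range y.2.1).map fun j => dmC y tr.1 tr.2.1.length j),
    x.2.2.2.map fun p => (p.1, allc (fun p' : ℕ × ℕ => notc (atom (Nat.pair 0 p'.1))) y.2.2.2))

theorem prim_dom : Primrec fun z : RC × RC => dom z.1 z.2 := by
  have h : Primrec fun z : RC × (ℕ × ℕ × ℕ) => dmTr z.1 z.2.1 z.2.2.1 z.2.2.2 := by
    unfold dmTr; fun_prop
  have h1 : Primrec fun z : RC × (ℕ × ℕ × ℕ) => dmC z.1 z.2.1 z.2.2.1 z.2.2.2 := by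
    unfold dmC
    exact fp_notc (fp_allc (by fun_prop) h)
  have h2 : Primrec fun z : (RC × (ℕ × List ℕ × ℕ × List ℕ)) =>
      (List.range z.1.2.1).map fun j => dmC z.1 z.2.1 z.2.2.1.length j := by
    refine Primrec.list_map (by fun_prop) ?_
    exact h1.comp (g := fun x : (RC × (ℕ × List ℕ × ℕ × List ℕ)) × ℕ =>
      (x.1.1, (x.1.2.1, x.1.2.2.1.length, x.2))) (by fun_prop)
  have h3 : Primrec fun z : (RC × RC) × (ℕ × List ℕ × ℕ × List ℕ) =>
      (z.2.2.2.1, z.2.2.1, (List.range z.1.2.2.1).map fun j =>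
        dmC z.1.2 z.2.1 z.2.2.1.length j) :=
    fp_pair (by fun_prop) (fp_pair (by fun_prop) (h2.comp
      (g := fun z : (RC × RC) × (ℕ × List ℕ × ℕ × List ℕ) => (z.1.2, z.2)) (by fun_prop)))
  unfold dom
  exact fp_pair (by fun_prop) (fp_pair (Primrec.list_map (by fun_prop) h3) (by fun_prop))

section DomCorrect

variable {A B : RAV}

/-- The state `j` is reached by `B` on the tree `t`. -/
def RS (B : RAV) (t : RTree) (j : ℕ) : Prop := ∃ r, B.Reaches t j r

/-- The indicator vector of the set of states reached on `t`. -/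
noncomputable def iv (B : RAV) (t : RTree) (j : ℕ) : ℚ[X] := ind (RS B t j)

theorem RS_node {B : RAV} {a : ℕ} {ts : List RTree} {j : ℕ} :
    RS B (.node a ts) j ↔ ∃ qs fs, (a, qs, j, fs) ∈ B.delta ∧ qs.length = ts.length ∧
      ∀ i, i < ts.length → RS B (ts.getD i (.node 0 [])) (qs.getD i 0) := by
  constructor
  · rintro ⟨r, h⟩
    cases h with
    | step _ _ qs fs _ rs hd hq hr H => exact ⟨qs, fs, hd, hq, fun i hi => ⟨_, H i hi⟩⟩
  · rintro ⟨qs, fs, hd, hq, H⟩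
    have H' : ∀ i, ∃ r, i < ts.length → B.Reaches (ts.getD i (.node 0 [])) (qs.getD i 0) r := by
      intro i
      by_cases hi : i < ts.length
      · obtain ⟨r, hr⟩ := H i hi
        exact ⟨r, fun _ => hr⟩
      · exact ⟨[], fun h => absurd h hi⟩
    choose r hr using H'
    exact ⟨_, .step a j qs fs ts ((List.range ts.length).map r) hd hq (by simp)
      fun i hi => by rw [getD_range_map _ hi]; exact hr i hi⟩

/-- The updates of `dom` compute the indicator vector of the root from those of the children. -/
theorem upd_dom (hB : B.WF) {a : ℕ} {ts : List RTree} {ws : ℕ → ℕ → ℚ[X]}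
    (hw : ∀ i, i < ts.length → ws i = iv B (ts.getD i (.node 0 []))) :
    upd B.states ts.length ((List.range B.states).map fun j => dmC (toRC B) a ts.length j) ws =
      iv B (.node a ts) := by
  funext j
  unfold upd
  by_cases hj : j < B.states
  · rw [if_pos hj, getD_range_map _ hj, iv, dmC]
    rw [ev_notc (ev_allc (p := fun tr' : ℕ × List ℕ × ℕ × List ℕ => ¬ ∀ i ∈ List.range ts.length,
      RS B (ts.getD i (.node 0 [])) (tr'.2.1.getD i 0)) fun tr' htr => ev_notc (ev_allc ?_))]
    · congr 1
      rw [RS_node]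
      simp only [dmTr, toRC, List.mem_filter, List.mem_map, decide_eq_true_eq, List.mem_range]
      apply propext
      push Not
      constructor
      · rintro ⟨_, ⟨⟨⟨a', qs, q, fs⟩, hd, rfl⟩, h1, h2, h3⟩, h4⟩
        dsimp only at h1 h2 h3 h4
        subst h1 h3
        exact ⟨qs, fs, hd, h2, h4⟩
      · rintro ⟨qs, fs, hd, h2, h4⟩
        exact ⟨_, ⟨⟨_, hd, rfl⟩, rfl, h2, rfl⟩, h4⟩
    · intro i hi
      have hi : i < ts.length := by simpa using hi
      simp only [dmTr, toRC, List.mem_filter, List.mem_map, decide_eq_true_eq] at htr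
      obtain ⟨⟨⟨a', qs, q, fs⟩, hd, rfl⟩, h1, h2, h3⟩ := htr
      dsimp only at h1 h2 h3 ⊢
      rw [ev_atom]
      have : qs.getD i 0 < B.states := by
        rw [List.getD_eq_getElem _ _ (by omega)]
        exact (hB.1 _ hd).2.2.1 _ (List.getElem_mem _)
      simp only [cenv, Nat.unpair_pair]
      rw [if_pos ⟨hi, this⟩, hw i hi, iv]
  · rw [if_neg hj, iv, eq_comm, ind_eq_zero]
    rintro ⟨r, hr⟩
    exact hj (reaches_lt hB hr)

/-- Everything generated by `dom` comes from a run of `A` and the states of `B` on its tree. -/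
theorem reach_dom (hB : B.WF) {q : ℕ} {w : ℕ → ℚ[X]} (h : Reach (dom (toRC A) (toRC B)) q w) :
    ∃ t, RS A t q ∧ w = iv B t := by
  induction h with
  | mk z ws hz hws ih =>
    simp only [dom, toRC, List.mem_map, exists_exists_and_eq_and] at hz
    obtain ⟨⟨a, qs, q, fs⟩, hd, rfl⟩ := hz
    dsimp only at ih ⊢
    have ih' : ∀ i, ∃ t, i < qs.length → RS A t (qs.getD i 0) ∧ ws i = iv B t := by
      intro i
      by_cases hi : i < qs.length
      · obtain ⟨t, ht⟩ := ih i hi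
        exact ⟨t, fun _ => ht⟩
      · exact ⟨.node 0 [], fun h => absurd h hi⟩
    choose t ht using ih'
    refine ⟨.node a ((List.range qs.length).map t), RS_node.2 ⟨qs, fs, hd, by simp, ?_⟩, ?_⟩
    · intro i hi
      have hi : i < qs.length := by simpa using hi
      rw [getD_range_map _ hi]
      exact (ht i hi).1
    · have := upd_dom hB (a := a) (ts := (List.range qs.length).map t) (ws := ws) (by
        intro i hi
        have hi : i < qs.length := by simpa using hi
        rw [getD_range_map _ hi]
        exact (ht i hi).2)
      rw [List.length_map, List.length_range] at this
      exact this

/-- Every run of `A` is generated by `dom` together with the states of `B` on its tree. -/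
theorem dom_reach (hB : B.WF) {t : RTree} {q : ℕ} {r : List PFV} (h : A.Reaches t q r) :
    Reach (dom (toRC A) (toRC B)) q (iv B t) := by
  induction h with
  | step a q qs fs ts rs hd hq hr H ih =>
    have hm := Reach.mk (G := dom (toRC A) (toRC B)) (q, qs,
      (List.range B.states).map fun j => dmC (toRC B) a qs.length j)
      (fun i => iv B (ts.getD i (.node 0 [])))
      (List.mem_map.2 ⟨_, List.mem_map.2 ⟨_, hd, rfl⟩, rfl⟩)
      (fun i (hi : i < qs.length) => ih i (by omega))
    have := upd_dom hB (a := a) (ts := ts) (ws := fun i => iv B (ts.getD i (.node 0 [])))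
      fun _ _ => rfl
    rw [← this, ← hq]
    exact hm

/-- The grammar `dom` satisfies its equations iff the domain of `A` lies in that of `B`. -/
theorem good_dom (hB : B.WF) : Good (dom (toRC A) (toRC B)) ↔
    ∀ t, (∃ h, A.Sem t h) → ∃ h, B.Sem t h := by
  have key : ∀ t, ev (cenv B.states 1 fun _ => iv B t)
      (allc (fun p' : ℕ × ℕ => notc (atom (Nat.pair 0 p'.1))) (toRC B).2.2.2) = 0 ↔
      ∃ h, B.Sem t h := by
    intro t
    rw [ev_allc (p := fun p' : ℕ × ℕ => ¬ RS B t p'.1) fun p' hp' => ev_notc ?_, ind_eq_zero]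
    · push Not
      simp only [toRC, List.mem_map]
      constructor
      · rintro ⟨_, ⟨⟨q, e⟩, ho, rfl⟩, r, hr⟩
        exact ⟨_, q, r, e, hr, ho, rfl⟩
      · rintro ⟨_, q, r, e, hr, ho, rfl⟩
        exact ⟨_, ⟨_, ho, rfl⟩, r, hr⟩
    · obtain ⟨⟨q, e⟩, ho, rfl⟩ := List.mem_map.1 hp'
      rw [ev_atom]
      simp only [cenv, Nat.unpair_pair]
      rw [if_pos ⟨by norm_num, hB.2.1 _ ho⟩, iv]
  constructor
  · rintro hG t ⟨h, q, r, e, hr, ho, rfl⟩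
    exact (key t).1 (hG (q, _) (List.mem_map.2 ⟨_, List.mem_map.2 ⟨_, ho, rfl⟩, rfl⟩) _
      (dom_reach hB hr))
  · intro H p hp w hw
    simp only [dom, List.mem_map] at hp
    obtain ⟨_, hp, rfl⟩ := hp
    obtain ⟨⟨q, e⟩, ho, rfl⟩ := List.mem_map.1 hp
    obtain ⟨t, ⟨r, hr⟩, rfl⟩ := reach_dom hB hw
    exact (key t).2 (H t ⟨_, q, r, e, hr, ho, rfl⟩)

end DomCorrect

/-! ### Decidability and simulation -/

theorem alpha_veq (N M : ℕ) {h h' : PFV} (H : PFV.Veq h h') : alpha N M h = alpha N M h' := by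
  unfold alpha pol
  rw [fval_veq _ _ H]

/-- For functional automata, equivalence splits into agreement of outputs and equality of domains. -/
theorem equiv_iff {A B : RAV} (hB : B.Functional) : A.Equiv B ↔
    (∀ t h h', A.Sem t h → B.Sem t h' → PFV.Veq h h') ∧
    (∀ t, (∃ h, A.Sem t h) → ∃ h, B.Sem t h) ∧ ∀ t, (∃ h, B.Sem t h) → ∃ h, A.Sem t h := by
  constructor
  · intro H
    refine ⟨fun t h h' h1 h2 => ?_, fun t ⟨h, h1⟩ => ?_, fun t ⟨h, h1⟩ => ?_⟩
    · obtain ⟨h'', h3, h4⟩ := (H t h).1 ⟨h, .refl h, h1⟩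
      exact h3.trans (hB t _ _ h4 h2)
    · obtain ⟨h', _, h2⟩ := (H t h).1 ⟨h, .refl h, h1⟩
      exact ⟨h', h2⟩
    · obtain ⟨h', _, h2⟩ := (H t h).2 ⟨h, .refl h, h1⟩
      exact ⟨h', h2⟩
  · rintro ⟨H, H1, H2⟩ t h
    constructor
    · rintro ⟨h', h1, h2⟩
      obtain ⟨h'', h3⟩ := H1 t ⟨h', h2⟩
      exact ⟨h'', h1.trans (H t _ _ h2 h3), h3⟩
    · rintro ⟨h', h1, h2⟩
      obtain ⟨h'', h3⟩ := H2 t ⟨h', h2⟩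
      exact ⟨h'', h1.trans (H t _ _ h3 h2).symm, h3⟩

theorem computable_and {f g : ℕ → Bool} (hf : Computable f) (hg : Computable g) :
    Computable fun n => f n && g n :=
  Primrec.and.to_comp.comp hf hg

/-- Functionality is goodness of `cross A A`, and equivalence of functional automata is goodness of
`cross A B`, `dom A B` and `dom B A`. -/
theorem decidable_part (N M : ℕ) :
    (∃ F : ℕ → Bool, Computable F ∧
      ∀ A : RAV, A.WF → A.BoundedBy N M →
        (F (Nat.pair (Nat.pair N M) A.code) = true ↔ A.Functional)) ∧
    (∃ G : ℕ → Bool, Computable G ∧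
      ∀ A B : RAV, A.WF → A.BoundedBy N M → B.WF → B.BoundedBy N M →
        A.Functional → B.Functional →
        (G (Nat.pair (Nat.pair N M) (Nat.pair A.code B.code)) = true ↔ A.Equiv B)) := by
  obtain ⟨ν, L, hν, hN, hI⟩ := exists_grid N M
  obtain ⟨D, hD, hDG⟩ := decide_good
  have hd : ∀ {f : ℕ → ℕ}, Primrec f → Primrec fun n => decA (f n) := fun hf => prim_decA.comp hf
  have hc : ∀ {f g : ℕ → ℕ}, Primrec f → Primrec g →
      Computable fun n => D (cross ν L (decA (f n)) (decA (g n))) := fun hf hg =>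
    hD.comp ((prim_cross hν L).comp ((hd hf).pair (hd hg))).to_comp
  have hm : ∀ {f g : ℕ → ℕ}, Primrec f → Primrec g →
      Computable fun n => D (dom (decA (f n)) (decA (g n))) := fun hf hg =>
    hD.comp (prim_dom.comp ((hd hf).pair (hd hg))).to_comp
  have h1 : Primrec fun n : ℕ => n.unpair.2 := by fun_prop
  have h2 : Primrec fun n : ℕ => n.unpair.2.unpair.1 := by fun_prop
  have h3 : Primrec fun n : ℕ => n.unpair.2.unpair.2 := by fun_prop
  refine ⟨⟨_, hc h1 h1, fun A hA hAb => ?_⟩,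
    ⟨_, computable_and (hc h2 h3) (computable_and (hm h2 h3) (hm h3 h2)),
      fun A B hA hAb hB hBb hAf hBf => ?_⟩⟩
  · simp only [Nat.unpair_pair, decA_code]
    rw [hDG, good_cross hI hN hA hAb hA hAb]
    rfl
  · simp only [Nat.unpair_pair, decA_code, Bool.and_eq_true]
    rw [hDG, hDG, hDG, good_cross hI hN hA hAb hB hBb, good_dom hB, good_dom hA,
      equiv_iff hBf]

end PFVSim

/-- For all `N, M ∈ ℕ`, the algebra of unordered forests
with substitution variables `∘₀, …, ∘_{N-1}` in which each element contains at
most `M` total occurrences of variables, equipped with forest sum, `root` and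
variable substitution (a finitely-sorted algebra, sorted by the numbers of
occurrences of each variable), is simulated by `(ℚ[x], +, ×)`: there is an
encoding `α` into tuples of polynomials, compatible with `Veq`, injective
sort-wise, and implementing each (sorted) operation by a polynomial map.
Consequently, functionality of bottom-up register automata over this algebra
and equivalence of functional such automata are decidable. -/
theorem bounded_variable_forests_simulated_and_decidable :
    ∀ N M : ℕ,
      (∃ (n : ℕ) (α : PFV → (Fin n → Polynomial ℚ)),
        -- α respects equality of unordered forests
        (∀ h h', PFV.Veq h h' → α h = α h') ∧
        -- α is injective sort-wise (on bounded elements, up to `Veq`)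
        (∀ h h', h.varsLt N → h'.varsLt N → h.totalOcc ≤ M → h'.totalOcc ≤ M →
          PFV.sort N h = PFV.sort N h' → α h = α h' → PFV.Veq h h') ∧
        -- forest sum is implemented by a polynomial map (per pair of sorts)
        (∀ s₁ s₂ : List ℕ,
          ∃ f : Fin n → MvPolynomial (Fin n ⊕ Fin n) (Polynomial ℚ),
            ∀ h h', h.varsLt N → h'.varsLt N →
              PFV.sort N h = s₁ → PFV.sort N h' = s₂ →
              h.totalOcc + h'.totalOcc ≤ M →
              α (PFV.union h h') =
                fun j => MvPolynomial.eval (Sum.elim (α h) (α h')) (f j)) ∧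
        -- root is implemented by a polynomial map (per sort)
        (∀ s : List ℕ,
          ∃ f : Fin n → MvPolynomial (Fin n) (Polynomial ℚ),
            ∀ h, h.varsLt N → h.totalOcc ≤ M → PFV.sort N h = s →
              α (PFV.root h) = fun j => MvPolynomial.eval (α h) (f j)) ∧
        -- substitution is implemented by a polynomial map (per sorts)
        (∀ (s : List ℕ) (ss : Fin N → List ℕ),
          ∃ f : Fin n → MvPolynomial (Fin n ⊕ Fin N × Fin n) (Polynomial ℚ),
            ∀ (h : PFV) (σ : ℕ → PFV),
              h.varsLt N → h.totalOcc ≤ M → PFV.sort N h = s →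
              (∀ i : Fin N, (σ i.val).varsLt N ∧ (σ i.val).totalOcc ≤ M ∧
                PFV.sort N (σ i.val) = ss i) →
              (PFV.subst σ h).totalOcc ≤ M →
              α (PFV.subst σ h) =
                fun j => MvPolynomial.eval
                  (Sum.elim (α h) (fun p : Fin N × Fin n => α (σ p.1.val) p.2))
                  (f j))) ∧
      (∃ F : ℕ → Bool, Computable F ∧
        ∀ A : RAV, A.WF → A.BoundedBy N M →
          (F (Nat.pair (Nat.pair N M) A.code) = true ↔ A.Functional)) ∧
      (∃ G : ℕ → Bool, Computable G ∧
        ∀ A B : RAV, A.WF → A.BoundedBy N M → B.WF → B.BoundedBy N M →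
          A.Functional → B.Functional →
          (G (Nat.pair (Nat.pair N M) (Nat.pair A.code B.code)) = true ↔
            A.Equiv B)) := by
  intro N M
  refine ⟨⟨(PFVSim.monos N M).card, PFVSim.alpha N M, fun h h' => PFVSim.alpha_veq N M,
    fun h h' h1 h1' h2 h2' _ => PFVSim.alpha_injective h1 h2 h1' h2', fun s₁ s₂ => ?_,
    fun s => ?_, fun s ss => ?_⟩, PFVSim.decidable_part N M⟩
  · obtain ⟨f, hf⟩ := PFVSim.alpha_union N M
    exact ⟨f, fun h h' h1 h1' _ _ h2 => hf h h' h1 h1' h2⟩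
  · obtain ⟨f, hf⟩ := PFVSim.alpha_root N M
    exact ⟨f, fun h h1 h2 _ => hf h h1 h2⟩
  · obtain ⟨f, hf⟩ := PFVSim.alpha_subst N M
    exact ⟨f, fun h σ h1 h2 _ hσ _ => hf h σ h1 h2 fun i => ⟨(hσ i).1, (hσ i).2.1⟩⟩
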